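/- Let $d\geq 5$ and $\eta>0$. Set $q_\eta=\mathrm{lcm}\{q\in\mathbb{N}:1\le q\le\eta^{-2}\}$ and suppose $L\ge q_\eta^4$. Let $\Omega_{\eta,L}=\{\alpha\in\mathbb{T}^d:\alpha\in[-L^{-1},L^{-1}]^d+(q_\eta^{-1}\mathbb{Z})^d\}$. Then there is a constant $C_d$ such that for every $f\in\ell^2(\mathbb{Z}^d)$ whose Fourier transform is supported in $\Omega_{\eta,L}^c$, one has $\bigl\|\sup_{\lambda\ge\eta^{-2}L,\ \lambda^2\in\mathbb{N}}|A_\lambda f|\bigr\|_{\ell^2(\mathbb{Z}^d)}\le C_d\,\eta\,\|f\|_{\ell^2(\mathbb{Z}^d)}$. -/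

import Mathlib

open scoped BigOperators ENNReal Real

noncomputable section

/-- Squared Euclidean norm of a lattice point, as a real number. -/
def nsq {d : ℕ} (m : Fin d → ℤ) : ℝ := ∑ i, ((m i : ℝ)) ^ 2

/-- The discrete sphere of radius `lam` in `ℤ^d`. -/
def sph (d : ℕ) (lam : ℝ) : Set (Fin d → ℤ) := {m | nsq m = lam ^ 2}

/-- `N_lam`: the number of lattice points on the sphere of radius `lam`. -/
def Nlam (d : ℕ) (lam : ℝ) : ℕ := Nat.card (sph d lam)

/-- The discrete spherical average. -/
def Avg {d : ℕ} (lam : ℝ) (f : (Fin d → ℤ) → ℝ) (n : Fin d → ℤ) : ℝ :=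
  (Nlam d lam : ℝ)⁻¹ * ∑' m : sph d lam, f (n - (m : Fin d → ℤ))

/-- The `ℓ²(ℤ^d)` norm, valued in `ℝ≥0∞`. -/
def l2norm {d : ℕ} (f : (Fin d → ℤ) → ℝ) : ℝ≥0∞ :=
  (∑' n : Fin d → ℤ, (‖f n‖₊ : ℝ≥0∞) ^ 2) ^ ((1 : ℝ) / 2)

/-- `q_η = lcm{q ∈ ℕ : 1 ≤ q ≤ η⁻²}`. -/
def qeta (η : ℝ) : ℕ := (Finset.Icc 1 ⌊η⁻¹ ^ 2⌋₊).lcm id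

/-- `Ω_{η,L} = [-L⁻¹, L⁻¹]^d + (q_η⁻¹ ℤ)^d`, viewed as the (ℤ^d-periodic) set of
representatives in `ℝ^d` of the corresponding subset of `𝕋^d`. -/
def OmegaEtaL (d : ℕ) (η L : ℝ) : Set (Fin d → ℝ) :=
  {α | ∃ ℓ : Fin d → ℤ, ∀ i, |α i - (ℓ i : ℝ) / (qeta η : ℝ)| ≤ L⁻¹}

/-!
Only lattice points with `|m|² = N` contribute to the integral of `exp (-2πi N t)` against the
generating function of the spherical sums, whose terms are Fourier multipliers with symbol a product
of theta functions. Since a sphere has at least a multiple of `N ^ (d / 2 - 1)` lattice points when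
`d ≥ 5`, Dirichlet's theorem bounds `A_λ f` for `Λ ≤ λ ≤ 2Λ` by a sum over the arcs around `a / q`
with `q ≤ Λ`, so that only dyadic `Λ` remain in the supremum. On such an arc the symbol is, by
Poisson summation, a Gauss sum of size `q ^ (d / 2)` times a Gaussian concentrated near `(ℤ / q)^d`.

If `q ≤ η⁻²`, then `q ∣ q_η`, the frequencies of `f` stay at distance at least `1 / L` from
`(ℤ / q)^d`, and the decay of the symbol at the scale `Λ ≥ η⁻² L / 2` gains a factor `η²`. If
`q > η⁻²`, the symbol is replaced by a Gauss sum times a Dirichlet kernel, that is, an average over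
boxes dilated by `q`, which has a maximal inequality; the errors are square summable over dyadic
`Λ`. Each arc thus contributes `q ^ (-d / 2)` times its gain, and the sum over all arcs is `O(η)`
since `∑_{q > η⁻²} q ^ (-3 / 2)` and `η² ∑_{q ≤ η⁻²} q ^ (-3 / 2)` are.
-/

/-! ### Representations by two squares -/

section TwoSquares

/-- The Gaussian integers of norm `n`, that is, the representations of `n` as an ordered sum of two
squares. -/
def gaussianSphere (n : ℕ) : Set GaussianInt := {z | z.norm = n}

/-- The sum of the nontrivial character modulo `4` over the divisors of `n`; Jacobi's two-square
theorem says that `n` has `4 * chiDivisorSum n` representations as a sum of two squares. -/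
def chiDivisorSum (n : ℕ) : ℤ := ∑ d ∈ n.divisors, ZMod.χ₄ d

lemma mem_gaussianSphere {n : ℕ} {z : GaussianInt} : z ∈ gaussianSphere n ↔ z.norm = n := Iff.rfl

lemma norm_eq_re_sq_add_im_sq (z : GaussianInt) : z.norm = z.re ^ 2 + z.im ^ 2 := by
  rw [Zsqrtd.norm_def]; ring

lemma finite_gaussianSphere (n : ℕ) : (gaussianSphere n).Finite := by
  refine (((Set.finite_Icc (-(n : ℤ)) n).prod (Set.finite_Icc (-(n : ℤ)) n)).image
    fun p : ℤ × ℤ => (⟨p.1, p.2⟩ : GaussianInt)).subset fun z hz => ?_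
  rw [mem_gaussianSphere, norm_eq_re_sq_add_im_sq] at hz
  exact ⟨(z.re, z.im), ⟨abs_le.1 (by nlinarith [sq_abs z.re, Int.le_self_sq |z.re|]),
    abs_le.1 (by nlinarith [sq_abs z.im, Int.le_self_sq |z.im|])⟩, rfl⟩

lemma sum_divisors_prime_mul {R : Type*} [CommSemiring R] (f : ℕ →* R) {p m : ℕ} (hp : p.Prime)
    (hm : m ≠ 0) :
    ∑ d ∈ (p * m).divisors, f d + (if p ∣ m then f p * ∑ d ∈ (m / p).divisors, f d else 0)
      = ∑ d ∈ m.divisors, f d + f p * ∑ d ∈ m.divisors, f d := by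
  have hinj : Function.Injective (p * ·) := mul_right_injective₀ hp.ne_zero
  have himage (k : ℕ) : ∑ d ∈ k.divisors.image (p * ·), f d = f p * ∑ d ∈ k.divisors, f d := by
    simp only [Finset.sum_image hinj.injOn, map_mul, Finset.mul_sum]
  have hunion : (p * m).divisors = m.divisors ∪ m.divisors.image (p * ·) := by
    ext d
    simp only [Nat.mem_divisors, Finset.mem_union, Finset.mem_image]
    refine ⟨fun ⟨h, _⟩ => ?_, ?_⟩
    · by_cases hpd : p ∣ d
      · obtain ⟨e, rfl⟩ := hpd
        exact .inr ⟨e, ⟨Nat.dvd_of_mul_dvd_mul_left hp.pos h, hm⟩, rfl⟩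
      · exact .inl ⟨((hp.coprime_iff_not_dvd.2 hpd).symm).dvd_of_dvd_mul_left h, hm⟩
    · rintro (⟨h, -⟩ | ⟨e, ⟨h, -⟩, rfl⟩)
      · exact ⟨h.mul_left p, mul_ne_zero hp.ne_zero hm⟩
      · exact ⟨mul_dvd_mul_left p h, mul_ne_zero hp.ne_zero hm⟩
  have hinter : ∑ d ∈ m.divisors ∩ m.divisors.image (p * ·), f d
      = if p ∣ m then f p * ∑ d ∈ (m / p).divisors, f d else 0 := by
    split_ifs with h
    · obtain ⟨k, rfl⟩ := h
      rw [Nat.mul_div_cancel_left _ hp.pos, ← himage]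
      congr 1
      ext d
      simp only [Nat.mem_divisors, Finset.mem_inter, Finset.mem_image]
      constructor
      · rintro ⟨⟨h, -⟩, e, -, rfl⟩
        exact ⟨e, ⟨Nat.dvd_of_mul_dvd_mul_left hp.pos h, right_ne_zero_of_mul hm⟩, rfl⟩
      · rintro ⟨e, ⟨h, -⟩, rfl⟩
        exact ⟨⟨mul_dvd_mul_left p h, hm⟩, e, ⟨h.mul_left p, hm⟩, rfl⟩
    · refine Finset.sum_eq_zero fun d hd => absurd ?_ h
      simp only [Nat.mem_divisors, Finset.mem_inter, Finset.mem_image] at hd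
      obtain ⟨⟨h, -⟩, e, -, rfl⟩ := hd
      exact (dvd_mul_right p e).trans h
  rw [hunion, ← hinter, Finset.sum_union_inter, himage]

lemma chiDivisorSum_prime_mul {p m : ℕ} (hp : p.Prime) (hm : m ≠ 0) :
    chiDivisorSum (p * m) + (if p ∣ m then ZMod.χ₄ p * chiDivisorSum (m / p) else 0)
      = chiDivisorSum m + ZMod.χ₄ p * chiDivisorSum m :=
  sum_divisors_prime_mul
    ((ZMod.χ₄ : ZMod 4 →* ℤ).comp (Nat.castRingHom (ZMod 4) : ℕ →* ZMod 4)) hp hm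

lemma prime_of_norm_eq_prime {w : GaussianInt} {p : ℕ} (hp : p.Prime) (hw : w.norm = p) :
    Prime w := by
  have hnorm : w.norm.natAbs = p := by simp [hw]
  refine irreducible_iff_prime.1 ⟨fun hu => ?_, fun a b hab => ?_⟩
  · exact hp.one_lt.ne' (hnorm ▸ Zsqrtd.norm_eq_one_iff.2 hu)
  · rw [← hnorm, hab, Zsqrtd.norm_mul, Int.natAbs_mul, Nat.prime_mul_iff] at hp
    rw [← Zsqrtd.norm_eq_one_iff, ← Zsqrtd.norm_eq_one_iff]
    exact hp.symm.imp And.right And.right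

lemma image_mul_gaussianSphere {w : GaussianInt} {k : ℕ} (hk : k ≠ 0) (hw : w.norm = k) (m : ℕ) :
    (w * ·) '' gaussianSphere m = {z ∈ gaussianSphere (k * m) | w ∣ z} := by
  ext z
  constructor
  · rintro ⟨x, hx, rfl⟩
    refine ⟨?_, dvd_mul_right w x⟩
    rw [mem_gaussianSphere] at hx ⊢
    rw [Zsqrtd.norm_mul, hw, hx, Nat.cast_mul]
  · rintro ⟨hz, x, rfl⟩
    rw [mem_gaussianSphere, Zsqrtd.norm_mul, hw, Nat.cast_mul] at hz
    exact ⟨x, mul_left_cancel₀ (Nat.cast_ne_zero.2 hk) hz, rfl⟩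

lemma ncard_gaussianSphere_dvd {w : GaussianInt} {k : ℕ} (hk : k ≠ 0) (hw : w.norm = k) (m : ℕ) :
    {z ∈ gaussianSphere (k * m) | w ∣ z}.ncard = (gaussianSphere m).ncard := by
  have hw0 : w ≠ 0 := by
    rintro rfl
    exact hk (by simpa using hw.symm)
  rw [← image_mul_gaussianSphere hk hw, Set.ncard_image_of_injective _ (mul_right_injective₀ hw0)]

lemma ncard_gaussianSphere_natCast_dvd {p : ℕ} (hp : p ≠ 0) (m : ℕ) :
    {z ∈ gaussianSphere (p * m) | (p : GaussianInt) ∣ z}.ncard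
      = if p ∣ m then (gaussianSphere (m / p)).ncard else 0 := by
  split_ifs with h
  · obtain ⟨k, rfl⟩ := h
    rw [Nat.mul_div_cancel_left _ hp.bot_lt, ← mul_assoc]
    exact ncard_gaussianSphere_dvd (mul_ne_zero hp hp) (by simp [Zsqrtd.norm_natCast]) k
  · rw [Set.ncard_eq_zero ((finite_gaussianSphere _).subset (Set.sep_subset _ _)),
      Set.eq_empty_iff_forall_notMem]
    rintro z ⟨hz, x, rfl⟩
    rw [mem_gaussianSphere, Zsqrtd.norm_mul, Zsqrtd.norm_natCast, Nat.cast_mul, mul_assoc] at hz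
    exact h (Int.natCast_dvd_natCast.1
      ⟨x.norm, (mul_left_cancel₀ (Nat.cast_ne_zero.2 hp) hz).symm⟩)

lemma dvd_or_star_dvd_of_dvd_norm {w z : GaussianInt} (hw : Prime w)
    (h : w ∣ (z.norm : GaussianInt)) : w ∣ z ∨ star w ∣ z := by
  rw [Zsqrtd.norm_eq_mul_conj] at h
  exact (hw.dvd_or_dvd h).imp_right fun h => by
    simpa [starRingEnd_apply] using map_dvd (starRingEnd GaussianInt) h

lemma ncard_gaussianSphere_inert_mul {p : ℕ} (hp : p.Prime) (hp4 : p % 4 = 3) (m : ℕ) :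
    (gaussianSphere (p * m)).ncard = if p ∣ m then (gaussianSphere (m / p)).ncard else 0 := by
  have := Fact.mk hp
  rw [← ncard_gaussianSphere_natCast_dvd hp.ne_zero, Set.sep_eq_self_iff_mem_true.2]
  intro z hz
  have hdvd : (p : GaussianInt) ∣ (z.norm : GaussianInt) := by
    rw [mem_gaussianSphere.1 hz]
    simp
  simpa using dvd_or_star_dvd_of_dvd_norm
    (GaussianInt.prime_of_nat_prime_of_mod_four_eq_three p hp4) hdvd

lemma not_star_dvd_self_of_norm_eq_prime {w : GaussianInt} {p : ℕ} (hp : p.Prime) (hp2 : p ≠ 2)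
    (hw : w.norm = p) : ¬ star w ∣ w := by
  intro hdvd
  have hre : star w ∣ ((2 * w.re : ℤ) : GaussianInt) := by
    have : ((2 * w.re : ℤ) : GaussianInt) = w + star w := by ext <;> simp; ring
    exact this ▸ dvd_add hdvd dvd_rfl
  have hp_dvd : (p : ℤ) ∣ (2 * w.re) * (2 * w.re) := by
    have hnorm : (star w).norm ∣ Zsqrtd.norm _ := map_dvd Zsqrtd.normMonoidHom hre
    rwa [Zsqrtd.norm_conj, hw, Zsqrtd.norm_intCast] at hnorm
  have hp_dvd_re : (p : ℤ) ∣ w.re := by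
    have hpZ := Nat.prime_iff_prime_int.1 hp
    refine (hpZ.dvd_or_dvd (or_self_iff.1 (hpZ.dvd_or_dvd hp_dvd))).resolve_left fun h2 => ?_
    exact hp2 ((Nat.prime_dvd_prime_iff_eq hp Nat.prime_two).1 (Int.natCast_dvd_natCast.1 h2))
  obtain ⟨c, hc⟩ := hp_dvd_re
  rw [norm_eq_re_sq_add_im_sq] at hw
  have hp2' : (2 : ℤ) ≤ p := by exact_mod_cast hp.two_le
  obtain rfl | hc0 := eq_or_ne c 0
  · rw [hc, mul_zero, zero_pow two_ne_zero, zero_add] at hw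
    exact Nat.Prime.not_prime_pow le_rfl
      (show (w.im.natAbs ^ 2).Prime by rwa [show w.im.natAbs ^ 2 = p by zify; simpa using hw])
  · have hc1 : 1 ≤ c ^ 2 := Order.one_le_iff_pos.2 (by positivity)
    rw [hc, mul_pow] at hw
    nlinarith [sq_nonneg w.im]

lemma ncard_gaussianSphere_split_mul {p : ℕ} (hp : p.Prime) (hp4 : p % 4 = 1) (m : ℕ) :
    (gaussianSphere (p * m)).ncard + (if p ∣ m then (gaussianSphere (m / p)).ncard else 0)
      = (gaussianSphere m).ncard + (gaussianSphere m).ncard := by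
  have := Fact.mk hp
  obtain ⟨a, b, hab⟩ := Nat.Prime.sq_add_sq (p := p) (by omega)
  obtain ⟨w, hw⟩ : ∃ w : GaussianInt, w.norm = p :=
    ⟨⟨a, b⟩, norm_eq_re_sq_add_im_sq _ |>.trans (by push_cast [← hab]; rfl)⟩
  have hw' : (star w).norm = p := by rw [Zsqrtd.norm_conj, hw]
  have hmul : w * star w = p := by rw [← Zsqrtd.norm_eq_mul_conj, hw]; simp
  have hunion : gaussianSphere (p * m)
      = {z ∈ gaussianSphere (p * m) | w ∣ z} ∪ {z ∈ gaussianSphere (p * m) | star w ∣ z} := by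
    rw [← Set.sep_or, eq_comm, Set.sep_eq_self_iff_mem_true]
    intro z hz
    refine dvd_or_star_dvd_of_dvd_norm (prime_of_norm_eq_prime hp hw) ?_
    rw [mem_gaussianSphere.1 hz, Nat.cast_mul]
    simp [← hmul, mul_assoc]
  have hinter : {z ∈ gaussianSphere (p * m) | (p : GaussianInt) ∣ z}
      = {z ∈ gaussianSphere (p * m) | w ∣ z} ∩ {z ∈ gaussianSphere (p * m) | star w ∣ z} := by
    rw [← Set.sep_and]
    refine Set.sep_ext_iff.2 fun z _ => ⟨fun h => ?_, ?_⟩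
    · rw [← hmul] at h
      exact ⟨dvd_of_mul_right_dvd h, dvd_of_mul_left_dvd h⟩
    · rintro ⟨⟨x, rfl⟩, h⟩
      have hx := ((prime_of_norm_eq_prime hp hw').dvd_or_dvd h).resolve_left
        (not_star_dvd_self_of_norm_eq_prime hp (by omega) hw)
      exact hmul ▸ mul_dvd_mul_left w hx
  rw [← ncard_gaussianSphere_natCast_dvd hp.ne_zero, hinter]
  nth_rw 1 [hunion]
  have hfin := finite_gaussianSphere (p * m)
  rw [Set.ncard_union_add_ncard_inter _ _ (hfin.subset (Set.sep_subset _ _))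
    (hfin.subset (Set.sep_subset _ _)), ncard_gaussianSphere_dvd hp.ne_zero hw,
    ncard_gaussianSphere_dvd hp.ne_zero hw']

lemma ncard_gaussianSphere_one : (gaussianSphere 1).ncard = 4 := by
  have : gaussianSphere 1
      = (({⟨1, 0⟩, ⟨-1, 0⟩, ⟨0, 1⟩, ⟨0, -1⟩} : Finset GaussianInt) : Set GaussianInt) := by
    ext ⟨x, y⟩
    simp only [mem_gaussianSphere, norm_eq_re_sq_add_im_sq, Finset.coe_insert,
      Finset.coe_singleton, Set.mem_insert_iff, Set.mem_singleton_iff, Zsqrtd.mk.injEq,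
      Nat.cast_one]
    constructor
    · intro h
      have hx := abs_le.1 (abs_le_one_iff_mul_self_le_one.2 (by nlinarith [sq_nonneg y]) : |x| ≤ 1)
      have hy := abs_le.1 (abs_le_one_iff_mul_self_le_one.2 (by nlinarith [sq_nonneg x]) : |y| ≤ 1)
      obtain ⟨hx₁, hx₂⟩ := hx
      obtain ⟨hy₁, hy₂⟩ := hy
      interval_cases x <;> interval_cases y <;> simp_all
    · rintro (⟨rfl, rfl⟩ | ⟨rfl, rfl⟩ | ⟨rfl, rfl⟩ | ⟨rfl, rfl⟩) <;> norm_num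
  rw [this, Set.ncard_coe_finset]
  decide

theorem ncard_gaussianSphere_of_odd {n : ℕ} (hn : Odd n) :
    ((gaussianSphere n).ncard : ℤ) = 4 * chiDivisorSum n := by
  induction n using Nat.strong_induction_on with
  | _ n ih =>
    obtain rfl | h1 := eq_or_ne n 1
    · simp [ncard_gaussianSphere_one, chiDivisorSum]
    have hp := Nat.minFac_prime h1
    obtain ⟨m, hm⟩ := Nat.minFac_dvd n
    set p := n.minFac
    rw [hm, Nat.odd_mul] at hn
    have hm0 := hn.2.pos
    have hmn : m < n := hm ▸ lt_mul_of_one_lt_left hm0 hp.one_lt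
    have ihm := ih m hmn hn.2
    have ihdiv : (if p ∣ m then ((gaussianSphere (m / p)).ncard : ℤ) else 0)
        = 4 * if p ∣ m then chiDivisorSum (m / p) else 0 := by
      split_ifs with h
      · exact ih _ ((Nat.div_le_self _ _).trans_lt hmn) (hn.2.of_dvd_nat (Nat.div_dvd_of_dvd h))
      · simp
    have hrec := chiDivisorSum_prime_mul hp hm0.ne'
    rw [hm]
    obtain hp4 | hp4 := Nat.odd_mod_four_iff.1 (Nat.odd_iff.1 hn.1)
    · have hcount := congrArg (Nat.cast : ℕ → ℤ) (ncard_gaussianSphere_split_mul hp hp4 m)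
      push_cast at hcount
      rw [ZMod.χ₄_nat_one_mod_four hp4] at hrec
      simp only [one_mul] at hrec
      linarith
    · have hcount := congrArg (Nat.cast : ℕ → ℤ) (ncard_gaussianSphere_inert_mul hp hp4 m)
      push_cast at hcount
      rw [ZMod.χ₄_nat_three_mod_four hp4, ← mul_ite_zero] at hrec
      linarith

end TwoSquares

/-! ### Jacobi's convolution of divisor sums -/

section DivisorConvolution

/-- The solutions `((k, l), (r, s))` of `k * l + r * s = n` in odd natural numbers. -/
def oddQuadruples (n : ℕ) : Finset ((ℕ × ℕ) × (ℕ × ℕ)) :=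
  {t ∈ (Finset.range (n + 1) ×ˢ Finset.range (n + 1)) ×ˢ
      (Finset.range (n + 1) ×ˢ Finset.range (n + 1)) |
    (Odd t.1.1 ∧ Odd t.1.2) ∧ (Odd t.2.1 ∧ Odd t.2.2) ∧ t.1.1 * t.1.2 + t.2.1 * t.2.2 = n}

lemma mem_oddQuadruples {n k l r s : ℕ} : ((k, l), (r, s)) ∈ oddQuadruples n ↔
    (Odd k ∧ Odd l) ∧ (Odd r ∧ Odd s) ∧ k * l + r * s = n := by
  simp only [oddQuadruples, Finset.mem_filter, Finset.mem_product, Finset.mem_range,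
    Nat.lt_succ_iff, and_iff_right_iff_imp]
  rintro ⟨⟨hk, hl⟩, ⟨hr, hs⟩, rfl⟩
  refine ⟨⟨?_, ?_⟩, ⟨?_, ?_⟩⟩ <;> nlinarith [hk.pos, hl.pos, hr.pos, hs.pos]

/-- Coordinates `(t, (x, m), (y, l))` for the odd quadruples `((k, l), (r, s))` of `2 * u` with
`r < k`, where `k - r = 2 * x`, `l + s = 2 * y` and `r = 2 * x * t + m` with `m < 2 * x`. The
defining equation is symmetric under exchanging `(x, m)` and `(y, l)`. -/
def divisionData (u : ℕ) : Finset (ℕ × (ℕ × ℕ) × (ℕ × ℕ)) :=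
  {p ∈ Finset.range (u + 1) ×ˢ (Finset.range (u + 1) ×ˢ Finset.range (2 * u + 1)) ×ˢ
      (Finset.range (u + 1) ×ˢ Finset.range (2 * u + 1)) |
    (p.2.1.2 < 2 * p.2.1.1 ∧ Odd p.2.1.2) ∧ (p.2.2.2 < 2 * p.2.2.1 ∧ Odd p.2.2.2) ∧
      p.2.1.1 * p.2.2.2 + p.2.1.2 * p.2.2.1 + 2 * (p.2.1.1 * p.2.2.1 * p.1) = u}

lemma mem_divisionData {u t x m y l : ℕ} : (t, (x, m), (y, l)) ∈ divisionData u ↔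
    (m < 2 * x ∧ Odd m) ∧ (l < 2 * y ∧ Odd l) ∧ x * l + m * y + 2 * (x * y * t) = u := by
  simp only [divisionData, Finset.mem_filter, Finset.mem_product, Finset.mem_range,
    Nat.lt_succ_iff, and_iff_right_iff_imp]
  rintro ⟨⟨hm, hm'⟩, ⟨hl, hl'⟩, rfl⟩
  have hx : 0 < x := by omega
  have hy : 0 < y := by omega
  have hxl : x ≤ x * l := Nat.le_mul_of_pos_right x hl'.pos
  have hmy : y ≤ m * y := Nat.le_mul_of_pos_left y hm'.pos
  have ht : t ≤ x * y * t := Nat.le_mul_of_pos_left t (Nat.mul_pos hx hy)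
  refine ⟨?_, ⟨?_, ?_⟩, ?_, ?_⟩ <;> omega

lemma sum_divisionData_eq_zero {u : ℕ} (hu : Odd u) :
    ∑ p ∈ divisionData u, (-1 : ℤ) ^ p.2.1.1 = 0 := by
  have hswap : ∑ p ∈ divisionData u, (-1 : ℤ) ^ p.2.1.1
      = ∑ p ∈ divisionData u, (-1 : ℤ) ^ p.2.2.1 := by
    refine Finset.sum_nbij' (fun p => (p.1, p.2.swap)) (fun p => (p.1, p.2.swap)) ?_ ?_
      (fun _ _ => rfl) (fun _ _ => rfl) (fun _ _ => rfl) <;>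
    · rintro ⟨t, ⟨x, m⟩, ⟨y, l⟩⟩ h
      rw [mem_divisionData] at h
      exact mem_divisionData.2 ⟨h.2.1, h.1, by rw [← h.2.2]; ring⟩
  have hneg : ∑ p ∈ divisionData u, (-1 : ℤ) ^ p.2.2.1
      = -∑ p ∈ divisionData u, (-1 : ℤ) ^ p.2.1.1 := by
    rw [← Finset.sum_neg_distrib]
    refine Finset.sum_congr rfl ?_
    rintro ⟨t, ⟨x, m⟩, ⟨y, l⟩⟩ h
    obtain ⟨⟨-, hm⟩, ⟨-, hl⟩, rfl⟩ := mem_divisionData.1 h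
    have hxy : Odd x ↔ Even y := by
      simpa [Nat.odd_add, Nat.odd_mul, Nat.even_mul, hl, Nat.not_even_iff_odd.2 hm] using hu
    obtain hx | hx := Nat.even_or_odd x
    · have hy : Odd y := by rwa [← Nat.not_even_iff_odd, ← hxy, Nat.not_odd_iff_even]
      simp [hx.neg_one_pow, hy.neg_one_pow]
    · simp [hx.neg_one_pow, (hxy.1 hx).neg_one_pow]
  linarith

lemma χ₄_add_two_mul_mul_χ₄ {r : ℕ} (hr : Odd r) (x : ℕ) :
    ZMod.χ₄ ((r + 2 * x : ℕ) : ZMod 4) * ZMod.χ₄ r = (-1) ^ x := by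
  have hχ (a b : ZMod 4) : ZMod.χ₄ ((2 * a + 1) + 2 * (b + b)) * ZMod.χ₄ (2 * a + 1) = 1 ∧
      ZMod.χ₄ ((2 * a + 1) + 2 * (2 * b + 1)) * ZMod.χ₄ (2 * a + 1) = -1 := by
    revert a b; decide
  obtain ⟨a, rfl⟩ := hr
  obtain hx | hx := Nat.even_or_odd x
  · rw [hx.neg_one_pow]
    obtain ⟨b, rfl⟩ := hx
    exact_mod_cast (hχ a b).1
  · rw [hx.neg_one_pow]
    obtain ⟨b, rfl⟩ := hx
    exact_mod_cast (hχ a b).2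

lemma sum_oddQuadruples_lt_eq_sum_divisionData (u : ℕ) :
    ∑ t ∈ oddQuadruples (2 * u) with t.2.1 < t.1.1, ZMod.χ₄ t.1.1 * ZMod.χ₄ t.2.1
      = ∑ p ∈ divisionData u, (-1 : ℤ) ^ p.2.1.1 := by
  refine Finset.sum_nbij'
    (fun ((k, l), (r, s)) => (r / (k - r), ((k - r) / 2, r % (k - r)), ((l + s) / 2, l)))
    (fun (t, (x, m), (y, l)) => ((m + 2 * x * t + 2 * x, l), (m + 2 * x * t, 2 * y - l)))
    ?_ ?_ ?_ ?_ ?_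
  · rintro ⟨⟨k, l⟩, ⟨r, s⟩⟩ h
    obtain ⟨⟨⟨hk, hl⟩, ⟨hr, hs⟩, h⟩, hrk⟩ := by
      simpa only [Finset.mem_filter, mem_oddQuadruples] using h
    obtain ⟨x, hx⟩ : ∃ x, k = r + 2 * x := ⟨(k - r) / 2, by grind⟩
    obtain ⟨y, hy⟩ : ∃ y, l + s = 2 * y := ⟨(l + s) / 2, by grind⟩
    have hdiv := Nat.div_add_mod r (2 * x)
    have hmod : r % (2 * x) < 2 * x := Nat.mod_lt _ (by omega)
    have hmul : x * l + r * y = u := by subst hx; nlinarith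
    simp only [show k - r = 2 * x by omega, hy, Nat.mul_div_cancel_left _ two_pos]
    refine mem_divisionData.2 ⟨⟨hmod, ?_⟩, ⟨by grind, hl⟩, ?_⟩
    · rw [← hdiv, mul_assoc, add_comm] at hr
      exact (Nat.odd_add.1 hr).2 (even_two_mul _)
    · rw [← hmul, ← Nat.div_add_mod r (2 * x)]
      grind
  · rintro ⟨t, ⟨x, m⟩, ⟨y, l⟩⟩ h
    obtain ⟨⟨hm, hm'⟩, ⟨hl, hl'⟩, h⟩ := mem_divisionData.1 h
    obtain ⟨s, hs⟩ : ∃ s, 2 * y = l + s := ⟨2 * y - l, by omega⟩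
    simp only [Finset.mem_filter, mem_oddQuadruples]
    refine ⟨⟨⟨by grind, hl'⟩, ⟨by grind, by grind⟩, ?_⟩, by omega⟩
    rw [show 2 * y - l = s by omega, ← h]
    linear_combination (exp := 1) (m + 2 * x * t) * hs.symm
  · rintro ⟨⟨k, l⟩, ⟨r, s⟩⟩ h
    obtain ⟨⟨⟨hk, hl⟩, ⟨hr, hs⟩, -⟩, hrk⟩ := by
      simpa only [Finset.mem_filter, mem_oddQuadruples] using h
    have hx : 2 * ((k - r) / 2) = k - r := by grind
    have hy : 2 * ((l + s) / 2) = l + s := by grind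
    simp only [hx, hy, Nat.mod_add_div, Nat.add_sub_cancel' hrk.le, Nat.add_sub_cancel_left]
  · rintro ⟨t, ⟨x, m⟩, ⟨y, l⟩⟩ h
    obtain ⟨⟨hm, -⟩, ⟨hl, -⟩, -⟩ := mem_divisionData.1 h
    have hx : 0 < 2 * x := by omega
    simp [Nat.add_mul_div_left _ _ hx, Nat.div_eq_of_lt hm,
      Nat.mod_eq_of_lt hm, Nat.add_sub_cancel' hl.le]
  · rintro ⟨⟨k, l⟩, ⟨r, s⟩⟩ h
    obtain ⟨⟨⟨hk, -⟩, ⟨hr, -⟩, -⟩, hrk⟩ := by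
      simpa only [Finset.mem_filter, mem_oddQuadruples] using h
    rw [← χ₄_add_two_mul_mul_χ₄ hr, show r + 2 * ((k - r) / 2) = k by grind]

lemma sum_oddQuadruples_swap (n : ℕ) :
    ∑ t ∈ oddQuadruples n with t.1.1 < t.2.1, ZMod.χ₄ t.1.1 * ZMod.χ₄ t.2.1
      = ∑ t ∈ oddQuadruples n with t.2.1 < t.1.1, ZMod.χ₄ t.1.1 * ZMod.χ₄ t.2.1 := by
  refine Finset.sum_nbij' Prod.swap Prod.swap ?_ ?_ (fun _ _ => rfl) (fun _ _ => rfl)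
    (fun _ _ => mul_comm _ _) <;>
  · rintro ⟨⟨k, l⟩, ⟨r, s⟩⟩ h
    simp only [Finset.mem_filter, Prod.swap_prod_mk, mem_oddQuadruples] at h ⊢
    exact ⟨⟨h.1.2.1, h.1.1, by rw [← h.1.2.2]; ring⟩, h.2⟩

lemma le_card_oddQuadruples_diagonal (u : ℕ) :
    u ≤ ({t ∈ oddQuadruples (2 * u) | t.1.1 = t.2.1} : Finset _).card := by
  refine (Finset.card_range u).symm.trans_le (Finset.card_le_card_of_injOn
    (fun i => ((1, 2 * i + 1), (1, 2 * (u - 1 - i) + 1))) (fun i hi => ?_) fun i _ j _ h => ?_)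
  · have hi : i < u := by simpa using hi
    simp only [Finset.mem_coe, Finset.mem_filter, mem_oddQuadruples, and_true]
    exact ⟨⟨odd_one, odd_two_mul_add_one _⟩, ⟨odd_one, odd_two_mul_add_one _⟩, by omega⟩
  · simp only [Prod.mk.injEq] at h
    omega

lemma le_sum_oddQuadruples {u : ℕ} (hu : Odd u) :
    (u : ℤ) ≤ ∑ t ∈ oddQuadruples (2 * u), ZMod.χ₄ t.1.1 * ZMod.χ₄ t.2.1 := by
  have hlt : ∑ t ∈ oddQuadruples (2 * u) with t.2.1 < t.1.1, ZMod.χ₄ t.1.1 * ZMod.χ₄ t.2.1 = 0 :=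
    (sum_oddQuadruples_lt_eq_sum_divisionData u).trans (sum_divisionData_eq_zero hu)
  have hdiag : ∑ t ∈ oddQuadruples (2 * u) with t.1.1 = t.2.1, ZMod.χ₄ t.1.1 * ZMod.χ₄ t.2.1
      = ({t ∈ oddQuadruples (2 * u) | t.1.1 = t.2.1} : Finset _).card := by
    rw [Finset.cast_card]
    refine Finset.sum_congr rfl ?_
    rintro ⟨⟨k, l⟩, ⟨r, s⟩⟩ ht
    simp only [Finset.mem_filter, mem_oddQuadruples] at ht
    simpa [ht.2] using χ₄_add_two_mul_mul_χ₄ ht.1.2.1.1 0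
  have hsplit := Finset.sum_filter_add_sum_filter_not (oddQuadruples (2 * u))
    (fun t => t.2.1 < t.1.1) (fun t => ZMod.χ₄ t.1.1 * ZMod.χ₄ t.2.1)
  have hsplit' := Finset.sum_filter_add_sum_filter_not
    {t ∈ oddQuadruples (2 * u) | ¬ t.2.1 < t.1.1}
    (fun t => t.1.1 < t.2.1) (fun t => ZMod.χ₄ t.1.1 * ZMod.χ₄ t.2.1)
  simp only [Finset.filter_filter, not_lt] at hsplit hsplit'
  rw [hlt, ← hsplit', Finset.filter_congr (q := fun t => t.1.1 < t.2.1) (by grind),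
    sum_oddQuadruples_swap, hlt,
    Finset.filter_congr (q := fun t => t.1.1 = t.2.1) (by grind), hdiag] at hsplit
  rw [← hsplit, zero_add, zero_add]
  exact_mod_cast le_card_oddQuadruples_diagonal u

lemma chiDivisorSum_mul_chiDivisorSum {a b : ℕ} (ha : Odd a) (hb : Odd b) :
    chiDivisorSum a * chiDivisorSum b
      = ∑ t ∈ oddQuadruples (a + b) with t.1.1 * t.1.2 = a, ZMod.χ₄ t.1.1 * ZMod.χ₄ t.2.1 := by
  have hantidiagonal (n : ℕ) :
      chiDivisorSum n = ∑ t ∈ n.divisorsAntidiagonal, ZMod.χ₄ (t.1 : ZMod 4) :=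
    (Nat.sum_divisorsAntidiagonal fun d _ => ZMod.χ₄ (d : ZMod 4)).symm
  rw [hantidiagonal, hantidiagonal, Finset.sum_mul_sum, ← Finset.sum_product']
  refine Finset.sum_congr ?_ fun _ _ => rfl
  ext ⟨⟨k, l⟩, ⟨r, s⟩⟩
  simp only [Finset.mem_product, Nat.mem_divisorsAntidiagonal, Finset.mem_filter,
    mem_oddQuadruples]
  constructor
  · rintro ⟨⟨rfl, -⟩, ⟨rfl, -⟩⟩
    exact ⟨⟨Nat.odd_mul.1 ha, Nat.odd_mul.1 hb, rfl⟩, rfl⟩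
  · rintro ⟨⟨-, -, h⟩, rfl⟩
    exact ⟨⟨rfl, ha.pos.ne'⟩, Nat.add_left_cancel h, hb.pos.ne'⟩

theorem le_sum_chiDivisorSum_mul {u : ℕ} (hu : Odd u) :
    (u : ℤ) ≤ ∑ a ∈ Finset.range (2 * u) with Odd a,
      chiDivisorSum a * chiDivisorSum (2 * u - a) := by
  have hmaps : ∀ t ∈ oddQuadruples (2 * u),
      t.1.1 * t.1.2 ∈ ({a ∈ Finset.range (2 * u) | Odd a} : Finset ℕ) := by
    rintro ⟨⟨k, l⟩, ⟨r, s⟩⟩ ht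
    obtain ⟨⟨hk, hl⟩, ⟨hr, hs⟩, h⟩ := mem_oddQuadruples.1 ht
    rw [Finset.mem_filter, Finset.mem_range]
    have := (hr.mul hs).pos
    dsimp only
    exact ⟨by omega, hk.mul hl⟩
  refine (le_sum_oddQuadruples hu).trans_eq ?_
  rw [← Finset.sum_fiberwise_of_maps_to hmaps]
  refine Finset.sum_congr rfl fun a ha => ?_
  rw [Finset.mem_filter, Finset.mem_range] at ha
  rw [chiDivisorSum_mul_chiDivisorSum ha.2 (by grind), Nat.add_sub_cancel' ha.1.le]

end DivisorConvolution

/-! ### Lattice points on spheres -/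

section LatticeSphere

/-- The lattice points of squared norm `N`; as a finite set, so that the spherical averages become
finite sums. It is the sphere of radius `√N`. -/
def latticeSphere (d N : ℕ) : Finset (Fin d → ℤ) :=
  {m ∈ Fintype.piFinset fun _ => Finset.Icc (-(N : ℤ)) N | ∑ i, m i ^ 2 = N}

variable {d N u : ℕ}

lemma mem_latticeSphere {m : Fin d → ℤ} : m ∈ latticeSphere d N ↔ ∑ i, m i ^ 2 = N := by
  simp only [latticeSphere, Finset.mem_filter, Fintype.mem_piFinset, Finset.mem_Icc,
    and_iff_right_iff_imp]
  intro hm i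
  have hi : m i ^ 2 ≤ N :=
    hm ▸ Finset.single_le_sum (f := fun i => m i ^ 2) (fun i _ => sq_nonneg _) (Finset.mem_univ i)
  exact abs_le.1 (by nlinarith [sq_abs (m i), Int.le_self_sq |m i|])

/-- The Gaussian integers of norm `n` with odd real part. -/
def oddGaussianSphere (n : ℕ) : Finset GaussianInt :=
  {z ∈ (finite_gaussianSphere n).toFinset | Odd z.re}

lemma mem_oddGaussianSphere {n : ℕ} {z : GaussianInt} :
    z ∈ oddGaussianSphere n ↔ z.re ^ 2 + z.im ^ 2 = n ∧ Odd z.re := by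
  rw [oddGaussianSphere, Finset.mem_filter, Set.Finite.mem_toFinset, mem_gaussianSphere,
    norm_eq_re_sq_add_im_sq]

lemma odd_re_iff_even_im {n : ℕ} (hn : Odd n) {z : GaussianInt} (hz : z.re ^ 2 + z.im ^ 2 = n) :
    Odd z.re ↔ Even z.im := by
  have h : Odd (z.re ^ 2 + z.im ^ 2) := hz ▸ hn.natCast
  simpa [Int.odd_add, Int.odd_pow, Int.even_pow] using h

lemma card_oddGaussianSphere {n : ℕ} (hn : Odd n) :
    ((oddGaussianSphere n).card : ℤ) = 2 * chiDivisorSum n := by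
  have heven : ({z ∈ (finite_gaussianSphere n).toFinset | ¬ Odd z.re} : Finset _).card
      = (oddGaussianSphere n).card := by
    refine Finset.card_nbij' (fun z => ⟨z.im, z.re⟩) (fun z => ⟨z.im, z.re⟩) ?_ ?_
      (fun _ _ => rfl) (fun _ _ => rfl) <;>
    · intro z hz
      simp only [Finset.mem_coe, Finset.mem_filter, Set.Finite.mem_toFinset, mem_gaussianSphere,
        norm_eq_re_sq_add_im_sq, mem_oddGaussianSphere] at hz ⊢
      have := odd_re_iff_even_im hn hz.1
      exact ⟨by rw [add_comm, hz.1], by grind⟩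
  have hsplit := Finset.card_filter_add_card_filter_not (s := (finite_gaussianSphere n).toFinset)
    (fun z => Odd z.re)
  have hcard := ncard_gaussianSphere_of_odd hn
  rw [Set.ncard_eq_toFinset_card _ (finite_gaussianSphere n), ← hsplit, heven,
    ← oddGaussianSphere] at hcard
  push_cast at hcard
  linarith

/-- The Gaussian integers `(v 0 + v 1) + (v 2 + v 3) i` and `(v 0 - v 1) + (v 2 - v 3) i`, whose
norms add up to twice the squared norm of `v`. -/
def gaussianPair (v : Fin 4 → ℤ) : GaussianInt × GaussianInt :=
  (⟨v 0 + v 1, v 2 + v 3⟩, ⟨v 0 - v 1, v 2 - v 3⟩)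

lemma exists_gaussianPair_eq {a : ℕ} (ha : a ∈ ({a ∈ Finset.range (2 * u) | Odd a} : Finset ℕ))
    {z w : GaussianInt} (hz : z ∈ oddGaussianSphere a) (hw : w ∈ oddGaussianSphere (2 * u - a)) :
    ∃ v ∈ latticeSphere 4 u, gaussianPair v = (z, w) := by
  rw [mem_oddGaussianSphere] at hz hw
  rw [Finset.mem_filter, Finset.mem_range] at ha
  obtain ⟨p, hp⟩ : Even (z.re + w.re) := hz.2.add_odd hw.2
  obtain ⟨q, hq⟩ : Even (z.im + w.im) :=
    ((odd_re_iff_even_im ha.2 hz.1).1 hz.2).add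
      ((odd_re_iff_even_im (by grind) hw.1).1 hw.2)
  refine ⟨![p, z.re - p, q, z.im - q], ?_, ?_⟩
  · have hnorm : z.re ^ 2 + z.im ^ 2 + (w.re ^ 2 + w.im ^ 2) = 2 * u := by
      rw [hz.1, hw.1]; push_cast [ha.1.le]; ring
    rw [show w.re = 2 * p - z.re by linarith, show w.im = 2 * q - z.im by linarith] at hnorm
    simp only [mem_latticeSphere, Fin.sum_univ_four, Matrix.cons_val]
    linarith
  · ext <;> simp only [gaussianPair, Matrix.cons_val] <;> linarith

theorem four_mul_le_card_latticeSphere_four (hu : Odd u) : 4 * u ≤ (latticeSphere 4 u).card := by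
  set A : Finset ℕ := {a ∈ Finset.range (2 * u) | Odd a} with hA
  have hfiber : ∀ a ∈ A, (oddGaussianSphere a).card * (oddGaussianSphere (2 * u - a)).card
      ≤ ({v ∈ latticeSphere 4 u | (gaussianPair v).1.norm.toNat = a} : Finset _).card := by
    intro a ha
    rw [← Finset.card_product]
    refine Finset.card_le_card_of_surjOn gaussianPair ?_
    rintro ⟨z, w⟩ hzw
    rw [Finset.mem_coe, Finset.mem_product] at hzw
    obtain ⟨v, hv, hvzw⟩ := exists_gaussianPair_eq ha hzw.1 hzw.2
    refine ⟨v, ?_, hvzw⟩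
    rw [Finset.mem_coe, Finset.mem_filter, hvzw, norm_eq_re_sq_add_im_sq,
      (mem_oddGaussianSphere.1 hzw.1).1]
    exact ⟨hv, rfl⟩
  have hcard : ∑ a ∈ A, (oddGaussianSphere a).card * (oddGaussianSphere (2 * u - a)).card
      ≤ (latticeSphere 4 u).card := by
    refine (Finset.sum_le_sum hfiber).trans ?_
    rw [Finset.sum_card_fiberwise_eq_card_filter]
    exact Finset.card_filter_le _ _
  zify at hcard ⊢
  calc (4 * u : ℤ) ≤ 4 * ∑ a ∈ A, chiDivisorSum a * chiDivisorSum (2 * u - a) := by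
        linarith [le_sum_chiDivisorSum_mul hu]
    _ = ∑ a ∈ A, ((oddGaussianSphere a).card : ℤ) * (oddGaussianSphere (2 * u - a)).card := by
        rw [Finset.mul_sum]
        refine Finset.sum_congr rfl fun a ha => ?_
        rw [hA, Finset.mem_filter, Finset.mem_range] at ha
        rw [card_oddGaussianSphere ha.2, card_oddGaussianSphere (by grind)]
        ring
    _ ≤ (latticeSphere 4 u).card := hcard

lemma sum_card_latticeSphere_le {X : Finset ℕ} (hX : ∀ x ∈ X, x ^ 2 ≤ N) :
    ∑ x ∈ X, (latticeSphere d (N - x ^ 2)).card ≤ (latticeSphere (d + 1) N).card := by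
  calc ∑ x ∈ X, (latticeSphere d (N - x ^ 2)).card
      ≤ ∑ x ∈ X, ({m ∈ latticeSphere (d + 1) N | m 0 = (x : ℤ)} : Finset _).card := by
        refine Finset.sum_le_sum fun x hx => Finset.card_le_card_of_injOn
          (fun m => (Fin.cons (x : ℤ) m : Fin (d + 1) → ℤ)) (fun m hm => ?_)
          (Fin.cons_right_injective (α := fun _ => ℤ) _).injOn
        have hm : ∑ i, m i ^ 2 = ((N - x ^ 2 : ℕ) : ℤ) := mem_latticeSphere.1 hm
        rw [Nat.cast_sub (hX x hx)] at hm
        simp [mem_latticeSphere, Fin.sum_univ_succ, hm]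
    _ = ∑ x ∈ X.map Nat.castEmbedding,
          ({m ∈ latticeSphere (d + 1) N | m 0 = x} : Finset _).card := by
        rw [Finset.sum_map]; rfl
    _ ≤ (latticeSphere (d + 1) N).card := by
        rw [Finset.sum_card_fiberwise_eq_card_filter]
        exact Finset.card_filter_le _ _

lemma sqrt_le_two_mul_sqrt_half_add_one (N : ℕ) : √(N : ℝ) ≤ 2 * ((N / 2).sqrt + 1) := by
  have h : N / 2 < ((N / 2).sqrt + 1) ^ 2 := Nat.lt_succ_sqrt' _
  rw [Real.sqrt_le_left (by positivity)]
  exact_mod_cast (by nlinarith [show N < 2 * ((N / 2).sqrt + 1) ^ 2 by omega] :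
    N ≤ (2 * ((N / 2).sqrt + 1)) ^ 2)

lemma two_mul_sq_le_of_le_sqrt_half {x : ℕ} (hx : x ≤ (N / 2).sqrt) : 2 * x ^ 2 ≤ N := by
  have := Nat.le_sqrt'.1 hx
  omega

lemma le_card_latticeSphere_five (N : ℕ) : 1 / 4 * √(N : ℝ) ^ 3 ≤ (latticeSphere 5 N).card := by
  obtain rfl | rfl | hN : N = 0 ∨ N = 1 ∨ 2 ≤ N := by omega
  · simp
  · have hpos : 0 < (latticeSphere 5 1).card :=
      Finset.card_pos.2 ⟨![1, 0, 0, 0, 0], by simp [mem_latticeSphere, Fin.sum_univ_five]⟩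
    have : (1 : ℝ) ≤ (latticeSphere 5 1).card := by exact_mod_cast hpos
    norm_num
    linarith
  set K := (N / 2).sqrt
  have hK1 : 1 ≤ K := Nat.le_sqrt'.2 (by omega)
  -- The parity of `x` is chosen so that `N - x ^ 2` is odd.
  set X : Finset ℕ := (Finset.range ((K + 1) / 2)).image fun i => 2 * i + (N + 1) % 2 with hX
  have hXcard : X.card = (K + 1) / 2 := by
    rw [hX, Finset.card_image_of_injective _ fun i j h => by omega,
      Finset.card_range]
  have hXmem : ∀ x ∈ X, 2 * x ^ 2 ≤ N ∧ Odd (N - x ^ 2) := by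
    intro x hx
    obtain ⟨i, hi, rfl⟩ := Finset.mem_image.1 hx
    rw [Finset.mem_range] at hi
    have hle := two_mul_sq_le_of_le_sqrt_half (show 2 * i + (N + 1) % 2 ≤ (N / 2).sqrt by omega)
    refine ⟨hle, ?_⟩
    rw [Nat.odd_sub (by omega), Nat.even_pow' two_ne_zero]
    grind
  have hcard : (K + 1) / 2 * (2 * N) ≤ (latticeSphere 5 N).card := by
    rw [← hXcard]
    refine (Finset.card_nsmul_le_sum X _ (2 * N) fun x hx => ?_).trans
      (sum_card_latticeSphere_le (d := 4) fun x hx => by have := (hXmem x hx).1; omega)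
    have := four_mul_le_card_latticeSphere_four (hXmem x hx).2
    have := (hXmem x hx).1
    omega
  have hKN : (K + 1) * N ≤ 2 * (latticeSphere 5 N).card := by
    nlinarith [show K + 1 ≤ 4 * ((K + 1) / 2) by omega]
  have hKN' : ((K : ℝ) + 1) * N ≤ 2 * (latticeSphere 5 N).card := by exact_mod_cast hKN
  have hsqrt := sqrt_le_two_mul_sqrt_half_add_one N
  calc 1 / 4 * √(N : ℝ) ^ 3 = 1 / 4 * √(N : ℝ) * N := by
        rw [pow_succ', Real.sq_sqrt N.cast_nonneg]; ring
    _ ≤ 1 / 4 * (2 * (K + 1)) * N := by gcongr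
    _ ≤ (latticeSphere 5 N).card := by linarith

lemma le_card_latticeSphere_succ {c : ℝ} (hc : 0 ≤ c) {k : ℕ}
    (h : ∀ N : ℕ, c * √(N : ℝ) ^ k ≤ (latticeSphere d N).card) (N : ℕ) :
    c / 2 ^ (k + 1) * √(N : ℝ) ^ (k + 1) ≤ (latticeSphere (d + 1) N).card := by
  set K := (N / 2).sqrt
  have hsq : ∀ x ∈ Finset.range (K + 1), 2 * x ^ 2 ≤ N := fun x hx =>
    two_mul_sq_le_of_le_sqrt_half (Nat.lt_succ_iff.1 (Finset.mem_range.1 hx))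
  have hfiber : ∀ x ∈ Finset.range (K + 1),
      c * (√(N : ℝ) / 2) ^ k ≤ (latticeSphere d (N - x ^ 2)).card := by
    intro x hx
    refine le_trans ?_ (h _)
    gcongr
    have hN : N ≤ (N - x ^ 2) * 2 ^ 2 := by have := hsq x hx; omega
    rw [div_le_iff₀ two_pos, Real.sqrt_le_left (by positivity), mul_pow,
      Real.sq_sqrt (Nat.cast_nonneg _)]
    exact_mod_cast hN
  calc c / 2 ^ (k + 1) * √(N : ℝ) ^ (k + 1)
      = √(N : ℝ) / 2 * (c * (√(N : ℝ) / 2) ^ k) := by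
        rw [div_pow, pow_succ, pow_succ]; field_simp
    _ ≤ (K + 1) * (c * (√(N : ℝ) / 2) ^ k) := by
        gcongr
        linarith [sqrt_le_two_mul_sqrt_half_add_one N]
    _ ≤ ∑ x ∈ Finset.range (K + 1), ((latticeSphere d (N - x ^ 2)).card : ℝ) := by
        simpa using Finset.card_nsmul_le_sum _ _ _ hfiber
    _ ≤ (latticeSphere (d + 1) N).card := by
        exact_mod_cast sum_card_latticeSphere_le fun x hx => by have := hsq x hx; omega

theorem exists_le_card_latticeSphere (hd : 5 ≤ d) :
    ∃ c : ℝ, 0 < c ∧ ∀ N : ℕ, c * √(N : ℝ) ^ (d - 2) ≤ (latticeSphere d N).card := by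
  induction d, hd using Nat.le_induction with
  | base => exact ⟨1 / 4, by norm_num, le_card_latticeSphere_five⟩
  | succ d hd ih =>
    obtain ⟨c, hc, ih⟩ := ih
    refine ⟨c / 2 ^ (d - 2 + 1), by positivity, ?_⟩
    rw [show d + 1 - 2 = d - 2 + 1 by omega]
    exact le_card_latticeSphere_succ hc.le ih

end LatticeSphere

/-! ### Fourier multipliers on the torus -/

open MeasureTheory UnitAddTorus

local instance : MeasureSpace UnitAddCircle := ⟨AddCircle.haarAddCircle⟩

local instance : IsProbabilityMeasure (volume : Measure UnitAddCircle) :=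
  inferInstanceAs (IsProbabilityMeasure AddCircle.haarAddCircle)

section Fourier

variable {ι : Type*}

/-- The representative in `(0, 1]^ι` of a point of the torus. -/
def torusRep (x : UnitAddTorus ι) : ι → ℝ := (measurableEquivPiIoc (0 : ι → ℝ) x).1

lemma measurable_torusRep : Measurable (torusRep (ι := ι)) :=
  measurable_subtype_coe.comp (measurableEquivPiIoc 0).measurable

lemma coe_torusRep (x : UnitAddTorus ι) (i : ι) : (torusRep x i : UnitAddCircle) = x i :=
  congrFun ((measurableEquivPiIoc (0 : ι → ℝ)).symm_apply_apply x) i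

variable [Fintype ι]

/-- The function on the torus with Fourier coefficients `f`; its value at `x` is the Fourier
transform of `f` at `-x` in the convention of the statement. -/
def fourierSeries (f : (ι → ℤ) → ℂ) : C(UnitAddTorus ι, ℂ) := ∑' n, f n • mFourier n

/-- The operator on `ℓ²(ℤ^ι)` that multiplies the Fourier series by the symbol `m`, which is only
evaluated on the fundamental domain `(0, 1]^ι` and need not be periodic. -/
def fourierMultiplier (m : (ι → ℝ) → ℂ) (f : (ι → ℤ) → ℂ) (n : ι → ℤ) : ℂ :=
  mFourierCoeff (fun x => m (torusRep x) * fourierSeries f x) n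

lemma mFourier_coe (n : ι → ℤ) (x : ι → ℝ) :
    mFourier n (fun i => (x i : UnitAddCircle)) =
      Complex.exp (2 * π * Complex.I * ∑ i, (n i : ℂ) * x i) := by
  simp only [mFourier, ContinuousMap.coe_mk, fourier_coe_apply, Complex.ofReal_one, div_one,
    ← Complex.exp_sum, Finset.mul_sum, mul_assoc]

lemma norm_mFourier_apply (n : ι → ℤ) (x : UnitAddTorus ι) : ‖mFourier n x‖ = 1 := by
  simp only [mFourier, ContinuousMap.coe_mk, norm_prod, fourier_apply, Circle.norm_coe,
    Finset.prod_const_one]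

lemma hasSum_fourierSeries {f : (ι → ℤ) → ℂ} (hf : Summable f) :
    HasSum (fun n => f n • mFourier n) (fourierSeries f) := by
  refine (Summable.of_norm ?_).hasSum
  simpa only [norm_smul, mFourier_norm, mul_one] using hf.norm

lemma hasSum_fourierSeries_apply {f : (ι → ℤ) → ℂ} (hf : Summable f) (x : UnitAddTorus ι) :
    HasSum (fun n => f n * mFourier n x) (fourierSeries f x) :=
  (ContinuousMap.evalCLM ℂ x).hasSum (hasSum_fourierSeries hf)

lemma mFourierCoeff_mFourier (m n : ι → ℤ) :
    mFourierCoeff (mFourier m) n = if m = n then 1 else 0 := by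
  have h := orthonormal_iff_ite.1 (orthonormal_mFourier (d := ι)) n m
  rw [ContinuousMap.inner_toLp] at h
  simp only [mFourierCoeff, smul_eq_mul, mFourier_neg, mul_comm, eq_comm (a := m)]
  exact h

theorem mFourierCoeff_fourierSeries_mul {K : (ι → ℤ) → ℂ} (hK : Summable K)
    {H : UnitAddTorus ι → ℂ} (hH : Integrable H) (n : ι → ℤ) :
    mFourierCoeff (fun x => fourierSeries K x * H x) n
      = ∑' m, K m * mFourierCoeff H (n - m) := by
  have hterm (m : ι → ℤ) :
      K m * mFourierCoeff H (n - m) = ∫ x, mFourier (-n) x * (K m * mFourier m x * H x) := by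
    rw [mFourierCoeff, ← integral_const_mul]
    congr 1 with x
    rw [show -(n - m) = -n + m by abel, mFourier_add, smul_eq_mul]
    ring
  have hint (m : ι → ℤ) : Integrable fun x => mFourier (-n) x * (K m * mFourier m x * H x) :=
    (hH.bdd_mul (g := H) (c := ‖K m‖)
      (f := fun x => mFourier (-n) x * (K m * mFourier m x))
      (by fun_prop) (.of_forall fun x => by simp [norm_mFourier_apply])).congr
      (.of_forall fun x => by dsimp only; ring)
  simp_rw [hterm]
  rw [integral_tsum_of_summable_integral_norm hint]
  · simp only [mFourierCoeff, smul_eq_mul, tsum_mul_left, tsum_mul_right,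
      (hasSum_fourierSeries_apply hK _).tsum_eq]
  · simpa only [norm_mul, norm_mFourier_apply, one_mul, mul_one, integral_const_mul] using
      hK.norm.mul_right (∫ x, ‖H x‖)

lemma mFourierCoeff_fourierSeries {f : (ι → ℤ) → ℂ} (hf : Summable f) (n : ι → ℤ) :
    mFourierCoeff (fourierSeries f) n = f n := by
  have h := mFourierCoeff_fourierSeries_mul hf (integrable_const (1 : ℂ)) n
  have hone (k : ι → ℤ) :
      mFourierCoeff (fun _ : UnitAddTorus ι => (1 : ℂ)) k = if 0 = k then 1 else 0 := by
    have := mFourierCoeff_mFourier (0 : ι → ℤ) k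
    rwa [mFourier_zero] at this
  simp only [mul_one, hone] at h
  rw [h, tsum_eq_single n fun m hm => by rw [if_neg (sub_ne_zero.2 hm.symm).symm, mul_zero],
    sub_self, if_pos rfl, mul_one]

theorem mFourierCoeff_fourierSeries_mul_fourierSeries {K f : (ι → ℤ) → ℂ} (hK : Summable K)
    (hf : Summable f) (n : ι → ℤ) :
    mFourierCoeff (fun x => fourierSeries K x * fourierSeries f x) n = ∑' m, K m * f (n - m) := by
  rw [mFourierCoeff_fourierSeries_mul hK
    ((fourierSeries f).continuous.integrable_of_hasCompactSupport (.of_compactSpace _))]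
  simp only [mFourierCoeff_fourierSeries hf]

theorem tsum_enorm_sq_mFourierCoeff {F : UnitAddTorus ι → ℂ} (hF : MemLp F 2) :
    ∑' n, ‖mFourierCoeff F n‖ₑ ^ 2 = ∫⁻ x, ‖F x‖ₑ ^ 2 := by
  have henorm (z : ℂ) : ‖z‖ₑ ^ 2 = ENNReal.ofReal (‖z‖ ^ 2) := by
    rw [ENNReal.ofReal_pow (norm_nonneg _), ofReal_norm]
  have h := hasSum_sq_mFourierCoeff (MemLp.toLp F hF)
  have hcoeff (n : ι → ℤ) : mFourierCoeff (MemLp.toLp F hF) n = mFourierCoeff F n :=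
    integral_congr_ae (hF.coeFn_toLp.mono fun x hx => by simp only [hx])
  have hnorm : ∫ x, ‖MemLp.toLp F hF x‖ ^ 2 = ∫ x, ‖F x‖ ^ 2 :=
    integral_congr_ae (hF.coeFn_toLp.mono fun x hx => by simp only [hx])
  simp only [hcoeff, hnorm] at h
  simp_rw [henorm]
  rw [← ENNReal.ofReal_tsum_of_nonneg (fun _ => by positivity) h.summable, h.tsum_eq,
    ofReal_integral_eq_lintegral_ofReal hF.integrable_norm_pow' (.of_forall fun x => by positivity)]

variable {f : (ι → ℤ) → ℂ} {m : (ι → ℝ) → ℂ} {C : ℝ}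

lemma memLp_mul_fourierSeries (f : (ι → ℤ) → ℂ) (hm : Measurable m) (hC : ∀ x, ‖m x‖ ≤ C)
    (p : ℝ≥0∞) : MemLp (fun x => m (torusRep x) * fourierSeries f x) p := by
  refine MemLp.of_bound ((hm.comp measurable_torusRep).aestronglyMeasurable.mul
    (fourierSeries f).continuous.aestronglyMeasurable) (C * ‖fourierSeries f‖)
    (.of_forall fun x => ?_)
  rw [norm_mul]
  exact mul_le_mul (hC _) ((fourierSeries f).norm_coe_le_norm x) (norm_nonneg _)
    ((norm_nonneg _).trans (hC 0))

lemma integrable_mFourier_mul_fourierSeries (f : (ι → ℤ) → ℂ) (hm : Measurable m)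
    (hC : ∀ x, ‖m x‖ ≤ C) (n : ι → ℤ) :
    Integrable fun x => mFourier n x * (m (torusRep x) * fourierSeries f x) :=
  ((memLp_mul_fourierSeries f hm hC 1).integrable le_rfl).bdd_mul (c := 1) (by fun_prop)
    (.of_forall fun x => by simp [norm_mFourier_apply])

lemma fourierMultiplier_const_mul (c : ℂ) (m : (ι → ℝ) → ℂ) (f : (ι → ℤ) → ℂ) (n : ι → ℤ) :
    fourierMultiplier (fun x => c * m x) f n = c * fourierMultiplier m f n := by
  simp only [fourierMultiplier, mFourierCoeff, smul_eq_mul, ← integral_const_mul]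
  simp only [mul_assoc, mul_left_comm c]

lemma fourierMultiplier_sub {m₁ m₂ : (ι → ℝ) → ℂ} (hm₁ : Measurable m₁) (hm₂ : Measurable m₂)
    {C₁ C₂ : ℝ} (hC₁ : ∀ x, ‖m₁ x‖ ≤ C₁) (hC₂ : ∀ x, ‖m₂ x‖ ≤ C₂) (f : (ι → ℤ) → ℂ)
    (n : ι → ℤ) :
    fourierMultiplier (fun x => m₁ x - m₂ x) f n =
      fourierMultiplier m₁ f n - fourierMultiplier m₂ f n := by
  simp only [fourierMultiplier, mFourierCoeff, smul_eq_mul, sub_mul, mul_sub]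
  exact integral_sub (integrable_mFourier_mul_fourierSeries f hm₁ hC₁ _)
    (integrable_mFourier_mul_fourierSeries f hm₂ hC₂ _)

theorem tsum_enorm_sq_fourierMultiplier (hm : Measurable m) (hC : ∀ x, ‖m x‖ ≤ C) :
    ∑' n, ‖fourierMultiplier m f n‖ₑ ^ 2
      = ∫⁻ x, ‖m (torusRep x)‖ₑ ^ 2 * ‖fourierSeries f x‖ₑ ^ 2 := by
  simpa only [fourierMultiplier, enorm_mul, mul_pow] using
    tsum_enorm_sq_mFourierCoeff (memLp_mul_fourierSeries f hm hC 2)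

theorem lintegral_enorm_sq_fourierSeries (hf : Summable f) :
    ∫⁻ x, ‖fourierSeries f x‖ₑ ^ 2 = ∑' n, ‖f n‖ₑ ^ 2 := by
  have h := tsum_enorm_sq_mFourierCoeff
    (memLp_mul_fourierSeries f (m := fun _ => 1) measurable_const (C := 1)
      (fun _ => by simp) 2)
  simpa only [one_mul, mFourierCoeff_fourierSeries hf] using h.symm

end Fourier

/-! ### Gauss sums and the theta function near rational points -/

section GaussSum

variable {q : ℕ} [NeZero q]

/-- The quadratic Gauss sum `∑ r, e((a r² + b r) / q)` over the residues modulo `q`. -/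
def quadraticGaussSum (a b : ZMod q) : ℂ := ∑ r : ZMod q, ZMod.stdAddChar (a * r ^ 2 + b * r)

lemma card_filter_two_mul_eq_zero_le :
    (Finset.univ.filter fun h : ZMod q => 2 * h = 0).card ≤ 2 := by
  simpa only [nsmul_eq_mul, Nat.cast_ofNat] using
    IsAddCyclic.card_nsmul_eq_zero_le (α := ZMod q) (n := 2) two_pos

lemma quadraticGaussSum_mul_conj (a b : ZMod q) :
    quadraticGaussSum a b * starRingEnd ℂ (quadraticGaussSum a b) =
      ∑ h : ZMod q, ZMod.stdAddChar (a * h ^ 2 + b * h) * if 2 * a * h = 0 then (q : ℂ) else 0 := by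
  have hshift (s : ZMod q) :
      ∑ r : ZMod q, (ZMod.stdAddChar (a * r ^ 2 + b * r) : ℂ) *
          starRingEnd ℂ (ZMod.stdAddChar (a * s ^ 2 + b * s)) =
        ∑ h : ZMod q, ZMod.stdAddChar (a * h ^ 2 + b * h) * ZMod.stdAddChar (s * (2 * a * h)) := by
    rw [← Equiv.sum_comp (Equiv.addRight s)]
    refine Finset.sum_congr rfl fun h _ => ?_
    rw [← AddChar.map_neg_eq_conj, ← AddChar.map_add_eq_mul, ← AddChar.map_add_eq_mul,
      Equiv.coe_addRight]
    ring_nf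
  rw [quadraticGaussSum, map_sum, Finset.sum_mul_sum, Finset.sum_comm]
  simp_rw [hshift]
  rw [Finset.sum_comm]
  simp only [← Finset.mul_sum, AddChar.sum_mulShift _ (ZMod.isPrimitive_stdAddChar q), ZMod.card,
    Nat.cast_ite, Nat.cast_zero]

theorem norm_sq_quadraticGaussSum_le {a : ZMod q} (ha : IsUnit a) (b : ZMod q) :
    ‖quadraticGaussSum a b‖ ^ 2 ≤ 2 * q := by
  have htorsion (h : ZMod q) : 2 * a * h = 0 ↔ 2 * h = 0 := by
    rw [mul_right_comm, mul_comm, ha.mul_right_eq_zero]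
  calc ‖quadraticGaussSum a b‖ ^ 2
      = ‖quadraticGaussSum a b * starRingEnd ℂ (quadraticGaussSum a b)‖ := by
        rw [norm_mul, RCLike.norm_conj, sq]
    _ ≤ ∑ h : ZMod q, if 2 * h = 0 then (q : ℝ) else 0 := by
        rw [quadraticGaussSum_mul_conj]
        refine norm_sum_le_of_le _ fun h _ => ?_
        rw [norm_mul, AddChar.norm_apply, one_mul]
        simp only [htorsion]
        split_ifs <;> simp
    _ = (Finset.univ.filter fun h : ZMod q => 2 * h = 0).card * q := by
        rw [← Finset.sum_filter, Finset.sum_const, nsmul_eq_mul]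
    _ ≤ 2 * q := by
        gcongr
        exact_mod_cast card_filter_two_mul_eq_zero_le

lemma sum_fin_eq_sum_zmod (F : ZMod q → ℂ) : ∑ r : Fin q, F (r : ℕ) = ∑ r : ZMod q, F r := by
  obtain ⟨k, rfl⟩ := Nat.exists_eq_succ_of_ne_zero (NeZero.ne q)
  exact Finset.sum_congr rfl fun r _ => congrArg F (ZMod.natCast_zmod_val (n := k + 1) r)

lemma tsum_eq_sum_residues {f : ℤ → ℂ} {g : ℕ → ℂ} (hf : Summable f)
    (h : ∀ r : ℕ, HasSum (fun k : ℤ => f (k * q + r)) (g r)) :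
    ∑' n, f n = ∑ r : Fin q, g r := by
  have hsum := hf.hasSum
  rw [← (Int.divModEquiv q).symm.hasSum_iff, ← (Equiv.prodComm (Fin q) ℤ).hasSum_iff] at hsum
  exact (hsum.prod_fiberwise fun r => h r).unique (hasSum_fintype _)

lemma jacobiTheta₂_term_residue (a : ℤ) (σ x : ℂ) (k : ℤ) (r : ℕ) :
    jacobiTheta₂_term (k * q + r) x (2 * (a / q) + Complex.I * σ / q ^ 2) =
      Complex.exp (2 * π * Complex.I * (a * r ^ 2 : ℤ) / q) *
        Complex.exp (2 * π * Complex.I * r * x - π * r ^ 2 * σ / q ^ 2) *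
          jacobiTheta₂_term k (q * x + Complex.I * r * σ / q) (Complex.I * σ) := by
  have hq : (q : ℂ) ≠ 0 := NeZero.ne _
  rw [jacobiTheta₂_term, jacobiTheta₂_term, ← Complex.exp_add, ← Complex.exp_add,
    Complex.exp_eq_exp_iff_exists_int]
  refine ⟨2 * a * r * k + a * q * k ^ 2, ?_⟩
  push_cast
  field_simp
  linear_combination (σ * r ^ 2) * Complex.I_sq

lemma hasSum_residue_dual {σ : ℂ} (hσ : 0 < σ.re) (x : ℂ) (r : ℕ) :
    HasSum (fun l : ℤ => 1 / σ ^ (1 / 2 : ℂ) *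
        (Complex.exp (2 * π * Complex.I * (l * r : ℤ) / q) *
          Complex.exp (-π * (q * x - l) ^ 2 / σ)))
      (Complex.exp (2 * π * Complex.I * r * x - π * r ^ 2 * σ / q ^ 2) *
        jacobiTheta₂ (q * x + Complex.I * r * σ / q) (Complex.I * σ)) := by
  have hq : (q : ℂ) ≠ 0 := NeZero.ne _
  have hσ0 : σ ≠ 0 := by rintro rfl; simp at hσ
  have hσinv : 0 < (-1 / (Complex.I * σ)).im := by
    rw [show -1 / (Complex.I * σ) = Complex.I * σ⁻¹ by field_simp; simp]
    simpa using div_pos hσ (Complex.normSq_pos.2 hσ0)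
  have h := ((hasSum_jacobiTheta₂_term ((q * x + Complex.I * r * σ / q) / (Complex.I * σ))
    hσinv).mul_left (1 / (-Complex.I * (Complex.I * σ)) ^ (1 / 2 : ℂ) *
      Complex.exp (-π * Complex.I * (q * x + Complex.I * r * σ / q) ^ 2 / (Complex.I * σ))))
    |>.mul_left (Complex.exp (2 * π * Complex.I * r * x - π * r ^ 2 * σ / q ^ 2))
  rw [← jacobiTheta₂_functional_equation] at h
  refine h.congr_fun fun l => ?_
  rw [show -Complex.I * (Complex.I * σ) = σ by linear_combination -σ * Complex.I_sq, mul_assoc,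
    mul_left_comm (Complex.exp (_ - _)), jacobiTheta₂_term, ← Complex.exp_add, ← Complex.exp_add,
    mul_assoc (1 / _), ← Complex.exp_add]
  congr 2
  push_cast
  field_simp
  linear_combination r ^ 2 * σ ^ 2 * Complex.I_sq

theorem hasSum_jacobiTheta₂_rational (a : ℤ) {σ : ℂ} (hσ : 0 < σ.re) (x : ℂ) :
    HasSum (fun l : ℤ => 1 / σ ^ (1 / 2 : ℂ) *
        (quadraticGaussSum (a : ZMod q) l * Complex.exp (-π * (q * x - l) ^ 2 / σ)))
      (jacobiTheta₂ x (2 * (a / q) + Complex.I * σ / q ^ 2)) := by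
  have hq : (0 : ℝ) < q := Nat.cast_pos.2 (NeZero.pos q)
  have him : 0 < (2 * (a / q) + Complex.I * σ / q ^ 2 : ℂ).im := by
    have : (2 * (a / q) + Complex.I * σ / q ^ 2 : ℂ) =
        ((2 * (a / q) : ℝ) : ℂ) + ((1 / q ^ 2 : ℝ) : ℂ) * (Complex.I * σ) := by
      push_cast
      ring
    rw [this, Complex.add_im, Complex.ofReal_im, Complex.im_ofReal_mul, Complex.I_mul_im]
    positivity
  have hresidue (r : ℕ) := ((hasSum_jacobiTheta₂_term (q * x + Complex.I * r * σ / q)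
    (τ := Complex.I * σ) (by simpa using hσ)).mul_left
      (Complex.exp (2 * π * Complex.I * (a * r ^ 2 : ℤ) / q) *
        Complex.exp (2 * π * Complex.I * r * x - π * r ^ 2 * σ / q ^ 2))).congr_fun
    fun k => jacobiTheta₂_term_residue (q := q) a σ x k r
  rw [jacobiTheta₂,
    tsum_eq_sum_residues (q := q) (hasSum_jacobiTheta₂_term x him).summable hresidue,
    Finset.sum_congr rfl fun r _ => mul_assoc _ _ _]
  refine (hasSum_sum fun (r : Fin q) _ => (hasSum_residue_dual (q := q) hσ x r).mul_left
    (Complex.exp (2 * π * Complex.I * (a * (r : ℕ) ^ 2 : ℤ) / q))).congr_fun fun l => ?_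
  rw [quadraticGaussSum, ← sum_fin_eq_sum_zmod (q := q), Finset.sum_mul, Finset.mul_sum]
  refine Finset.sum_congr rfl fun r _ => ?_
  have hchar := ZMod.stdAddChar_coe (N := q) (a * (r : ℕ) ^ 2 + l * (r : ℕ))
  push_cast at hchar
  rw [hchar, mul_add, add_div, Complex.exp_add]
  push_cast
  ring

end GaussSum

/-! ### Normalized Dirichlet kernels -/

section DirichletKernel

/-- The Dirichlet kernel of order `M` on the circle, normalized to have value `1` at the origin. It
is the Fourier multiplier of averaging over the `2 * M + 1` points `-M, …, M`. -/
def dirichletKernel (M : ℕ) (x : UnitAddCircle) : ℂ :=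
  (2 * M + 1 : ℂ)⁻¹ * ∑ m ∈ Finset.Icc (-M : ℤ) M, fourier m x

lemma card_Icc_neg_nat (M : ℕ) : (Finset.Icc (-M : ℤ) M).card = 2 * M + 1 := by
  rw [Int.card_Icc]
  lia

lemma norm_dirichletKernel_le_one (M : ℕ) (x : UnitAddCircle) : ‖dirichletKernel M x‖ ≤ 1 := by
  have h := norm_sum_le (Finset.Icc (-M : ℤ) M) fun m => fourier m x
  simp only [fourier_apply, Circle.norm_coe, Finset.sum_const, card_Icc_neg_nat] at h
  rw [dirichletKernel, norm_mul, norm_inv, inv_mul_le_iff₀ (norm_pos_iff.2 (by norm_cast))]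
  refine h.trans_eq ?_
  norm_cast
  simp

lemma exists_coe_eq_abs_eq_norm (x : UnitAddCircle) :
    ∃ y : ℝ, (y : UnitAddCircle) = x ∧ |y| = ‖x‖ := by
  obtain ⟨y, rfl⟩ := QuotientAddGroup.mk_surjective x
  refine ⟨y - round y, ?_, (UnitAddCircle.norm_eq).symm⟩
  simp

lemma fourier_eq_exp_I_mul (m : ℤ) (y : ℝ) :
    fourier m (y : UnitAddCircle) = Complex.exp (Complex.I * (2 * π * (m * y) : ℝ)) := by
  rw [fourier_coe_apply]
  congr 1
  push_cast
  ring

lemma norm_fourier_sub_one_le (m : ℤ) (x : UnitAddCircle) :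
    ‖fourier m x - 1‖ ≤ 2 * π * (|m| * ‖x‖) := by
  obtain ⟨y, rfl, hy⟩ := exists_coe_eq_abs_eq_norm x
  rw [fourier_eq_exp_I_mul, ← hy]
  refine Real.norm_exp_I_mul_ofReal_sub_one_le.trans_eq ?_
  rw [norm_mul, Real.norm_of_nonneg (by positivity), Real.norm_eq_abs, abs_mul, Int.cast_abs]

lemma four_mul_norm_le_norm_fourier_one_sub_one (x : UnitAddCircle) :
    4 * ‖x‖ ≤ ‖fourier 1 x - 1‖ := by
  have hx : ‖x‖ ≤ 1 / 2 := by simpa using AddCircle.norm_le_half_period 1 (x := x) one_ne_zero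
  obtain ⟨y, rfl, hy⟩ := exists_coe_eq_abs_eq_norm x
  rw [fourier_eq_exp_I_mul, Complex.norm_exp_I_mul_ofReal_sub_one, norm_mul, Real.norm_two,
    Real.norm_eq_abs, ← hy]
  have h := Real.mul_abs_le_abs_sin (x := π * y) (by
    rw [abs_mul, abs_of_pos Real.pi_pos]
    nlinarith [Real.pi_pos])
  rw [abs_mul, abs_of_pos Real.pi_pos, ← mul_assoc, div_mul_cancel₀ _ Real.pi_ne_zero] at h
  rw [show 2 * π * ((1 : ℤ) * y) / 2 = π * y by push_cast; ring]
  linarith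

lemma one_sub_mul_sum_Icc_zpow {z : ℂ} (hz : z ≠ 0) (M : ℕ) :
    (1 - z) * ∑ m ∈ Finset.Icc (-M : ℤ) M, z ^ m = z ^ (-M : ℤ) - z ^ (M + 1 : ℤ) := by
  induction M with
  | zero => simp
  | succ M ih =>
    have hIcc : Finset.Icc (-((M + 1 : ℕ) : ℤ)) (M + 1 : ℕ) =
        insert (-(M + 1) : ℤ) (insert (M + 1 : ℤ) (Finset.Icc (-M : ℤ) M)) := by
      grind
    rw [hIcc, Finset.sum_insert (by grind), Finset.sum_insert (by grind), mul_add, mul_add, ih]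
    push_cast
    have hneg : z ^ (-M : ℤ) = z ^ (-(M + 1) : ℤ) * z := by
      rw [← zpow_add_one₀ hz, neg_add, neg_add_cancel_right]
    rw [zpow_add_one₀ hz (M + 1 : ℤ), hneg]
    ring

lemma norm_one_sub_dirichletKernel_le (M : ℕ) (x : UnitAddCircle) :
    ‖1 - dirichletKernel M x‖ ≤ 2 * π * (M * ‖x‖) := by
  have hM : (0 : ℝ) < 2 * M + 1 := by positivity
  have hnorm : ‖(2 * M + 1 : ℂ)‖ = 2 * M + 1 := by exact_mod_cast Real.norm_of_nonneg hM.le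
  have hsum : 1 - dirichletKernel M x =
      -((2 * M + 1 : ℂ)⁻¹ * ∑ m ∈ Finset.Icc (-M : ℤ) M, (fourier m x - 1)) := by
    have : (2 * M + 1 : ℂ) ≠ 0 := by exact_mod_cast hM.ne'
    rw [dirichletKernel, Finset.sum_sub_distrib, Finset.sum_const, card_Icc_neg_nat, nsmul_one]
    push_cast
    field_simp
    ring
  rw [hsum, norm_neg, norm_mul, norm_inv, hnorm, inv_mul_le_iff₀ hM]
  calc ‖∑ m ∈ Finset.Icc (-M : ℤ) M, (fourier m x - 1)‖
      ≤ ∑ m ∈ Finset.Icc (-M : ℤ) M, 2 * π * (M * ‖x‖) := by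
        refine norm_sum_le_of_le _ fun m hm => (norm_fourier_sub_one_le m x).trans ?_
        have : |m| ≤ M := abs_le.2 (Finset.mem_Icc.1 hm)
        gcongr
        exact_mod_cast this
    _ = (2 * M + 1) * (2 * π * (M * ‖x‖)) := by
        rw [Finset.sum_const, card_Icc_neg_nat, nsmul_eq_mul]
        push_cast
        ring

lemma mul_norm_mul_norm_dirichletKernel_le_one (M : ℕ) (x : UnitAddCircle) :
    M * ‖x‖ * ‖dirichletKernel M x‖ ≤ 1 := by
  have hM : (0 : ℝ) < 2 * M + 1 := by positivity
  have hnorm : ‖(2 * M + 1 : ℂ)‖ = 2 * M + 1 := by exact_mod_cast Real.norm_of_nonneg hM.le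
  have hz : ‖(fourier 1 x : ℂ)‖ = 1 := Circle.norm_coe _
  have hpow (m : ℤ) : (fourier m x : ℂ) = fourier 1 x ^ m := by
    rw [fourier_apply, fourier_apply, one_zsmul, AddCircle.toCircle_zsmul, Circle.coe_zpow]
  have hgeom : ‖fourier 1 x - 1‖ * ‖∑ m ∈ Finset.Icc (-M : ℤ) M, fourier m x‖ ≤ 2 := by
    rw [Finset.sum_congr rfl fun m _ => hpow m, norm_sub_rev, ← norm_mul,
      one_sub_mul_sum_Icc_zpow (norm_ne_zero_iff.1 (hz.trans_ne one_ne_zero))]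
    refine (norm_sub_le _ _).trans_eq ?_
    rw [norm_zpow, norm_zpow, hz, one_zpow, one_zpow, one_add_one_eq_two]
  set S := ‖∑ m ∈ Finset.Icc (-M : ℤ) M, fourier m x‖ with hS
  have hxS : 4 * ‖x‖ * S ≤ 2 := by
    refine le_trans ?_ hgeom
    gcongr
    exact four_mul_norm_le_norm_fourier_one_sub_one x
  have : 0 ≤ ‖x‖ * S := by positivity
  rw [dirichletKernel, norm_mul, norm_inv, hnorm, ← hS,
    show M * ‖x‖ * ((2 * M + 1 : ℝ)⁻¹ * S) = M * (‖x‖ * S) / (2 * M + 1) by ring, div_le_one hM]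
  nlinarith [M.cast_nonneg (α := ℝ)]

end DirichletKernel

/-! ### Periodized complex Gaussians -/

section PeriodicGaussian

/-- A periodized Gaussian with the complex inverse width `b` and the coefficients `G`. -/
def periodicGaussian (G : ℤ → ℂ) (b : ℂ) (y : ℝ) : ℂ :=
  ∑' l : ℤ, G l * Complex.exp (-b * ((y - l : ℝ) : ℂ) ^ 2)

/-- The constant that controls the tails of the periodized Gaussians. -/
def gaussianMass : ℝ := ∑' k : ℤ, Real.exp (-(π / 32) * (k : ℝ) ^ 2)

lemma summable_exp_neg_mul_int_sq {c : ℝ} (hc : 0 < c) :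
    Summable fun k : ℤ => Real.exp (-c * (k : ℝ) ^ 2) := by
  refine (hasSum_jacobiTheta₂_term 0 (τ := Complex.I * (c / π : ℝ)) ?_).summable.norm.congr
    fun k => ?_
  · simpa only [Complex.I_mul_im, Complex.ofReal_re] using div_pos hc Real.pi_pos
  · rw [norm_jacobiTheta₂_term, Complex.I_mul_im, Complex.ofReal_re, Complex.zero_im]
    congr 1
    field_simp
    ring

lemma gaussianMass_nonneg : 0 ≤ gaussianMass := tsum_nonneg fun _ => (Real.exp_pos _).le

lemma one_add_sq_div_eight_le_sub_sq {v : ℝ} (hv : |v| ≤ 1 / 2) {k : ℤ} (hk : k ≠ 0) :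
    (1 + (k : ℝ) ^ 2) / 8 ≤ (v - k) ^ 2 := by
  have hk1 : (1 : ℝ) ≤ |(k : ℝ)| := by exact_mod_cast Int.one_le_abs hk
  have hvk : v * k ≤ |v| * |(k : ℝ)| := (le_abs_self _).trans_eq (abs_mul _ _)
  nlinarith [sq_abs v, sq_abs (k : ℝ), abs_nonneg v]

lemma half_sq_add_sq_div_eight_le_sub_sq {v : ℝ} (hv : |v| ≤ 1 / 2) (k : ℤ) :
    v ^ 2 / 2 + (k : ℝ) ^ 2 / 8 ≤ (v - k) ^ 2 := by
  rcases eq_or_ne k 0 with rfl | hk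
  · push_cast
    linarith [sq_nonneg v]
  · have : v ^ 2 ≤ 1 / 4 := by
      rw [← sq_abs]
      nlinarith [abs_nonneg v]
    linarith [one_add_sq_div_eight_le_sub_sq hv hk]

variable {G : ℤ → ℂ} {K : ℝ} {b : ℂ}

lemma norm_gaussian_term_le (hG : ∀ l, ‖G l‖ ≤ K) (hb : π / 4 ≤ b.re) {v c : ℝ} {k l : ℤ}
    (h : c + (k : ℝ) ^ 2 / 8 ≤ (v - k) ^ 2) :
    ‖G l * Complex.exp (-b * ((v - k : ℝ) : ℂ) ^ 2)‖ ≤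
      K * Real.exp (-b.re * c) * Real.exp (-(π / 32) * (k : ℝ) ^ 2) := by
  rw [norm_mul, norm_cexp_neg_mul_sq, mul_assoc, ← Real.exp_add]
  refine mul_le_mul (hG l) (Real.exp_le_exp.2 ?_) (Real.exp_pos _).le ((norm_nonneg _).trans (hG l))
  nlinarith [sq_nonneg (k : ℝ), Real.pi_pos]

lemma periodicGaussian_eq_tsum_add_round (G : ℤ → ℂ) (b : ℂ) (y : ℝ) :
    periodicGaussian G b y = ∑' k : ℤ, G (k + round y) *
      Complex.exp (-b * ((y - round y - k : ℝ) : ℂ) ^ 2) := by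
  rw [periodicGaussian, ← (Equiv.addRight (round y)).tsum_eq]
  refine tsum_congr fun k => ?_
  simp only [Equiv.coe_addRight, Int.cast_add]
  ring_nf

lemma norm_periodicGaussian_le (hG : ∀ l, ‖G l‖ ≤ K) (hb : π / 4 ≤ b.re) (y : ℝ) :
    ‖periodicGaussian G b y‖ ≤
      K * Real.exp (-b.re * (‖(y : UnitAddCircle)‖ ^ 2 / 2)) * gaussianMass := by
  rw [periodicGaussian_eq_tsum_add_round, UnitAddCircle.norm_eq, sq_abs]
  exact tsum_of_norm_bounded ((summable_exp_neg_mul_int_sq (by positivity)).hasSum.mul_left _)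
    fun k => norm_gaussian_term_le hG hb (half_sq_add_sq_div_eight_le_sub_sq (abs_sub_round y) k)

lemma norm_periodicGaussian_sub_le (hG : ∀ l, ‖G l‖ ≤ K) (hb : π / 4 ≤ b.re) (y : ℝ) :
    ‖periodicGaussian G b y - G (round y) * Complex.exp (-b * ‖(y : UnitAddCircle)‖ ^ 2)‖ ≤
      K * Real.exp (-b.re * (1 / 8)) * gaussianMass := by
  have hK : 0 ≤ K := (norm_nonneg _).trans (hG 0)
  have hmass := (summable_exp_neg_mul_int_sq (c := π / 32) (by positivity)).hasSum
  have hterm (k : ℤ) := norm_gaussian_term_le (l := k + round y) hG hb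
    (half_sq_add_sq_div_eight_le_sub_sq (abs_sub_round y) k)
  have hzero : G (round y) * Complex.exp (-b * ‖(y : UnitAddCircle)‖ ^ 2) =
      G (0 + round y) * Complex.exp (-b * ((y - round y - (0 : ℤ) : ℝ) : ℂ) ^ 2) := by
    rw [UnitAddCircle.norm_eq, zero_add, Int.cast_zero, sub_zero, ← Complex.ofReal_pow, sq_abs,
      Complex.ofReal_pow]
  rw [periodicGaussian_eq_tsum_add_round, hzero,
    (Summable.of_norm_bounded (hmass.mul_left _).summable hterm).tsum_eq_add_tsum_ite 0,
    add_sub_cancel_left]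
  refine tsum_of_norm_bounded (hmass.mul_left _) fun k => ?_
  split_ifs with hk
  · rw [norm_zero]
    positivity
  · refine norm_gaussian_term_le hG hb ?_
    linarith [one_add_sq_div_eight_le_sub_sq (abs_sub_round y) hk]

lemma norm_exp_neg_sub_one_le {z : ℂ} (hz : 0 ≤ z.re) : ‖Complex.exp (-z) - 1‖ ≤ 2 * √‖z‖ := by
  rcases le_or_gt ‖z‖ 1 with h | h
  · have hexp := Complex.norm_exp_sub_one_le (x := -z) (by rwa [norm_neg])
    rw [norm_neg] at hexp
    refine hexp.trans (mul_le_mul_of_nonneg_left ?_ two_pos.le)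
    exact Real.le_sqrt_of_sq_le (by nlinarith [norm_nonneg z])
  · have hexp : ‖Complex.exp (-z)‖ ≤ 1 := by simpa [Complex.norm_exp] using hz
    have hsqrt : 1 ≤ √‖z‖ := Real.one_le_sqrt.2 h.le
    linarith [norm_sub_le (Complex.exp (-z)) 1, norm_one (α := ℂ)]

lemma norm_gaussian_sub_dirichletKernel_le (hb : 0 ≤ b.re) (M : ℕ) (x : UnitAddCircle) :
    ‖Complex.exp (-b * ‖x‖ ^ 2) - dirichletKernel M x‖ ≤ 2 * (√‖b‖ * ‖x‖) + 2 * π * (M * ‖x‖) := by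
  have hexp := norm_exp_neg_sub_one_le (z := b * (‖x‖ ^ 2 : ℝ)) (by
    rw [Complex.re_mul_ofReal]
    positivity)
  rw [norm_mul, Complex.norm_real, Real.norm_of_nonneg (by positivity),
    Real.sqrt_mul (norm_nonneg _), Real.sqrt_sq (norm_nonneg _), Complex.ofReal_pow,
    ← neg_mul] at hexp
  calc _ = ‖(Complex.exp (-b * ‖x‖ ^ 2) - 1) + (1 - dirichletKernel M x)‖ := by
        rw [sub_add_sub_cancel]
    _ ≤ _ := (norm_add_le _ _).trans (add_le_add hexp (norm_one_sub_dirichletKernel_le M x))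

end PeriodicGaussian

/-! ### Gaussians on a major arc -/

section ArcWidth

/-- The inverse width of the Gaussians in the theta function on the major arc around `a / q`: here
`R = Λ / q`, and `u = Λ ^ 2 * b` for the point at distance `b` from `a / q` and height
`1 / Λ ^ 2`. -/
def arcWidth (R u : ℝ) : ℂ := π * R ^ 2 / (2 * (1 - u * Complex.I))

lemma norm_one_sub_mul_I (u : ℝ) : ‖(1 - u * Complex.I : ℂ)‖ = √(1 + u ^ 2) := by
  simpa [sub_eq_add_neg] using Complex.norm_add_mul_I 1 (-u)

lemma norm_arcWidth (R u : ℝ) : ‖arcWidth R u‖ = π * R ^ 2 / (2 * √(1 + u ^ 2)) := by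
  rw [arcWidth, norm_div, norm_mul, norm_mul, norm_one_sub_mul_I, norm_pow, Complex.norm_real,
    Complex.norm_real, Complex.norm_two, Real.norm_of_nonneg Real.pi_pos.le, Real.norm_eq_abs,
    sq_abs]

lemma arcWidth_re (R u : ℝ) : (arcWidth R u).re = π * R ^ 2 / (2 * (1 + u ^ 2)) := by
  have h : arcWidth R u = (π * R ^ 2 / 2 : ℝ) * (1 - u * Complex.I)⁻¹ := by
    rw [arcWidth]
    push_cast
    field_simp
  rw [h, Complex.re_ofReal_mul, Complex.inv_re, Complex.normSq_eq_norm_sq, norm_one_sub_mul_I,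
    Real.sq_sqrt (by positivity)]
  simp
  field_simp

variable {G : ℤ → ℂ} {K R u : ℝ}

lemma pi_div_four_le_arcWidth_re (hR : 1 ≤ R) (hu : |u| ≤ R) : π / 4 ≤ (arcWidth R u).re := by
  have : u ^ 2 ≤ R ^ 2 := sq_le_sq' (neg_le_of_abs_le hu) (le_of_abs_le hu)
  rw [arcWidth_re, div_le_div_iff₀ (by positivity) (by positivity)]
  have : 1 ≤ R ^ 2 := one_le_pow₀ hR
  calc π * (2 * (1 + u ^ 2)) ≤ π * (2 * (R ^ 2 + R ^ 2)) := by gcongr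
    _ = π * R ^ 2 * 4 := by ring

lemma mul_exp_neg_pi_sq_div_four_le_one (y : ℝ) : y * Real.exp (-(π * y ^ 2 / 4)) ≤ 1 := by
  rw [Real.exp_neg, ← div_eq_mul_inv, div_le_one (Real.exp_pos _)]
  refine le_trans ?_ (Real.add_one_le_exp _)
  nlinarith [Real.pi_gt_three, sq_nonneg (y - 2 / 3), sq_nonneg y]

lemma mul_exp_neg_pi_sq_div_sixteen_le_two (y : ℝ) : y * Real.exp (-(π * y ^ 2 / 16)) ≤ 2 := by
  rw [Real.exp_neg, ← div_eq_mul_inv, div_le_iff₀ (Real.exp_pos _)]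
  refine le_trans ?_ (mul_le_mul_of_nonneg_left (Real.add_one_le_exp _) two_pos.le)
  nlinarith [Real.pi_gt_three, sq_nonneg (y - 8 / 3), sq_nonneg y]

lemma norm_periodicGaussian_arcWidth_le (hG : ∀ l, ‖G l‖ ≤ K) (hR : 1 ≤ R) (hu : |u| ≤ R) (y : ℝ) :
    ‖periodicGaussian G (arcWidth R u) y‖ ≤ gaussianMass * K := by
  have hK : 0 ≤ K := (norm_nonneg _).trans (hG 0)
  have hb := pi_div_four_le_arcWidth_re hR hu
  refine (norm_periodicGaussian_le hG hb y).trans ?_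
  rw [mul_comm]
  refine mul_le_mul_of_nonneg_left (mul_le_of_le_one_right hK (Real.exp_le_one_iff.2 ?_))
    gaussianMass_nonneg
  have : 0 ≤ (arcWidth R u).re := (by positivity : (0 : ℝ) ≤ π / 4).trans hb
  rw [neg_mul, neg_nonpos]
  positivity

lemma mul_norm_periodicGaussian_arcWidth_le (hG : ∀ l, ‖G l‖ ≤ K) (hR : 1 ≤ R) (hu : |u| ≤ R)
    (y : ℝ) :
    R * ‖(y : UnitAddCircle)‖ * ‖periodicGaussian G (arcWidth R u) y‖ ≤
      gaussianMass * K * √(1 + u ^ 2) := by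
  have hK : 0 ≤ K := (norm_nonneg _).trans (hG 0)
  have hρ : 0 < √(1 + u ^ 2) := by positivity
  set t := R * ‖(y : UnitAddCircle)‖ with ht
  have hexp : t * Real.exp (-(arcWidth R u).re * (‖(y : UnitAddCircle)‖ ^ 2 / 2)) ≤
      √(1 + u ^ 2) := by
    have h := mul_exp_neg_pi_sq_div_four_le_one (t / √(1 + u ^ 2))
    rw [div_mul_eq_mul_div, div_le_one hρ, div_pow, Real.sq_sqrt (by positivity)] at h
    refine h.trans_eq' ?_
    rw [arcWidth_re, ht]
    congr 2
    field_simp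
    ring
  calc t * ‖periodicGaussian G (arcWidth R u) y‖
      ≤ t * (K * Real.exp (-(arcWidth R u).re * (‖(y : UnitAddCircle)‖ ^ 2 / 2)) *
          gaussianMass) := by
        gcongr
        exact norm_periodicGaussian_le hG (pi_div_four_le_arcWidth_re hR hu) y
    _ = gaussianMass * K *
          (t * Real.exp (-(arcWidth R u).re * (‖(y : UnitAddCircle)‖ ^ 2 / 2))) := by ring
    _ ≤ gaussianMass * K * √(1 + u ^ 2) := by
        have := gaussianMass_nonneg
        gcongr

lemma sqrt_norm_arcWidth_le (hR : 0 ≤ R) : √‖arcWidth R u‖ ≤ 3 / 2 * R := by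
  have hρ : 1 ≤ √(1 + u ^ 2) := Real.one_le_sqrt.2 (le_add_of_nonneg_right (sq_nonneg u))
  rw [norm_arcWidth, Real.sqrt_le_iff]
  refine ⟨by positivity, ?_⟩
  rw [div_le_iff₀ (by positivity)]
  nlinarith [Real.pi_lt_four, sq_nonneg R]

lemma norm_periodicGaussian_arcWidth_sub_le (hG : ∀ l, ‖G l‖ ≤ K) (hR : 1 ≤ R) (hu : |u| ≤ R)
    (y : ℝ) :
    ‖periodicGaussian G (arcWidth R u) y - G (round y) * dirichletKernel ⌊R⌋₊ y‖ ≤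
      (2 * gaussianMass + 11) * K * (R * ‖(y : UnitAddCircle)‖ + √(1 + u ^ 2) / R) := by
  have hK : 0 ≤ K := (norm_nonneg _).trans (hG 0)
  have hR0 : 0 < R := one_pos.trans_le hR
  have hb := pi_div_four_le_arcWidth_re hR hu
  have htail : Real.exp (-(arcWidth R u).re * (1 / 8)) ≤ 2 * (√(1 + u ^ 2) / R) := by
    have h := mul_exp_neg_pi_sq_div_sixteen_le_two (R / √(1 + u ^ 2))
    rw [div_mul_eq_mul_div, div_le_iff₀ (by positivity), div_pow, Real.sq_sqrt (by positivity)] at h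
    rw [← mul_div_assoc 2, le_div_iff₀ hR0, mul_comm]
    refine h.trans_eq' ?_
    rw [arcWidth_re]
    congr 2
    field_simp
    ring
  have hmain : ‖Complex.exp (-arcWidth R u * ‖(y : UnitAddCircle)‖ ^ 2) -
      dirichletKernel ⌊R⌋₊ y‖ ≤ 11 * (R * ‖(y : UnitAddCircle)‖) := by
    have h := norm_gaussian_sub_dirichletKernel_le
      ((by positivity : (0 : ℝ) ≤ π / 4).trans hb) ⌊R⌋₊ y
    have hfloor : ⌊R⌋₊ * ‖(y : UnitAddCircle)‖ ≤ R * ‖(y : UnitAddCircle)‖ := by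
      gcongr
      exact Nat.floor_le hR0.le
    have hsqrt : √‖arcWidth R u‖ * ‖(y : UnitAddCircle)‖ ≤ 3 / 2 * R * ‖(y : UnitAddCircle)‖ := by
      gcongr
      exact sqrt_norm_arcWidth_le hR0.le
    have hpi : 2 * π * (⌊R⌋₊ * ‖(y : UnitAddCircle)‖) ≤ 2 * 4 * (R * ‖(y : UnitAddCircle)‖) := by
      gcongr
      exact Real.pi_lt_four.le
    linarith
  calc _ = ‖(periodicGaussian G (arcWidth R u) y -
            G (round y) * Complex.exp (-arcWidth R u * ‖(y : UnitAddCircle)‖ ^ 2)) +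
          G (round y) * (Complex.exp (-arcWidth R u * ‖(y : UnitAddCircle)‖ ^ 2) -
            dirichletKernel ⌊R⌋₊ y)‖ := by
        rw [mul_sub, sub_add_sub_cancel]
    _ ≤ K * (2 * (√(1 + u ^ 2) / R)) * gaussianMass + K * (11 * (R * ‖(y : UnitAddCircle)‖)) := by
        have := gaussianMass_nonneg
        refine (norm_add_le _ _).trans (add_le_add ?_ ?_)
        · exact (norm_periodicGaussian_sub_le hG hb y).trans (by gcongr)
        · rw [norm_mul]
          gcongr
          exact hG _
    _ ≤ _ := by
        have h1 : 0 ≤ K * gaussianMass * (R * ‖(y : UnitAddCircle)‖) := by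
          have := gaussianMass_nonneg
          positivity
        have h2 : 0 ≤ K * (√(1 + u ^ 2) / R) := by positivity
        nlinarith

lemma norm_mul_dirichletKernel_le (hG : ∀ l, ‖G l‖ ≤ K) (l : ℤ) (M : ℕ) (x : UnitAddCircle) :
    ‖G l * dirichletKernel M x‖ ≤ K := by
  rw [norm_mul]
  exact mul_le_of_le_one_right (norm_nonneg _) (norm_dirichletKernel_le_one M x) |>.trans (hG l)

lemma mul_norm_mul_dirichletKernel_le (hG : ∀ l, ‖G l‖ ≤ K) (hR : 1 ≤ R) (l : ℤ)
    (x : UnitAddCircle) :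
    R * ‖x‖ * ‖G l * dirichletKernel ⌊R⌋₊ x‖ ≤ 2 * K := by
  have hK : 0 ≤ K := (norm_nonneg _).trans (hG l)
  have hfloor : R ≤ 2 * ⌊R⌋₊ := by
    have h1 : (1 : ℝ) ≤ ⌊R⌋₊ := by exact_mod_cast Nat.floor_pos.2 hR
    linarith [Nat.lt_floor_add_one R]
  calc R * ‖x‖ * ‖G l * dirichletKernel ⌊R⌋₊ x‖
      = ‖G l‖ * (R * (‖x‖ * ‖dirichletKernel ⌊R⌋₊ x‖)) := by rw [norm_mul]; ring
    _ ≤ K * (2 * ⌊R⌋₊ * (‖x‖ * ‖dirichletKernel ⌊R⌋₊ x‖)) := by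
        gcongr
        exact hG l
    _ = K * (2 * (⌊R⌋₊ * ‖x‖ * ‖dirichletKernel ⌊R⌋₊ x‖)) := by ring
    _ ≤ K * (2 * 1) := by
        gcongr
        exact mul_norm_mul_norm_dirichletKernel_le_one _ _
    _ = 2 * K := by ring

end ArcWidth

/-! ### Products of theta functions on a major arc -/

section MajorArc

lemma norm_prod_sub_prod_le {ι : Type*} (s : Finset ι) {f g : ι → ℂ} {K D : ℝ}
    (hf : ∀ i ∈ s, ‖f i‖ ≤ K) (hg : ∀ i ∈ s, ‖g i‖ ≤ K) (hfg : ∀ i ∈ s, ‖f i - g i‖ ≤ K * D) :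
    ‖∏ i ∈ s, f i - ∏ i ∈ s, g i‖ ≤ s.card * (K ^ s.card * D) := by
  induction s using Finset.cons_induction with
  | empty => simp
  | cons a s ha ih =>
    simp only [Finset.forall_mem_cons] at hf hg hfg
    have hK : 0 ≤ K := (norm_nonneg _).trans hf.1
    have hprod : ‖∏ i ∈ s, g i‖ ≤ K ^ s.card := by
      rw [norm_prod]
      exact (Finset.prod_le_prod (fun _ _ => norm_nonneg _) hg.2).trans_eq (Finset.prod_const K)
    rw [Finset.prod_cons, Finset.prod_cons, Finset.card_cons]
    calc _ = ‖f a * (∏ i ∈ s, f i - ∏ i ∈ s, g i) + (f a - g a) * ∏ i ∈ s, g i‖ := by ring_nf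
      _ ≤ K * (s.card * (K ^ s.card * D)) + K * D * K ^ s.card := by
        refine (norm_add_le _ _).trans ?_
        rw [norm_mul, norm_mul]
        have := (norm_nonneg _).trans hfg.1
        gcongr
        exacts [hf.1, ih hf.2 hg.2 hfg.2, hfg.1]
      _ = _ := by
        push_cast
        ring

lemma mul_norm_prod_le {ι : Type*} [Fintype ι] {f : ι → ℂ} {K ρ t : ℝ} (ht : 0 ≤ t)
    (hf : ∀ i, ‖f i‖ ≤ K) (i : ι) (hi : t * ‖f i‖ ≤ K * ρ) :
    t * ‖∏ i, f i‖ ≤ K ^ Fintype.card ι * ρ := by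
  classical
  have : 0 ≤ K := (norm_nonneg _).trans (hf i)
  have hrest : ∏ j ∈ Finset.univ.erase i, ‖f j‖ ≤ K ^ (Fintype.card ι - 1) := by
    rw [← Finset.card_univ, ← Finset.card_erase_of_mem (Finset.mem_univ i)]
    exact (Finset.prod_le_prod (fun _ _ => norm_nonneg _) fun j _ => hf j).trans_eq
      (Finset.prod_const K)
  rw [norm_prod, ← Finset.mul_prod_erase _ _ (Finset.mem_univ i), ← mul_assoc,
    ← Nat.sub_add_cancel (Fintype.card_pos_iff.2 ⟨i⟩), pow_succ']
  calc t * ‖f i‖ * ∏ j ∈ Finset.univ.erase i, ‖f j‖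
      ≤ K * ρ * K ^ (Fintype.card ι - 1) := by
        have : 0 ≤ K * ρ := (by positivity : 0 ≤ t * ‖f i‖).trans hi
        gcongr
    _ = _ := by ring

/-- The distance in the maximum norm from `q * x` to the integer lattice. -/
def rationalDist {ι : Type*} [Fintype ι] (q : ℕ) (x : ι → ℝ) : ℝ :=
  ‖fun i => ((q * x i : ℝ) : UnitAddCircle)‖

/-- The integrable weight that majorizes the theta functions along a major arc. -/
def arcWeight (u : ℝ) : ℝ := (1 + u ^ 2) ^ (-(3 / 4) : ℝ)

/-- The parameter `σ` for which `a / q + b + i / Λ ^ 2` is `a / q + i * σ / (2 * q ^ 2)`, where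
`R = Λ / q` and `u = Λ ^ 2 * b`. -/
def arcScale (R u : ℝ) : ℂ := 2 * (1 - u * Complex.I) / R ^ 2

/-- The factor in front of the Gaussians in the product of `d` theta functions on a major arc. -/
def arcPrefactor (d : ℕ) (R u : ℝ) : ℂ := (1 / arcScale R u ^ (1 / 2 : ℂ)) ^ d

/-- The Fourier transform of the Gaussian `exp (2 * π * i * z * |m| ^ 2)` on `ℤ ^ d`. -/
def thetaProduct {d : ℕ} (z : ℂ) (x : Fin d → ℝ) : ℂ := ∏ i, jacobiTheta₂ (x i) (2 * z)

/-- The model of `thetaProduct`, up to `arcPrefactor`, on the major arc around `a / q`: a product of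
Gauss sums and of Dirichlet kernels of order `M` at `q * x`. -/
def majorArcSymbol {d : ℕ} (q : ℕ) [NeZero q] (a : ℤ) (M : ℕ) (x : Fin d → ℝ) : ℂ :=
  ∏ i, (quadraticGaussSum (a : ZMod q) (round (q * x i) : ℤ) *
    dirichletKernel M (q * x i : ℝ))

lemma arcWeight_eq (u : ℝ) : arcWeight u = (√√(1 + u ^ 2) ^ 3)⁻¹ := by
  have : 0 ≤ 1 + u ^ 2 := by positivity
  rw [arcWeight, Real.rpow_neg this, Real.sqrt_eq_rpow, Real.sqrt_eq_rpow, ← Real.rpow_mul this,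
    ← Real.rpow_mul_natCast this]
  norm_num

lemma arcScale_re_pos {R : ℝ} (hR : 0 < R) (u : ℝ) : 0 < (arcScale R u).re := by
  rw [arcScale, ← Complex.ofReal_pow, Complex.div_ofReal_re]
  refine div_pos ?_ (by positivity)
  simp

lemma pi_div_arcScale (R u : ℝ) : π / arcScale R u = arcWidth R u := by
  rw [arcScale, arcWidth, div_div_eq_mul_div]

lemma measurable_arcPrefactor (d : ℕ) (R : ℝ) : Measurable (arcPrefactor d R) := by
  unfold arcPrefactor arcScale
  fun_prop

variable {d : ℕ} {R u : ℝ}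

lemma norm_one_div_arcScale_cpow_le (hR : 0 < R) (u : ℝ) :
    ‖1 / arcScale R u ^ (1 / 2 : ℂ)‖ ≤ R / √√(1 + u ^ 2) := by
  have hsq : ‖arcScale R u ^ (1 / 2 : ℂ)‖ ^ 2 = 2 * √(1 + u ^ 2) / R ^ 2 := by
    rw [← norm_pow, ← Complex.cpow_nat_mul, Nat.cast_ofNat, mul_one_div_cancel two_ne_zero,
      Complex.cpow_one, arcScale, norm_div, norm_mul, norm_one_sub_mul_I, Complex.norm_two,
      norm_pow, Complex.norm_real, Real.norm_of_nonneg hR.le]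
  rw [norm_div, norm_one, ← one_div_div (√√(1 + u ^ 2)) R]
  refine one_div_le_one_div_of_le (by positivity) (le_of_pow_le_pow_left₀ two_ne_zero
    (norm_nonneg (arcScale R u ^ (1 / 2 : ℂ))) ?_)
  rw [hsq, div_pow, Real.sq_sqrt (by positivity)]
  gcongr
  linarith [Real.sqrt_nonneg (1 + u ^ 2)]

lemma sqrt_mul_norm_arcPrefactor_le (hd : 5 ≤ d) (hR : 0 < R) (u : ℝ) :
    √(1 + u ^ 2) * ‖arcPrefactor d R u‖ ≤ R ^ d * arcWeight u := by
  have hr : 1 ≤ √√(1 + u ^ 2) := by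
    simp only [Real.one_le_sqrt, le_add_iff_nonneg_right, sq_nonneg]
  rw [arcPrefactor, norm_pow, arcWeight_eq]
  calc √(1 + u ^ 2) * ‖1 / arcScale R u ^ (1 / 2 : ℂ)‖ ^ d
      ≤ √√(1 + u ^ 2) ^ 2 * (R / √√(1 + u ^ 2)) ^ d := by
        rw [Real.sq_sqrt (by positivity)]
        gcongr
        exact norm_one_div_arcScale_cpow_le hR u
    _ ≤ √√(1 + u ^ 2) ^ 2 * (R ^ d / √√(1 + u ^ 2) ^ 5) := by
        rw [div_pow]
        gcongr
    _ = R ^ d * (√√(1 + u ^ 2) ^ 3)⁻¹ := by field_simp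

lemma norm_arcPrefactor_le (hd : 5 ≤ d) (hR : 0 < R) (u : ℝ) :
    ‖arcPrefactor d R u‖ ≤ R ^ d * arcWeight u :=
  (le_mul_of_one_le_left (norm_nonneg _)
    (Real.one_le_sqrt.2 (le_add_of_nonneg_right (sq_nonneg u)))).trans
    (sqrt_mul_norm_arcPrefactor_le hd hR u)

lemma le_two_mul_of_le_add_of_mul_le {A T r X : ℝ} (hA : 0 ≤ A) (hT : 0 ≤ T) (hr : 0 ≤ r)
    (h₁ : X ≤ A * (T + r)) (h₂ : T * X ≤ A) : X ≤ 2 * A * (T / (1 + T ^ 2) + r) := by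
  have hAr : 0 ≤ A * r := by positivity
  rcases le_or_gt T 1 with h | h
  · have hdiv : T / 2 ≤ T / (1 + T ^ 2) :=
      div_le_div_of_nonneg_left hT (by positivity) (by nlinarith)
    nlinarith
  · have hX : X ≤ A / T := by
      rw [le_div_iff₀ (by linarith)]
      linarith
    have hdiv : A / T ≤ 2 * A * (T / (1 + T ^ 2)) := by
      rw [mul_div_assoc', div_le_div_iff₀ (by linarith) (by positivity)]
      nlinarith [mul_nonneg hA (by nlinarith : (0 : ℝ) ≤ T ^ 2 - 1)]
    linarith

variable {q : ℕ} {a : ℤ} {Λ b : ℝ}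

lemma abs_mul_sq_le_div (hΛ : 0 < Λ) (hb : |b| ≤ 1 / (q * Λ)) : |b * Λ ^ 2| ≤ Λ / q := by
  rw [abs_mul, abs_of_nonneg (sq_nonneg Λ)]
  calc |b| * Λ ^ 2 ≤ 1 / (q * Λ) * Λ ^ 2 := by gcongr
    _ = Λ / q := by field_simp

variable [NeZero q]

lemma norm_quadraticGaussSum_le (ha : IsUnit (a : ZMod q)) (l : ℤ) :
    ‖quadraticGaussSum (a : ZMod q) l‖ ≤ √(2 * q) :=
  Real.le_sqrt_of_sq_le (norm_sq_quadraticGaussSum_le ha l)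

lemma jacobiTheta₂_majorArc (a : ℤ) (hΛ : 0 < Λ) (b x : ℝ) :
    jacobiTheta₂ x (2 * (a / q + (b + Complex.I / Λ ^ 2))) =
      1 / arcScale (Λ / q) (b * Λ ^ 2) ^ (1 / 2 : ℂ) *
        periodicGaussian (fun l => quadraticGaussSum (a : ZMod q) l)
          (arcWidth (Λ / q) (b * Λ ^ 2)) (q * x) := by
  have hq : (q : ℂ) ≠ 0 := by exact_mod_cast NeZero.ne q
  have hΛ' : (Λ : ℂ) ≠ 0 := by exact_mod_cast hΛ.ne'
  have hτ : 2 * (a / q + (b + Complex.I / Λ ^ 2)) =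
      2 * (a / q) + Complex.I * arcScale (Λ / q) (b * Λ ^ 2) / q ^ 2 := by
    rw [arcScale]
    push_cast
    field_simp
    linear_combination (b * Λ ^ 2 * q : ℂ) * Complex.I_sq
  have hσ : 0 < (arcScale (Λ / q) (b * Λ ^ 2)).re :=
    arcScale_re_pos (div_pos hΛ (Nat.cast_pos.2 (NeZero.pos q))) _
  rw [hτ, ← (hasSum_jacobiTheta₂_rational a hσ x).tsum_eq, tsum_mul_left, periodicGaussian,
    ← pi_div_arcScale]
  congr 1
  refine tsum_congr fun l => ?_
  congr 2
  push_cast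
  ring

lemma rationalDist_nonneg (q : ℕ) (x : Fin d → ℝ) : 0 ≤ rationalDist q x := norm_nonneg _

lemma measurable_rationalDist (q : ℕ) : Measurable (rationalDist q : (Fin d → ℝ) → ℝ) := by
  unfold rationalDist
  fun_prop

lemma norm_le_rationalDist (q : ℕ) (x : Fin d → ℝ) (i : Fin d) :
    ‖((q * x i : ℝ) : UnitAddCircle)‖ ≤ rationalDist q x :=
  norm_le_pi_norm (fun i => ((q * x i : ℝ) : UnitAddCircle)) i

lemma exists_norm_eq_rationalDist [NeZero d] (q : ℕ) (x : Fin d → ℝ) :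
    ∃ i, ‖((q * x i : ℝ) : UnitAddCircle)‖ = rationalDist q x := by
  obtain ⟨i, -, hi⟩ := Finset.exists_mem_eq_sup' Finset.univ_nonempty
    fun i => ‖((q * x i : ℝ) : UnitAddCircle)‖₊
  refine ⟨i, ?_⟩
  rw [rationalDist, ← coe_nnnorm, ← hi, Finset.sup'_eq_sup, Pi.norm_def]

/-- The constant in the approximation of `d`-fold products of theta functions on a major arc. -/
def thetaConst (d : ℕ) : ℝ := 2 * (d + 2) * (√2 * (2 * gaussianMass + 11)) ^ d

lemma thetaConst_nonneg (d : ℕ) : 0 ≤ thetaConst d := by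
  have := gaussianMass_nonneg
  unfold thetaConst
  positivity

lemma thetaProduct_majorArc (a : ℤ) (hΛ : 0 < Λ) (b : ℝ) (x : Fin d → ℝ) :
    thetaProduct (a / q + (b + Complex.I / Λ ^ 2)) x =
      arcPrefactor d (Λ / q) (b * Λ ^ 2) * ∏ i, periodicGaussian
        (fun l => quadraticGaussSum (a : ZMod q) l) (arcWidth (Λ / q) (b * Λ ^ 2)) (q * x i) := by
  simp only [thetaProduct, jacobiTheta₂_majorArc a hΛ, Finset.prod_mul_distrib, Finset.prod_const,
    Finset.card_univ, Fintype.card_fin, arcPrefactor]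

lemma norm_arcPrefactor_mul_le (hd : 5 ≤ d) (hΛ : 0 < Λ) (u : ℝ) :
    ‖arcPrefactor d (Λ / q) u‖ *
      (2 * ((d + 2) * (((2 * gaussianMass + 11) * √(2 * q)) ^ d * √(1 + u ^ 2)))) ≤
      thetaConst d * (Λ / √q) ^ d * arcWeight u := by
  have hq : (0 : ℝ) < q := Nat.cast_pos.2 (NeZero.pos q)
  have hR : 0 < Λ / q := by positivity
  have hmass := gaussianMass_nonneg
  have hsqrt : √(2 * q) * (Λ / q) = √2 * (Λ / √q) := by
    rw [Real.sqrt_mul zero_le_two]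
    field_simp
    rw [Real.sq_sqrt hq.le]
  set A := 2 * gaussianMass + 11
  have : 0 ≤ A := by positivity
  calc _ = 2 * (d + 2) * (A * √(2 * q)) ^ d * (√(1 + u ^ 2) * ‖arcPrefactor d (Λ / q) u‖) := by
        ring
    _ ≤ 2 * (d + 2) * (A * √(2 * q)) ^ d * ((Λ / q) ^ d * arcWeight u) :=
      mul_le_mul_of_nonneg_left (sqrt_mul_norm_arcPrefactor_le hd hR u) (by positivity)
    _ = 2 * (d + 2) * A ^ d * (√(2 * q) * (Λ / q)) ^ d * arcWeight u := by
      rw [mul_pow, mul_pow]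
      ring
    _ = thetaConst d * (Λ / √q) ^ d * arcWeight u := by
      rw [hsqrt, mul_pow, thetaConst, mul_pow]
      ring

lemma mul_norm_prod_periodicGaussian_le [NeZero d] {G : ℤ → ℂ} {K : ℝ} (hG : ∀ l, ‖G l‖ ≤ K)
    (hR : 1 ≤ R) (hu : |u| ≤ R) (q : ℕ) (x : Fin d → ℝ) :
    R * rationalDist q x * ‖∏ i, periodicGaussian G (arcWidth R u) (q * x i)‖ ≤
      ((2 * gaussianMass + 11) * K) ^ d * √(1 + u ^ 2) := by
  have hK : 0 ≤ K := (norm_nonneg _).trans (hG 0)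
  have hmass := gaussianMass_nonneg
  have hconst : gaussianMass * K ≤ (2 * gaussianMass + 11) * K := by nlinarith
  obtain ⟨i, hi⟩ := exists_norm_eq_rationalDist q x
  refine (mul_norm_prod_le (by positivity [rationalDist_nonneg q x])
    (fun j => (norm_periodicGaussian_arcWidth_le hG hR hu _).trans hconst) i
    (ρ := √(1 + u ^ 2)) ?_).trans_eq (by rw [Fintype.card_fin])
  rw [← hi]
  exact (mul_norm_periodicGaussian_arcWidth_le hG hR hu _).trans (by gcongr)

lemma mul_norm_majorArcSymbol_le [NeZero d] (ha : IsUnit (a : ZMod q)) (hR : 1 ≤ R)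
    (x : Fin d → ℝ) :
    R * rationalDist q x * ‖majorArcSymbol q a ⌊R⌋₊ x‖ ≤
      ((2 * gaussianMass + 11) * √(2 * q)) ^ d := by
  have hG := norm_quadraticGaussSum_le ha
  have hmass := gaussianMass_nonneg
  have hconst : 2 * √(2 * q) ≤ (2 * gaussianMass + 11) * √(2 * q) := by gcongr; linarith
  obtain ⟨i, hi⟩ := exists_norm_eq_rationalDist q x
  refine (mul_norm_prod_le (by positivity [rationalDist_nonneg q x])
    (fun j => (norm_mul_dirichletKernel_le hG _ _ _).trans
      ((le_mul_of_one_le_left (Real.sqrt_nonneg _) one_le_two).trans hconst)) i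
    (ρ := 1) ?_).trans_eq (by rw [Fintype.card_fin, mul_one])
  rw [← hi, mul_one]
  exact (mul_norm_mul_dirichletKernel_le hG hR _ _).trans hconst

lemma norm_prod_periodicGaussian_sub_le (ha : IsUnit (a : ZMod q)) (hR : 1 ≤ R) (hu : |u| ≤ R)
    (x : Fin d → ℝ) :
    ‖∏ i, periodicGaussian (fun l => quadraticGaussSum (a : ZMod q) l) (arcWidth R u) (q * x i) -
        majorArcSymbol q a ⌊R⌋₊ x‖ ≤
      d * (((2 * gaussianMass + 11) * √(2 * q)) ^ d *
        (R * rationalDist q x + √(1 + u ^ 2) / R)) := by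
  have hG := norm_quadraticGaussSum_le ha
  have hmass := gaussianMass_nonneg
  have hK := Real.sqrt_nonneg (2 * q)
  refine (norm_prod_sub_prod_le Finset.univ (K := (2 * gaussianMass + 11) * √(2 * q))
    (D := R * rationalDist q x + √(1 + u ^ 2) / R)
    (fun i _ => ?_) (fun i _ => ?_) fun i _ => ?_).trans_eq (by simp)
  · exact (norm_periodicGaussian_arcWidth_le hG hR hu _).trans (by nlinarith)
  · exact (norm_mul_dirichletKernel_le hG _ _ _).trans (by nlinarith)
  · refine (norm_periodicGaussian_arcWidth_sub_le hG hR hu _).trans ?_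
    gcongr
    exact norm_le_rationalDist q x i

theorem mul_norm_thetaProduct_le (hd : 5 ≤ d) (ha : IsUnit (a : ZMod q)) (hq : q ≤ Λ)
    (hb : |b| ≤ 1 / (q * Λ)) (x : Fin d → ℝ) :
    Λ / q * rationalDist q x * ‖thetaProduct (a / q + (b + Complex.I / Λ ^ 2)) x‖ ≤
      thetaConst d * (Λ / √q) ^ d * arcWeight (b * Λ ^ 2) := by
  have : NeZero d := ⟨by lia⟩
  have hq0 : (0 : ℝ) < q := Nat.cast_pos.2 (NeZero.pos q)
  have hΛ : 0 < Λ := hq0.trans_le hq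
  have hR : 1 ≤ Λ / q := (one_le_div hq0).2 hq
  have hG := norm_quadraticGaussSum_le ha
  have hprod := mul_norm_prod_periodicGaussian_le hG hR (abs_mul_sq_le_div hΛ hb) q x
  refine le_trans ?_ (norm_arcPrefactor_mul_le hd hΛ (b * Λ ^ 2))
  rw [thetaProduct_majorArc a hΛ, norm_mul, mul_left_comm]
  refine mul_le_mul_of_nonneg_left (hprod.trans ?_) (norm_nonneg _)
  rw [← mul_assoc 2]
  refine le_mul_of_one_le_left ?_ (by linarith [d.cast_nonneg (α := ℝ)])
  have := gaussianMass_nonneg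
  positivity

theorem norm_thetaProduct_sub_le (hd : 5 ≤ d) (ha : IsUnit (a : ZMod q)) (hq : q ≤ Λ)
    (hb : |b| ≤ 1 / (q * Λ)) (x : Fin d → ℝ) :
    ‖thetaProduct (a / q + (b + Complex.I / Λ ^ 2)) x -
        arcPrefactor d (Λ / q) (b * Λ ^ 2) * majorArcSymbol q a ⌊Λ / q⌋₊ x‖ ≤
      thetaConst d * (Λ / √q) ^ d * arcWeight (b * Λ ^ 2) *
        (Λ / q * rationalDist q x / (1 + (Λ / q * rationalDist q x) ^ 2) + q / Λ) := by
  have : NeZero d := ⟨by lia⟩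
  have hq0 : (0 : ℝ) < q := Nat.cast_pos.2 (NeZero.pos q)
  have hΛ : 0 < Λ := hq0.trans_le hq
  have hR : 1 ≤ Λ / q := (one_le_div hq0).2 hq
  have hu := abs_mul_sq_le_div hΛ hb
  have hmass := gaussianMass_nonneg
  have hsub := norm_prod_periodicGaussian_sub_le ha hR hu x
  have hG := norm_quadraticGaussSum_le ha
  have hprod := mul_norm_prod_periodicGaussian_le hG hR hu q x
  have hsymbol := mul_norm_majorArcSymbol_le ha hR x
  rw [thetaProduct_majorArc a hΛ, ← mul_sub, norm_mul]
  set P := ∏ i, periodicGaussian (fun l => quadraticGaussSum (a : ZMod q) l)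
    (arcWidth (Λ / q) (b * Λ ^ 2)) (q * x i)
  set E := majorArcSymbol q a ⌊Λ / q⌋₊ x
  set T := Λ / q * rationalDist q x
  set B := ((2 * gaussianMass + 11) * √(2 * q)) ^ d
  have hT : 0 ≤ T := mul_nonneg (by positivity) (rationalDist_nonneg q x)
  have hB : 0 ≤ B := by positivity
  have hρ : 1 ≤ √(1 + (b * Λ ^ 2) ^ 2) := Real.one_le_sqrt.2 (le_add_of_nonneg_right (sq_nonneg _))
  have hnear : ‖P - E‖ ≤ (d + 2) * (B * √(1 + (b * Λ ^ 2) ^ 2)) * (T + q / Λ) := by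
    refine hsub.trans ?_
    rw [div_div_eq_mul_div, mul_div_assoc, mul_assoc (d + 2 : ℝ), mul_assoc B]
    gcongr
    · linarith
    · rw [mul_add]
      gcongr
      exact le_mul_of_one_le_left hT hρ
  have hfar : T * ‖P - E‖ ≤ (d + 2) * (B * √(1 + (b * Λ ^ 2) ^ 2)) := by
    calc T * ‖P - E‖ ≤ T * ‖P‖ + T * ‖E‖ := by
          rw [← mul_add]
          exact mul_le_mul_of_nonneg_left (norm_sub_le P E) hT
      _ ≤ 2 * (B * √(1 + (b * Λ ^ 2) ^ 2)) := by
          linarith [le_mul_of_one_le_right hB hρ]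
      _ ≤ _ := by
          gcongr
          linarith [d.cast_nonneg (α := ℝ)]
  have hPE := le_two_mul_of_le_add_of_mul_le (by positivity) hT (by positivity) hnear hfar
  refine (mul_le_mul_of_nonneg_left hPE (norm_nonneg _)).trans ?_
  rw [← mul_assoc]
  exact mul_le_mul_of_nonneg_right (norm_arcPrefactor_mul_le hd hΛ _) (by positivity)

end MajorArc

/-! ### A maximal inequality for averages over dilated boxes -/

section CauchySchwarz

lemma sq_lintegral_mul_le {α : Type*} [MeasurableSpace α] {μ : MeasureTheory.Measure α}
    {f g : α → ℝ≥0∞} (hf : AEMeasurable f μ) (hg : AEMeasurable g μ) :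
    (∫⁻ x, f x * g x ∂μ) ^ 2 ≤ (∫⁻ x, f x ^ 2 ∂μ) * ∫⁻ x, g x ^ 2 ∂μ := by
  have hsq (X : ℝ≥0∞) : (X ^ (1 / 2 : ℝ)) ^ 2 = X := by
    rw [← ENNReal.rpow_mul_natCast]
    norm_num
  have h := ENNReal.lintegral_mul_le_Lp_mul_Lq μ Real.HolderConjugate.two_two hf hg
  simp only [Pi.mul_apply, ENNReal.rpow_two] at h
  simpa only [mul_pow, hsq] using pow_le_pow_left₀ zero_le h 2

lemma sq_tsum_mul_le {ι : Type*} (f g : ι → ℝ≥0∞) :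
    (∑' i, f i * g i) ^ 2 ≤ (∑' i, f i ^ 2) * ∑' i, g i ^ 2 := by
  let : MeasurableSpace ι := ⊤
  simpa only [MeasureTheory.lintegral_count] using
    sq_lintegral_mul_le (μ := MeasureTheory.Measure.count) (f := f) (g := g)
      measurable_from_top.aemeasurable measurable_from_top.aemeasurable

end CauchySchwarz

section MaximalKernel

/-- The operator which uses, at each point `n` of the finite set `B`, the kernel `K (M n)`, and
vanishes off `B`: a linearisation of the maximal operator `g ↦ ⨆ M, ∑' w, K M n w * g w`. -/
def linearizedMaximal {X : Type*} (K : ℕ → X → X → ℝ≥0∞) (B : Finset X) (M : X → ℕ)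
    (g : X → ℝ≥0∞) : X → ℝ≥0∞ :=
  Set.indicator B fun n => ∑' w, K (M n) n w * g w

variable {X : Type*} {K : ℕ → X → X → ℝ≥0∞} {C : ℝ≥0∞} {s : ℕ → ℕ}

lemma sq_tsum_mul_tsum_le (L : X → X → ℝ≥0∞) (u g : X → ℝ≥0∞) :
    (∑' n, u n * ∑' w, L n w * g w) ^ 2 ≤
      (∑' n, ∑' n', u n * u n' * ∑' w, L n w * L n' w) * ∑' w, g w ^ 2 := by
  have hswap : ∑' n, u n * ∑' w, L n w * g w = ∑' w, (∑' n, u n * L n w) * g w := by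
    simp_rw [← ENNReal.tsum_mul_left, ← ENNReal.tsum_mul_right, ← mul_assoc]
    exact ENNReal.tsum_comm
  have hsq : ∑' w, (∑' n, u n * L n w) ^ 2 = ∑' n, ∑' n', u n * u n' * ∑' w, L n w * L n' w := by
    simp_rw [sq, ← ENNReal.tsum_mul_right, ← ENNReal.tsum_mul_left]
    rw [ENNReal.tsum_comm]
    refine tsum_congr fun n => ?_
    rw [ENNReal.tsum_comm]
    exact tsum_congr fun n' => tsum_congr fun w => by ring
  rw [hswap, ← hsq]
  exact sq_tsum_mul_le _ _

lemma tsum_tsum_mul_add_swap (L : X → X → ℝ≥0∞) (u : X → ℝ≥0∞) :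
    ∑' n, ∑' n', u n * u n' * (L n n' + L n' n) = 2 * ∑' n, u n * ∑' n', L n n' * u n' := by
  have hsplit (n n' : X) : u n * u n' * (L n n' + L n' n) =
      u n * (L n n' * u n') + u n' * (L n' n * u n) := by ring
  simp_rw [hsplit, ENNReal.tsum_add]
  rw [ENNReal.tsum_comm (f := fun n n' => u n' * (L n' n * u n)), two_mul]
  simp_rw [ENNReal.tsum_mul_left]

-- The `T T*` argument: almost orthogonality turns two averages into one average at scale `s`.
lemma sq_tsum_sq_linearizedMaximal_le
    (hK : ∀ i j, j ≤ i → ∀ n n', ∑' w, K i n w * K j n' w ≤ C * K (s i) n n')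
    (B : Finset X) (M : X → ℕ) (g : X → ℝ≥0∞) :
    (∑' n, linearizedMaximal K B M g n ^ 2) ^ 2 ≤
      2 * C * (∑' n, linearizedMaximal K B M g n *
        linearizedMaximal K B (s ∘ M) (linearizedMaximal K B M g) n) * ∑' w, g w ^ 2 := by
  set u := linearizedMaximal K B M g with hu
  have hmul (N : X → ℕ) (h : X → ℝ≥0∞) (n : X) :
      u n * linearizedMaximal K B N h n = u n * ∑' w, K (N n) n w * h w := by
    by_cases hn : n ∈ B <;> simp [hu, linearizedMaximal, hn]
  have hcomp (n n' : X) : ∑' w, K (M n) n w * K (M n') n' w ≤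
      C * (K (s (M n)) n n' + K (s (M n')) n' n) := by
    rcases le_total (M n') (M n) with h | h
    · exact (hK _ _ h n n').trans (by gcongr; exact le_self_add)
    · simp_rw [mul_comm (K (M n) n _)]
      exact (hK _ _ h n' n).trans (by gcongr; exact le_add_self)
  calc (∑' n, u n ^ 2) ^ 2 = (∑' n, u n * ∑' w, K (M n) n w * g w) ^ 2 := by
        simp_rw [← hmul, ← hu, sq]
    _ ≤ (∑' n, ∑' n', u n * u n' * ∑' w, K (M n) n w * K (M n') n' w) * ∑' w, g w ^ 2 :=
      sq_tsum_mul_tsum_le _ u g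
    _ ≤ (∑' n, ∑' n', u n * u n' * (C * (K (s (M n)) n n' + K (s (M n')) n' n))) *
        ∑' w, g w ^ 2 := by
      gcongr
      exact hcomp _ _
    _ = _ := by
      simp_rw [mul_left_comm _ C, ENNReal.tsum_mul_left,
        tsum_tsum_mul_add_swap fun n n' => K (s (M n)) n n', hmul, Function.comp_apply]
      ring

lemma tsum_sq_linearizedMaximal_le_card_mul (hK₁ : ∀ i n, ∑' w, K i n w ≤ 1) (B : Finset X)
    (M : X → ℕ) (g : X → ℝ≥0∞) :
    ∑' n, linearizedMaximal K B M g n ^ 2 ≤ B.card * ∑' w, g w ^ 2 := by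
  have hpoint (n : X) : (∑' w, K (M n) n w * g w) ^ 2 ≤ ∑' w, g w ^ 2 := by
    refine (sq_tsum_mul_le _ _).trans (mul_le_of_le_one_left zero_le ?_)
    refine (ENNReal.tsum_le_tsum fun w => ?_).trans (hK₁ (M n) n)
    rw [sq]
    exact mul_le_of_le_one_left zero_le ((ENNReal.le_tsum w).trans (hK₁ (M n) n))
  rw [tsum_eq_sum (s := B) fun n hn => by simp [linearizedMaximal, hn], ← nsmul_eq_mul]
  exact Finset.sum_le_card_nsmul B _ _ fun n hn => by simpa [linearizedMaximal, hn] using hpoint n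

-- Applied to the optimal constant `s ^ 2`, the hypothesis `h` gives `s ^ 2 ≤ A * s`.
lemma le_sq_mul_of_self_improving {ι : Type*} {P G : ι → ℝ≥0∞} {A c₀ : ℝ≥0∞} (hc₀ : c₀ ≠ ⊤)
    (hG : ∀ i, G i ≠ ⊤) (h₀ : ∀ i, P i ≤ c₀ * G i)
    (h : ∀ s, (∀ i, P i ≤ s ^ 2 * G i) → ∀ i, P i ≤ A * s * G i) (i : ι) :
    P i ≤ A ^ 2 * G i := by
  set c : ℝ≥0∞ := sInf {c | ∀ i, P i ≤ c * G i}
  have hmem (j : ι) : P j ≤ c * G j := by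
    rcases eq_or_ne (G j) 0 with hj | hj
    · simpa [hj] using h₀ j
    · rw [← ENNReal.div_le_iff hj (hG j)]
      exact le_sInf fun x hx => ENNReal.div_le_of_le_mul (hx j)
  have hct : c ≠ ⊤ := ne_top_of_le_ne_top hc₀ (sInf_le h₀)
  have hsqrt : (c ^ (1 / 2 : ℝ)) ^ 2 = c := by
    rw [← ENNReal.rpow_mul_natCast]
    norm_num
  set t := c ^ (1 / 2 : ℝ)
  have ht : t ^ 2 ≤ A * t := by
    rw [hsqrt]
    exact sInf_le (h t (by rwa [hsqrt]))
  have htA : t ≤ A := by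
    rcases eq_or_ne t 0 with h0 | h0
    · simp [h0]
    · rw [sq] at ht
      refine (ENNReal.mul_le_mul_iff_left h0 fun htop => hct ?_).1 ht
      rw [← hsqrt, htop, ENNReal.top_pow two_ne_zero]
  refine (hmem i).trans ?_
  rw [← hsqrt]
  gcongr

lemma tsum_sq_linearizedMaximal_le (hK₁ : ∀ i n, ∑' w, K i n w ≤ 1)
    (hK : ∀ i j, j ≤ i → ∀ n n', ∑' w, K i n w * K j n' w ≤ C * K (s i) n n')
    (B : Finset X) (M : X → ℕ) {g : X → ℝ≥0∞} (hg : ∑' w, g w ^ 2 ≠ ⊤) :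
    ∑' n, linearizedMaximal K B M g n ^ 2 ≤ (2 * C) ^ 2 * ∑' w, g w ^ 2 := by
  have hcard := tsum_sq_linearizedMaximal_le_card_mul hK₁ B
  refine le_sq_mul_of_self_improving
    (ι := (X → ℕ) × {g : X → ℝ≥0∞ // ∑' w, g w ^ 2 ≠ ⊤})
    (P := fun p => ∑' n, linearizedMaximal K B p.1 p.2 n ^ 2) (G := fun p => ∑' w, p.2.1 w ^ 2)
    (ENNReal.natCast_ne_top B.card) (fun p => p.2.2) (fun p => hcard p.1 p.2) ?_ (M, ⟨g, hg⟩)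
  rintro t ht ⟨N, g, hg⟩
  have hPt : ∑' n, linearizedMaximal K B N g n ^ 2 ≠ ⊤ :=
    ne_top_of_le_ne_top (by finiteness) (hcard N g)
  have hTT := sq_tsum_sq_linearizedMaximal_le hK B N g
  have hCS := sq_tsum_mul_le (linearizedMaximal K B N g)
    (linearizedMaximal K B (s ∘ N) (linearizedMaximal K B N g))
  have hnext := ht (s ∘ N, ⟨_, hPt⟩)
  dsimp only at hnext ⊢
  set P := ∑' n, linearizedMaximal K B N g n ^ 2
  set Q := ∑' n, linearizedMaximal K B N g n *
    linearizedMaximal K B (s ∘ N) (linearizedMaximal K B N g) n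
  set G := ∑' w, g w ^ 2
  rcases eq_or_ne P 0 with h0 | h0
  · simp [h0]
  have hQ : Q ≤ t * P := by
    refine (ENNReal.pow_le_pow_left_iff two_ne_zero).1 (hCS.trans ?_)
    calc _ ≤ P * (t ^ 2 * P) := by gcongr
      _ = _ := by ring
  refine (ENNReal.mul_le_mul_iff_left h0 hPt).1 ?_
  calc P * P ≤ 2 * C * Q * G := by rwa [← sq]
    _ ≤ 2 * C * (t * P) * G := by gcongr
    _ = _ := by ring

theorem tsum_sq_iSup_kernel_le (hK₁ : ∀ i n, ∑' w, K i n w ≤ 1)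
    (hK : ∀ i j, j ≤ i → ∀ n n', ∑' w, K i n w * K j n' w ≤ C * K (s i) n n')
    {g : X → ℝ≥0∞} (hg : ∑' w, g w ^ 2 ≠ ⊤) :
    ∑' n, (⨆ i, ∑' w, K i n w * g w) ^ 2 ≤ (2 * C) ^ 2 * ∑' w, g w ^ 2 := by
  rw [ENNReal.tsum_eq_iSup_sum]
  refine iSup_le fun B => ?_
  simp_rw [← iSup_partialSups_eq fun i => ∑' w, K i _ w * g w, ENNReal.iSup_pow]
  have hmono (n : X) : Monotone fun R => partialSups (fun i => ∑' w, K i n w * g w) R ^ 2 :=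
    fun _ _ h => pow_le_pow_left₀ zero_le ((partialSups _).monotone h) 2
  rw [ENNReal.finsetSum_iSup_of_monotone hmono]
  refine iSup_le fun R => ?_
  choose M hM using fun n => exists_partialSups_eq (fun i => ∑' w, K i n w * g w) R
  refine le_trans ?_ (tsum_sq_linearizedMaximal_le hK₁ hK B M hg)
  refine (Finset.sum_le_sum fun n hn => ?_).trans (ENNReal.sum_le_tsum B)
  simp [hM, linearizedMaximal, hn]

end MaximalKernel

section BoxAverage

/-- The lattice points of the cube `[-M, M]^d`. -/
def latticeBox (d M : ℕ) : Finset (Fin d → ℤ) :=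
  Fintype.piFinset fun _ => Finset.Icc (-(M : ℤ)) M

/-- The average of `g` over the `q`-dilate of the cube `[-M, M]^d` centred at `n`. -/
def boxAverage {d : ℕ} (q M : ℕ) (g : (Fin d → ℤ) → ℝ≥0∞) (n : Fin d → ℤ) : ℝ≥0∞ :=
  ((2 * M + 1 : ℕ) ^ d : ℝ≥0∞)⁻¹ * ∑ m ∈ latticeBox d M, g (n - q • m)

/-- The convolution kernel of `boxAverage`. -/
def boxKernel {d : ℕ} (q M : ℕ) (n w : Fin d → ℤ) : ℝ≥0∞ :=
  if n - w ∈ (latticeBox d M).image (q • ·) then ((2 * M + 1 : ℕ) ^ d : ℝ≥0∞)⁻¹ else 0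

lemma card_latticeBox (d M : ℕ) : (latticeBox d M).card = (2 * M + 1) ^ d := by
  rw [latticeBox, Fintype.card_piFinset_const, card_Icc_neg_nat]

variable {d q : ℕ}

lemma sub_mem_image_smul_latticeBox {M M' : ℕ} (h : M' ≤ M) {x y : Fin d → ℤ}
    (hx : x ∈ (latticeBox d M).image (q • ·)) (hy : y ∈ (latticeBox d M').image (q • ·)) :
    x - y ∈ (latticeBox d (2 * M)).image (q • ·) := by
  obtain ⟨m, hm, rfl⟩ := Finset.mem_image.1 hx
  obtain ⟨m', hm', rfl⟩ := Finset.mem_image.1 hy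
  refine Finset.mem_image.2 ⟨m - m', ?_, smul_sub q m m'⟩
  simp only [latticeBox, Fintype.mem_piFinset, Finset.mem_Icc] at hm hm' ⊢
  intro i
  have := hm i
  have := hm' i
  simp only [Pi.sub_apply]
  lia

lemma boxAverage_one (q M : ℕ) (n : Fin d → ℤ) : boxAverage q M (fun _ => 1) n = 1 := by
  rw [boxAverage, Finset.sum_const, card_latticeBox, nsmul_one, Nat.cast_pow]
  exact ENNReal.inv_mul_cancel (by positivity) (by finiteness)

variable [NeZero q]

lemma tsum_boxKernel_mul (M : ℕ) (g : (Fin d → ℤ) → ℝ≥0∞) (n : Fin d → ℤ) :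
    ∑' w, boxKernel q M n w * g w = boxAverage q M g n := by
  rw [← (Equiv.subLeft n).tsum_eq, boxAverage, Finset.mul_sum,
    tsum_eq_sum (s := (latticeBox d M).image (q • ·)) fun v hv => by
      rw [boxKernel, Equiv.subLeft_apply, sub_sub_cancel, if_neg hv, zero_mul],
    Finset.sum_image (smul_right_injective _ (NeZero.ne q)).injOn]
  refine Finset.sum_congr rfl fun m hm => ?_
  rw [boxKernel, Equiv.subLeft_apply, sub_sub_cancel,
    if_pos (Finset.mem_image_of_mem (q • ·) hm)]

lemma tsum_boxKernel (M : ℕ) (n : Fin d → ℤ) : ∑' w, boxKernel q M n w = 1 := by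
  simpa only [mul_one, boxAverage_one] using tsum_boxKernel_mul (q := q) M (fun _ => 1) n

lemma tsum_boxKernel_mul_boxKernel_le (M M' : ℕ) (h : M' ≤ M) (n n' : Fin d → ℤ) :
    ∑' w, boxKernel q M n w * boxKernel q M' n' w ≤ 2 ^ d * boxKernel q (2 * M) n n' := by
  by_cases hn : n - n' ∈ (latticeBox d (2 * M)).image (q • ·)
  · calc _ ≤ ∑' w, ((2 * M + 1 : ℕ) ^ d : ℝ≥0∞)⁻¹ * boxKernel q M' n' w := by
          gcongr with w
          rw [boxKernel]
          split_ifs <;> simp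
      _ = ((2 * M + 1 : ℕ) ^ d : ℝ≥0∞)⁻¹ := by rw [ENNReal.tsum_mul_left, tsum_boxKernel, mul_one]
      _ ≤ 2 ^ d * ((2 * (2 * M) + 1 : ℕ) ^ d : ℝ≥0∞)⁻¹ := by
          rw [← div_eq_mul_inv, ENNReal.le_div_iff_mul_le (by simp) (.inr (by finiteness)),
            mul_comm, ← div_eq_mul_inv, ENNReal.div_le_iff (by simp) (by finiteness), ← mul_pow]
          gcongr
          norm_cast
          lia
      _ = _ := by rw [boxKernel, if_pos hn]
  · refine (ENNReal.tsum_eq_zero.2 fun w => ?_).trans_le zero_le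
    contrapose! hn
    simp only [boxKernel, ne_eq, mul_eq_zero, not_or, ite_eq_right_iff, Classical.not_imp] at hn
    simpa only [sub_sub_sub_cancel_right] using sub_mem_image_smul_latticeBox h hn.1.1 hn.2.1

theorem tsum_sq_iSup_boxAverage_le {g : (Fin d → ℤ) → ℝ≥0∞} (hg : ∑' w, g w ^ 2 ≠ ⊤) :
    ∑' n, (⨆ M, boxAverage q M g n) ^ 2 ≤ (2 ^ (d + 1)) ^ 2 * ∑' w, g w ^ 2 := by
  simp_rw [← tsum_boxKernel_mul, pow_succ' (2 : ℝ≥0∞) d]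
  exact tsum_sq_iSup_kernel_le (fun M n => (tsum_boxKernel M n).le)
    tsum_boxKernel_mul_boxKernel_le hg

end BoxAverage

/-! ### The generating function of the spherical sums -/

section GeneratingFunction

lemma hasSum_prod_pi {d : ℕ} {β : Type*} {g : Fin d → β → ℂ} {s : Fin d → ℂ}
    (hg : ∀ i, HasSum (g i) (s i)) :
    HasSum (fun m : Fin d → β => ∏ i, g i (m i)) (∏ i, s i) := by
  induction d with
  | zero => simpa only [Finset.univ_eq_empty, Finset.prod_empty] using
      hasSum_unique fun _ : Fin 0 → β => (1 : ℂ)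
  | succ d ih =>
    have htail := ih fun i : Fin d => hg i.succ
    have hsummable := summable_mul_of_summable_norm (hg 0).summable.norm htail.summable.norm
    rw [Fin.prod_univ_succ]
    refine (Fin.consEquiv fun _ : Fin (d + 1) => β).hasSum_iff.1
      (((hg 0).mul htail hsummable).congr_fun fun p => ?_)
    simp only [Function.comp_apply, Fin.consEquiv_apply, Fin.prod_univ_succ, Fin.cons_zero,
      Fin.cons_succ]

/-- The Gaussian `m ↦ exp (2πi z |m|²)`: its restriction to a sphere is constant. -/
def gaussianKernel {d : ℕ} (z : ℂ) (m : Fin d → ℤ) : ℂ :=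
  Complex.exp (2 * π * Complex.I * ((∑ i, m i ^ 2 : ℤ) * z))

variable {d : ℕ} {f : (Fin d → ℤ) → ℂ} {z w : ℂ}

lemma norm_gaussianKernel_le_one (hz : 0 < z.im) (m : Fin d → ℤ) : ‖gaussianKernel z m‖ ≤ 1 := by
  have hm : 0 ≤ ∑ i, m i ^ 2 := Finset.sum_nonneg fun i _ => sq_nonneg _
  rw [gaussianKernel]
  generalize ∑ i, m i ^ 2 = k at hm
  have : 0 ≤ 2 * π * (k * z.im) := by positivity
  rw [Complex.norm_exp, Real.exp_le_one_iff]
  simpa [Complex.mul_re, Complex.mul_im] using this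

lemma gaussianKernel_ofReal_add (t : ℝ) (w : ℂ) (m : Fin d → ℤ) :
    gaussianKernel (t + w) m =
      gaussianKernel w m * Complex.exp (2 * π * Complex.I * ((∑ i, m i ^ 2 : ℤ) * t)) := by
  rw [gaussianKernel, gaussianKernel, ← Complex.exp_add]
  ring_nf

lemma hasSum_gaussianKernel_mul_mFourier (hz : 0 < z.im) (x : Fin d → ℝ) :
    HasSum (fun m => gaussianKernel z m * mFourier m fun i => (x i : UnitAddCircle))
      (thetaProduct z x) := by
  have h2z : 0 < (2 * z).im := by simpa using hz
  refine (hasSum_prod_pi fun i => hasSum_jacobiTheta₂_term (x i) h2z).congr_fun fun m => ?_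
  rw [mFourier_coe, gaussianKernel, ← Complex.exp_add]
  simp only [jacobiTheta₂_term, ← Complex.exp_sum]
  push_cast
  rw [← mul_add, Finset.sum_mul, ← Finset.sum_add_distrib, Finset.mul_sum]
  congr 1
  exact Finset.sum_congr rfl fun i _ => by ring

lemma summable_gaussianKernel (hz : 0 < z.im) : Summable (gaussianKernel (d := d) z) := by
  refine .of_norm ?_
  simpa only [norm_mul, norm_mFourier_apply, mul_one] using
    (hasSum_gaussianKernel_mul_mFourier (d := d) hz 0).summable.norm

lemma fourierSeries_gaussianKernel (hz : 0 < z.im) (x : UnitAddTorus (Fin d)) :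
    fourierSeries (gaussianKernel z) x = thetaProduct z (torusRep x) := by
  refine (hasSum_fourierSeries_apply (summable_gaussianKernel hz) x).unique ?_
  simpa only [coe_torusRep] using hasSum_gaussianKernel_mul_mFourier hz (torusRep x)

lemma continuous_thetaProduct (hz : 0 < z.im) :
    Continuous (thetaProduct z : (Fin d → ℝ) → ℂ) := by
  have h2z : 0 < (2 * z).im := by simpa using hz
  refine continuous_finsetProd _ fun i _ => ?_
  exact (continuous_iff_continuousAt.2 fun v =>
    (differentiableAt_jacobiTheta₂_fst v h2z).continuousAt).comp (by fun_prop)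

lemma norm_thetaProduct_le (hz : 0 < z.im) (x : Fin d → ℝ) :
    ‖thetaProduct z x‖ ≤ ∑' m : Fin d → ℤ, ‖gaussianKernel z m‖ := by
  rw [← (hasSum_gaussianKernel_mul_mFourier hz x).tsum_eq]
  refine tsum_of_norm_bounded (summable_gaussianKernel hz).norm.hasSum fun m => ?_
  rw [norm_mul, norm_mFourier_apply, mul_one]

lemma fourierMultiplier_thetaProduct (hf : Summable f) (hz : 0 < z.im) (n : Fin d → ℤ) :
    fourierMultiplier (thetaProduct z) f n = ∑' m, gaussianKernel z m * f (n - m) := by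
  simp only [fourierMultiplier, ← fourierSeries_gaussianKernel hz,
    mFourierCoeff_fourierSeries_mul_fourierSeries (summable_gaussianKernel hz) hf]

lemma norm_gaussianKernel_mul_le (hz : 0 < z.im) (n m : Fin d → ℤ) :
    ‖gaussianKernel z m * f (n - m)‖ ≤ ‖f (n - m)‖ := by
  rw [norm_mul]
  exact mul_le_of_le_one_left (norm_nonneg _) (norm_gaussianKernel_le_one hz m)

lemma continuous_fourierMultiplier_thetaProduct (hf : Summable f) (hw : 0 < w.im)
    (n : Fin d → ℤ) : Continuous fun t : ℝ => fourierMultiplier (thetaProduct (t + w)) f n := by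
  have him (t : ℝ) : 0 < (t + w).im := by simpa using hw
  simp_rw [fun t => fourierMultiplier_thetaProduct hf (him t) n]
  refine continuous_tsum (fun m => ?_) ((Equiv.subLeft n).summable_iff.2 hf.norm)
    fun m t => norm_gaussianKernel_mul_le (him t) n m
  simp only [gaussianKernel]
  fun_prop

lemma integral_exp_two_pi_I_mul_int (k : ℤ) :
    ∫ t in (0 : ℝ)..1, Complex.exp (2 * π * Complex.I * (k * t)) = if k = 0 then 1 else 0 := by
  split_ifs with h
  · simp [h]
  · have hc : 2 * π * Complex.I * k ≠ 0 := by simp [Real.pi_ne_zero, h]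
    simp_rw [← mul_assoc]
    rw [integral_exp_mul_complex hc, div_eq_zero_iff, sub_eq_zero]
    left
    simpa [mul_comm] using Complex.exp_int_mul_two_pi_mul_I k

lemma integral_tsum_mul_exp {X : Type*} [Countable X] {c : X → ℂ} (hc : Summable c)
    (k : X → ℤ) :
    ∫ t in (0 : ℝ)..1, ∑' m, c m * Complex.exp (2 * π * Complex.I * (k m * t)) =
      ∑' m, if k m = 0 then c m else 0 := by
  have hnorm (m : X) (t : ℝ) :
      ‖c m * Complex.exp (2 * π * Complex.I * (k m * t))‖ = ‖c m‖ := by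
    rw [norm_mul, Complex.norm_exp]
    simp [Complex.mul_re, Complex.mul_im]
  have h := intervalIntegral.hasSum_integral_of_dominated_convergence (μ := volume)
    (a := 0) (b := 1) (F := fun m (t : ℝ) => c m * Complex.exp (2 * π * Complex.I * (k m * t)))
    (fun m _ => ‖c m‖) (fun m => by fun_prop)
    (fun m => .of_forall fun t _ => (hnorm m t).le) (.of_forall fun _ _ => hc.norm) (by simp)
    (.of_forall fun t _ => (hc.norm.of_norm_bounded fun m => (hnorm m t).le).hasSum)
  rw [← h.tsum_eq]
  simp_rw [intervalIntegral.integral_const_mul, integral_exp_two_pi_I_mul_int, mul_ite, mul_one,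
    mul_zero]

-- Integrating against `exp (-2πi N t)` selects the terms with `|m|² = N` of the generating series.
theorem enorm_sum_latticeSphere_le (hf : Summable f) (hw : 0 < w.im) (N : ℕ) (n : Fin d → ℤ) :
    ‖∑ m ∈ latticeSphere d N, f (n - m)‖ₑ ≤ ENNReal.ofReal (Real.exp (2 * π * N * w.im)) *
      ∫⁻ t in Set.Ioc (0 : ℝ) 1, ‖fourierMultiplier (thetaProduct (t + w)) f n‖ₑ := by
  have him (t : ℝ) : 0 < (t + w).im := by simpa using hw
  have hc : Summable fun m => gaussianKernel w m * f (n - m) :=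
    ((Equiv.subLeft n).summable_iff.2 hf.norm).of_norm_bounded
      (norm_gaussianKernel_mul_le hw n)
  have hextract : ∫ t in (0 : ℝ)..1, Complex.exp (-(2 * π * Complex.I * (N * t))) *
      fourierMultiplier (thetaProduct (t + w)) f n =
        Complex.exp (2 * π * Complex.I * (N * w)) * ∑ m ∈ latticeSphere d N, f (n - m) := by
    have hterm (t : ℝ) (m : Fin d → ℤ) : Complex.exp (-(2 * π * Complex.I * (N * t))) *
        (gaussianKernel (t + w) m * f (n - m)) = gaussianKernel w m * f (n - m) *
          Complex.exp (2 * π * Complex.I * ((∑ i, m i ^ 2 - N : ℤ) * t)) := by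
      have hexp : Complex.exp (2 * π * Complex.I * ((∑ i, m i ^ 2 - N : ℤ) * t)) =
          Complex.exp (-(2 * π * Complex.I * (N * t))) *
            Complex.exp (2 * π * Complex.I * ((∑ i, m i ^ 2 : ℤ) * t)) := by
        rw [← Complex.exp_add, Int.cast_sub, Int.cast_natCast]
        ring_nf
      rw [gaussianKernel_ofReal_add, hexp]
      ring
    simp_rw [fun t => fourierMultiplier_thetaProduct hf (him t) n, ← tsum_mul_left, hterm]
    rw [integral_tsum_mul_exp hc, tsum_eq_sum (s := latticeSphere d N) fun m hm =>
      if_neg (by rwa [sub_eq_zero, ← mem_latticeSphere]), Finset.mul_sum]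
    refine Finset.sum_congr rfl fun m hm => ?_
    rw [mem_latticeSphere] at hm
    rw [if_pos (sub_eq_zero.2 hm), gaussianKernel, hm, Int.cast_natCast]
  have hexp : ‖Complex.exp (2 * π * Complex.I * (N * w))‖ₑ =
      ENNReal.ofReal (Real.exp (-(2 * π * N * w.im))) := by
    rw [← ofReal_norm, Complex.norm_exp]
    congr 2
    simp [Complex.mul_re, Complex.mul_im]
    ring
  have hphase (t : ℝ) : ‖Complex.exp (-(2 * π * Complex.I * (N * t)))‖ₑ = 1 := by
    rw [← ofReal_norm, Complex.norm_exp]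
    simp [Complex.mul_re, Complex.mul_im]
  have hle := enorm_integral_le_lintegral_enorm (μ := volume.restrict (Set.Ioc (0 : ℝ) 1))
    fun t : ℝ => Complex.exp (-(2 * π * Complex.I * (N * t))) *
      fourierMultiplier (thetaProduct (t + w)) f n
  rw [← intervalIntegral.integral_of_le zero_le_one, hextract] at hle
  simp only [enorm_mul, hexp, hphase, one_mul] at hle
  rw [Real.exp_neg, ENNReal.ofReal_inv_of_pos (Real.exp_pos _)] at hle
  exact (ENNReal.inv_mul_le_iff (by simp [Real.exp_pos]) ENNReal.ofReal_ne_top).1 hle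

end GeneratingFunction

/-! ### The circle method -/

section CircleMethod

variable {d : ℕ}

/-- The average of `f` over the lattice points at distance `√N` from `n`. -/
def sphericalAverage (N : ℕ) (f : (Fin d → ℤ) → ℂ) (n : Fin d → ℤ) : ℂ :=
  ((latticeSphere d N).card : ℂ)⁻¹ * ∑ m ∈ latticeSphere d N, f (n - m)

/-- The arc around the fraction `a / q` in Dirichlet's theorem with bound `Λ` for the denominators,
translated to the origin. -/
def fareyArc (q Λ : ℕ) : Set ℝ := Set.Icc (-(1 / (q * Λ))) (1 / (q * Λ))

lemma measurableSet_fareyArc (q Λ : ℕ) : MeasurableSet (fareyArc q Λ) := measurableSet_Icc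

lemma mem_fareyArc {q Λ : ℕ} {b : ℝ} : b ∈ fareyArc q Λ ↔ |b| ≤ 1 / (q * Λ) := abs_le.symm

/-- The numerators of the fractions in `[0, 1]` with denominator `q` in lowest terms. -/
def fareyNumerators (q : ℕ) : Finset ℕ := (Finset.range (q + 1)).filter fun a => a.Coprime q

lemma card_fareyNumerators_le (q : ℕ) : (fareyNumerators q).card ≤ q + 1 :=
  (Finset.card_filter_le _ _).trans_eq (Finset.card_range _)

lemma isUnit_of_mem_fareyNumerators {q a : ℕ} (ha : a ∈ fareyNumerators q) :
    IsUnit (a : ZMod q) :=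
  (ZMod.isUnit_iff_coprime a q).2 (Finset.mem_filter.1 ha).2

lemma exists_sub_mem_fareyArc {Λ : ℕ} (hΛ : 0 < Λ) {t : ℝ} (ht : t ∈ Set.Ioc (0 : ℝ) 1) :
    ∃ q ∈ Finset.Icc 1 Λ, ∃ a ∈ fareyNumerators q, t - a / q ∈ fareyArc q Λ := by
  obtain ⟨r, hr, hrΛ⟩ := Real.exists_rat_abs_sub_le_and_den_le t hΛ
  have hq : (0 : ℝ) < r.den := mod_cast r.den_pos
  have hΛ' : (0 : ℝ) < Λ := mod_cast hΛ
  have hdist : |t * r.den - r.num| < 1 := by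
    have hfactor : t * r.den - r.num = (t - r) * r.den := by
      rw [sub_mul, ← Rat.cast_natCast r.den, ← Rat.cast_mul, Rat.mul_den_eq_num,
        Rat.cast_intCast]
    rw [hfactor, abs_mul, Nat.abs_cast]
    calc _ ≤ 1 / ((Λ + 1 : ℝ) * r.den) * r.den := by gcongr
      _ = 1 / (Λ + 1 : ℝ) := by field_simp
      _ < 1 := by rw [div_lt_one (by positivity)]; linarith
  rw [abs_lt] at hdist
  have hnum : 0 ≤ r.num := by
    have : (-1 : ℝ) < r.num := by nlinarith [mul_pos ht.1 hq]
    have : (-1 : ℤ) < r.num := mod_cast this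
    lia
  have hnum_le : r.num < r.den + 1 := by
    have : (r.num : ℝ) < r.den + 1 := by nlinarith [ht.2]
    exact_mod_cast this
  obtain ⟨a, ha⟩ := Int.eq_ofNat_of_zero_le hnum
  refine ⟨r.den, Finset.mem_Icc.2 ⟨r.den_pos, hrΛ⟩, a, Finset.mem_filter.2
    ⟨Finset.mem_range.2 (by lia), by simpa [ha] using r.reduced⟩, mem_fareyArc.2 ?_⟩
  have hcast : (a : ℝ) / r.den = r := by
    rw [Rat.cast_def, ha, Int.cast_natCast]
  rw [hcast]
  refine hr.trans (one_div_le_one_div_of_le (by positivity) ?_)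
  nlinarith

lemma lintegral_biUnion_finset_le {α ι : Type*} [MeasurableSpace α] {μ : Measure α}
    (s : Finset ι) (t : ι → Set α) (F : α → ℝ≥0∞) :
    ∫⁻ x in ⋃ i ∈ s, t i, F x ∂μ ≤ ∑ i ∈ s, ∫⁻ x in t i, F x ∂μ := by
  classical
  induction s using Finset.induction_on with
  | empty => simp
  | insert i s hi ih =>
    rw [Finset.set_biUnion_insert, Finset.sum_insert hi]
    exact (lintegral_union_le _ _ _).trans (by gcongr)

lemma setLIntegral_preimage_sub_right (s : Set ℝ) (F : ℝ → ℝ≥0∞) (c : ℝ) :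
    ∫⁻ t in (· - c) ⁻¹' s, F t = ∫⁻ b in s, F (c + b) := by
  have hpre : (c + ·) ⁻¹' ((· - c) ⁻¹' s) = s := by
    ext b
    simp
  have h := (measurePreserving_add_left volume c).setLIntegral_comp_preimage_emb
    (measurableEmbedding_addLeft c) F ((· - c) ⁻¹' s)
  rw [← h, hpre]

theorem setLIntegral_Ioc_le_sum_fareyArc {Λ : ℕ} (hΛ : 0 < Λ) (F : ℝ → ℝ≥0∞) :
    ∫⁻ t in Set.Ioc (0 : ℝ) 1, F t ≤
      ∑ q ∈ Finset.Icc 1 Λ, ∑ a ∈ fareyNumerators q, ∫⁻ b in fareyArc q Λ, F (a / q + b) := by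
  have hcover : Set.Ioc (0 : ℝ) 1 ⊆ ⋃ p ∈ (Finset.Icc 1 Λ).sigma fareyNumerators,
      (· - (p.2 / p.1 : ℝ)) ⁻¹' fareyArc p.1 Λ := by
    intro t ht
    obtain ⟨q, hq, a, ha, hmem⟩ := exists_sub_mem_fareyArc hΛ ht
    exact Set.mem_biUnion (x := (⟨q, a⟩ : (_ : ℕ) × ℕ)) (Finset.mem_sigma.2 ⟨hq, ha⟩) hmem
  refine (lintegral_mono_set hcover).trans ((lintegral_biUnion_finset_le _ _ F).trans_eq ?_)
  simp only [setLIntegral_preimage_sub_right, Finset.sum_sigma]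

/-- The contribution of the arc around `a / q` to the spherical averages of `f` with radii
comparable to `Λ`. -/
def arcIntegral (f : (Fin d → ℤ) → ℂ) (q a Λ : ℕ) (n : Fin d → ℤ) : ℝ≥0∞ :=
  ENNReal.ofReal (1 / (Λ : ℝ) ^ (d - 2)) * ∫⁻ b in fareyArc q Λ,
    ‖fourierMultiplier (thetaProduct (a / q + (b + Complex.I / Λ ^ 2))) f n‖ₑ

theorem exists_enorm_sphericalAverage_le (hd : 5 ≤ d) :
    ∃ C : ℝ, 0 < C ∧ ∀ {f : (Fin d → ℤ) → ℂ}, Summable f → ∀ {Λ N : ℕ}, 0 < Λ →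
      Λ ^ 2 ≤ N → N ≤ 4 * Λ ^ 2 → ∀ n, ‖sphericalAverage N f n‖ₑ ≤ ENNReal.ofReal C *
        ∑ q ∈ Finset.Icc 1 Λ, ∑ a ∈ fareyNumerators q, arcIntegral f q a Λ n := by
  obtain ⟨c, hc, hcard⟩ := exists_le_card_latticeSphere hd
  refine ⟨Real.exp (8 * π) / c, by positivity, fun {f} hf {Λ N} hΛ hle hge n => ?_⟩
  have : (0 : ℝ) < Λ := mod_cast hΛ
  have him : (Complex.I / (Λ : ℂ) ^ 2).im = 1 / (Λ : ℝ) ^ 2 := by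
    rw [← Complex.ofReal_natCast, ← Complex.ofReal_pow, Complex.div_ofReal_im, Complex.I_im]
  have hexp : Real.exp (2 * π * N * (1 / (Λ : ℝ) ^ 2)) ≤ Real.exp (8 * π) := by
    have hge' : (N : ℝ) ≤ 4 * (Λ : ℝ) ^ 2 := mod_cast hge
    rw [Real.exp_le_exp, mul_one_div, div_le_iff₀ (by positivity)]
    nlinarith [Real.pi_pos]
  have hcard' : c * (Λ : ℝ) ^ (d - 2) ≤ (latticeSphere d N).card := by
    refine le_trans ?_ (hcard N)
    gcongr
    exact Real.le_sqrt_of_sq_le (mod_cast hle)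
  have hinv : ‖((latticeSphere d N).card : ℂ)⁻¹‖ₑ ≤
      ENNReal.ofReal (c * (Λ : ℝ) ^ (d - 2))⁻¹ := by
    rw [← ofReal_norm, norm_inv, Complex.norm_natCast]
    gcongr
  calc ‖sphericalAverage N f n‖ₑ
      ≤ ENNReal.ofReal (c * (Λ : ℝ) ^ (d - 2))⁻¹ * (ENNReal.ofReal (Real.exp (8 * π)) *
          ∑ q ∈ Finset.Icc 1 Λ, ∑ a ∈ fareyNumerators q, ∫⁻ b in fareyArc q Λ,
            ‖fourierMultiplier (thetaProduct ((a / q + b : ℝ) + Complex.I / Λ ^ 2)) f n‖ₑ) := by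
        rw [sphericalAverage, enorm_mul]
        refine mul_le_mul' hinv ((enorm_sum_latticeSphere_le hf (him ▸ by positivity) N n).trans
          (mul_le_mul' ?_ (setLIntegral_Ioc_le_sum_fareyArc hΛ _)))
        rw [him]
        exact ENNReal.ofReal_le_ofReal hexp
    _ = _ := by
        have hconst : (c * (Λ : ℝ) ^ (d - 2))⁻¹ * Real.exp (8 * π) =
            Real.exp (8 * π) / c * (1 / (Λ : ℝ) ^ (d - 2)) := by field_simp
        simp only [arcIntegral, ← Finset.mul_sum, ← mul_assoc]
        rw [← ENNReal.ofReal_mul (by positivity), ← ENNReal.ofReal_mul (by positivity), hconst]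
        push_cast
        simp only [add_assoc]

end CircleMethod

/-! ### The contribution of one arc -/

section DyadicSums

lemma sum_range_sq_div_one_add_sq_le (δ : ℝ) (n : ℕ) :
    ∑ j ∈ Finset.range n, (2 ^ j * δ / (1 + (2 ^ j * δ) ^ 2)) ^ 2 ≤
      4 / 3 * ((2 ^ n * δ) ^ 2 / (1 + (2 ^ n * δ) ^ 2)) := by
  induction n with
  | zero =>
    rw [Finset.sum_range_zero]
    positivity
  | succ n ih =>
    rw [Finset.sum_range_succ, pow_succ (2 : ℝ) n, mul_right_comm]
    generalize (2 : ℝ) ^ n * δ = y at ih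
    have hstep : (y / (1 + y ^ 2)) ^ 2 ≤
        4 / 3 * ((y * 2) ^ 2 / (1 + (y * 2) ^ 2)) - 4 / 3 * (y ^ 2 / (1 + y ^ 2)) := by
      have hdiff : 4 / 3 * ((y * 2) ^ 2 / (1 + (y * 2) ^ 2)) - 4 / 3 * (y ^ 2 / (1 + y ^ 2)) =
          4 * y ^ 2 / ((1 + (y * 2) ^ 2) * (1 + y ^ 2)) := by
        field_simp
        ring
      rw [hdiff, div_pow, div_le_div_iff₀ (by positivity) (by positivity)]
      nlinarith [sq_nonneg y, sq_nonneg (y ^ 2), mul_nonneg (sq_nonneg y) (sq_nonneg (y ^ 2))]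
    linarith

lemma tsum_sq_div_one_add_sq_le (δ : ℝ) :
    ∑' j : ℕ, ENNReal.ofReal ((2 ^ j * δ / (1 + (2 ^ j * δ) ^ 2)) ^ 2) ≤
      ENNReal.ofReal (4 / 3) := by
  refine ENNReal.tsum_le_of_sum_range_le fun n => ?_
  rw [← ENNReal.ofReal_sum_of_nonneg fun j _ => by positivity]
  refine ENNReal.ofReal_le_ofReal ((sum_range_sq_div_one_add_sq_le δ n).trans ?_)
  exact mul_le_of_le_one_right (by norm_num) ((div_le_one (by positivity)).2 (by linarith))

lemma tsum_sq_div_two_pow_le {c : ℝ} (hc : 0 < c) :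
    ∑' j : {j : ℕ // c ≤ 2 ^ j}, ENNReal.ofReal ((c / 2 ^ (j : ℕ)) ^ 2) ≤
      ENNReal.ofReal (16 / 3) := by
  have hterm (j : {j : ℕ // c ≤ 2 ^ j}) : ENNReal.ofReal ((c / 2 ^ (j : ℕ)) ^ 2) ≤
      ENNReal.ofReal 4 *
        ENNReal.ofReal ((2 ^ (j : ℕ) * c⁻¹ / (1 + (2 ^ (j : ℕ) * c⁻¹) ^ 2)) ^ 2) := by
    rw [← ENNReal.ofReal_mul (by norm_num)]
    refine ENNReal.ofReal_le_ofReal ?_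
    have hy : 1 ≤ (2 : ℝ) ^ (j : ℕ) * c⁻¹ := by
      rw [← div_eq_mul_inv, one_le_div hc]
      exact j.2
    rw [← inv_div, div_eq_mul_inv]
    generalize (2 : ℝ) ^ (j : ℕ) * c⁻¹ = y at hy
    rw [inv_pow, inv_eq_one_div, div_pow, mul_div_assoc', div_le_div_iff₀ (by positivity)
      (by positivity)]
    nlinarith [sq_nonneg (y ^ 2 - 1)]
  refine (ENNReal.tsum_le_tsum hterm).trans ?_
  rw [ENNReal.tsum_mul_left]
  refine (mul_le_mul_right ((ENNReal.tsum_comp_le_tsum_of_injective Subtype.val_injective _).trans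
    (tsum_sq_div_one_add_sq_le c⁻¹)) _).trans_eq ?_
  rw [← ENNReal.ofReal_mul (by norm_num)]
  norm_num

end DyadicSums

section ArcWeight

lemma measurable_arcWeight : Measurable arcWeight := by
  unfold arcWeight
  fun_prop

lemma arcWeight_nonneg (u : ℝ) : 0 ≤ arcWeight u := by
  unfold arcWeight
  positivity

lemma integrable_arcWeight : Integrable arcWeight := by
  refine (integrable_rpow_neg_one_add_norm_sq (E := ℝ) (μ := volume) (r := 3 / 2)
    (by norm_num)).congr (.of_forall fun u => ?_)
  norm_num [arcWeight]

lemma setLIntegral_arcWeight_le {t : ℝ} (ht : 0 < t) (s : Set ℝ) :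
    ∫⁻ b in s, ENNReal.ofReal (arcWeight (b * t)) ≤ ENNReal.ofReal ((∫ u, arcWeight u) / t) := by
  refine (setLIntegral_le_lintegral _ _).trans_eq ?_
  rw [← ofReal_integral_eq_lintegral_ofReal (integrable_arcWeight.comp_mul_right' ht.ne')
    (.of_forall fun b => arcWeight_nonneg _), Measure.integral_comp_mul_right, abs_of_pos
    (inv_pos.2 ht), smul_eq_mul, inv_mul_eq_div]

end ArcWeight

section ArcMultiplier

lemma tsum_sq_iSup_le {ι κ : Type*} (X : ι → κ → ℝ≥0∞) :
    ∑' n, (⨆ j, X j n) ^ 2 ≤ ∑' j, ∑' n, X j n ^ 2 := by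
  rw [ENNReal.tsum_comm]
  refine ENNReal.tsum_le_tsum fun n => ?_
  rw [ENNReal.iSup_pow_of_ne_zero two_ne_zero]
  exact iSup_le ENNReal.le_tsum

-- Minkowski's inequality: expand the square of the integral and apply Cauchy–Schwarz in `n`.
lemma tsum_sq_lintegral_le {α ι : Type*} [Countable ι] [MeasurableSpace α] {μ : Measure α}
    {F : α → ι → ℝ≥0∞} (hF : ∀ n, Measurable fun b => F b n) {w : α → ℝ≥0∞} (hw : Measurable w)
    {G : ℝ≥0∞} (h : ∀ᵐ b ∂μ, ∑' n, F b n ^ 2 ≤ w b ^ 2 * G) :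
    ∑' n, (∫⁻ b, F b n ∂μ) ^ 2 ≤ (∫⁻ b, w b ∂μ) ^ 2 * G := by
  have hprod {b b' : α} (hb : ∑' n, F b n ^ 2 ≤ w b ^ 2 * G)
      (hb' : ∑' n, F b' n ^ 2 ≤ w b' ^ 2 * G) : ∑' n, F b n * F b' n ≤ w b * (w b' * G) := by
    rw [← ENNReal.pow_le_pow_left_iff two_ne_zero]
    calc _ ≤ (∑' n, F b n ^ 2) * ∑' n, F b' n ^ 2 := sq_tsum_mul_le _ _
      _ ≤ w b ^ 2 * G * (w b' ^ 2 * G) := mul_le_mul' hb hb'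
      _ = _ := by ring
  calc ∑' n, (∫⁻ b, F b n ∂μ) ^ 2 = ∑' n, ∫⁻ b, ∫⁻ b', F b n * F b' n ∂μ ∂μ := by
        refine tsum_congr fun n => ?_
        simp_rw [lintegral_const_mul _ (hF n), lintegral_mul_const _ (hF n), sq]
    _ = ∫⁻ b, ∑' n, F b n * ∫⁻ b', F b' n ∂μ ∂μ := by
        simp_rw [lintegral_const_mul _ (hF _)]
        exact (lintegral_tsum fun n => ((hF n).mul_const _).aemeasurable).symm
    _ = ∫⁻ b, ∫⁻ b', ∑' n, F b n * F b' n ∂μ ∂μ := by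
        refine lintegral_congr fun b => ?_
        rw [lintegral_tsum fun n => ((hF n).const_mul _).aemeasurable]
        simp_rw [lintegral_const_mul _ (hF _)]
    _ ≤ ∫⁻ b, ∫⁻ b', w b * (w b' * G) ∂μ ∂μ :=
        lintegral_mono_ae <| h.mono fun b hb => lintegral_mono_ae <| h.mono fun b' hb' =>
          hprod hb hb'
    _ = (∫⁻ b, w b ∂μ) ^ 2 * G := by
        simp_rw [lintegral_const_mul _ (hw.mul_const G), lintegral_mul_const _ hw]
        ring

lemma tsum_sq_tsum_le {ι κ : Type*} [Countable ι] [Countable κ] {X : κ → ι → ℝ≥0∞}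
    {w : κ → ℝ≥0∞} {G : ℝ≥0∞} (h : ∀ p, ∑' n, X p n ^ 2 ≤ w p ^ 2 * G) :
    ∑' n, (∑' p, X p n) ^ 2 ≤ (∑' p, w p) ^ 2 * G := by
  let _ : MeasurableSpace κ := ⊤
  simpa only [lintegral_count] using tsum_sq_lintegral_le (μ := Measure.count)
    (fun _ => measurable_from_top) measurable_from_top (.of_forall h)

variable {d : ℕ} {f : (Fin d → ℤ) → ℂ} {m : ℝ → (Fin d → ℝ) → ℂ} {B : UnitAddTorus (Fin d) → ℝ}

lemma tsum_sq_lintegral_fourierMultiplier_le {s : Set ℝ} (hs : MeasurableSet s)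
    (hmeas : ∀ n, Measurable fun b => fourierMultiplier (m b) f n) (hm : ∀ b, Measurable (m b))
    (hbdd : ∀ b, ∃ K, ∀ x, ‖m b x‖ ≤ K) {w : ℝ → ℝ} (hw : Measurable w) (hw0 : ∀ b, 0 ≤ w b)
    (hB : ∀ b ∈ s, ∀ x, fourierSeries f x ≠ 0 → ‖m b (torusRep x)‖ ≤ w b * B x) :
    ∑' n, (∫⁻ b in s, ‖fourierMultiplier (m b) f n‖ₑ) ^ 2 ≤
      (∫⁻ b in s, ENNReal.ofReal (w b)) ^ 2 *
        ∫⁻ x, ENNReal.ofReal (B x) ^ 2 * ‖fourierSeries f x‖ₑ ^ 2 := by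
  refine tsum_sq_lintegral_le (fun n => (hmeas n).enorm) hw.ennreal_ofReal
    ((ae_restrict_iff' hs).2 (.of_forall fun b hb => ?_))
  obtain ⟨K, hK⟩ := hbdd b
  rw [tsum_enorm_sq_fourierMultiplier (hm b) hK, ← lintegral_const_mul' _ _ (by finiteness)]
  refine lintegral_mono fun x => ?_
  rw [← mul_assoc, ← mul_pow (ENNReal.ofReal (w b)), ← ENNReal.ofReal_mul (hw0 b)]
  by_cases hx : fourierSeries f x = 0
  · simp [hx]
  · gcongr
    rw [← ofReal_norm]
    exact ENNReal.ofReal_le_ofReal (hB b hb x hx)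

-- The normalization `Λ ^ (d - 2)` absorbs `Λ ^ d` and the length `1 / Λ ^ 2` of the arc.
lemma tsum_sq_lintegral_fareyArc_le (hd : 2 ≤ d) {q Λ : ℕ} (hΛ : 0 < Λ) {C : ℝ} (hC : 0 ≤ C)
    (hmeas : ∀ n, Measurable fun b => fourierMultiplier (m b) f n) (hm : ∀ b, Measurable (m b))
    (hbdd : ∀ b, ∃ K, ∀ x, ‖m b x‖ ≤ K)
    (hB : ∀ b ∈ fareyArc q Λ, ∀ x, fourierSeries f x ≠ 0 →
      ‖m b (torusRep x)‖ ≤ C * (Λ / √q) ^ d * arcWeight (b * (Λ : ℝ) ^ 2) * B x) :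
    ∑' n, (ENNReal.ofReal (1 / (Λ : ℝ) ^ (d - 2)) *
        ∫⁻ b in fareyArc q Λ, ‖fourierMultiplier (m b) f n‖ₑ) ^ 2 ≤
      ENNReal.ofReal ((C * ∫ u, arcWeight u) ^ 2 / (q : ℝ) ^ d) *
        ∫⁻ x, ENNReal.ofReal (B x) ^ 2 * ‖fourierSeries f x‖ₑ ^ 2 := by
  have : (0 : ℝ) < Λ := mod_cast hΛ
  have hmass : 0 ≤ ∫ u, arcWeight u := integral_nonneg arcWeight_nonneg
  have hweight : ∫⁻ b in fareyArc q Λ,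
      ENNReal.ofReal (C * (Λ / √q) ^ d * arcWeight (b * (Λ : ℝ) ^ 2)) ≤
        ENNReal.ofReal (C * (Λ / √q) ^ d * ((∫ u, arcWeight u) / (Λ : ℝ) ^ 2)) := by
    simp_rw [ENNReal.ofReal_mul (by positivity : 0 ≤ C * (Λ / √q) ^ d)]
    rw [lintegral_const_mul' _ _ (by finiteness)]
    gcongr
    exact setLIntegral_arcWeight_le (by positivity) _
  have hscale : ENNReal.ofReal (1 / (Λ : ℝ) ^ (d - 2)) ^ 2 *
      ENNReal.ofReal (C * (Λ / √q) ^ d * ((∫ u, arcWeight u) / (Λ : ℝ) ^ 2)) ^ 2 =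
        ENNReal.ofReal ((C * ∫ u, arcWeight u) ^ 2 / (q : ℝ) ^ d) := by
    obtain ⟨k, rfl⟩ := Nat.exists_eq_add_of_le' hd
    rw [← mul_pow, ← ENNReal.ofReal_mul (by positivity), ← ENNReal.ofReal_pow (by positivity),
      Nat.add_sub_cancel]
    congr 1
    rw [show ((q : ℝ)) ^ (k + 2) = (√q ^ (k + 2)) ^ 2 by
      rw [pow_right_comm, Real.sq_sqrt (Nat.cast_nonneg q)], ← div_pow, div_pow, pow_add (Λ : ℝ)]
    congr 1
    field_simp
  simp_rw [mul_pow (ENNReal.ofReal (1 / (Λ : ℝ) ^ (d - 2)))]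
  rw [ENNReal.tsum_mul_left]
  refine (mul_le_mul_right (tsum_sq_lintegral_fourierMultiplier_le (measurableSet_fareyArc q Λ)
    hmeas hm hbdd ((measurable_arcWeight.comp (measurable_mul_const ((Λ : ℝ) ^ 2))).const_mul _)
    (fun b => mul_nonneg (by positivity) (arcWeight_nonneg _)) hB) _).trans ?_
  rw [← mul_assoc, ← hscale]
  gcongr
  exact hweight

end ArcMultiplier

/-! ### Arcs with small denominators -/

section ArcSymbol

variable {d : ℕ} {f : (Fin d → ℤ) → ℂ} {Λ : ℕ}

lemma im_arc_pos (hΛ : 0 < Λ) (c : ℚ) (b : ℝ) : 0 < (c + (b + Complex.I / (Λ : ℂ) ^ 2)).im := by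
  have : (0 : ℝ) < Λ := mod_cast hΛ
  rw [← Complex.ofReal_natCast, ← Complex.ofReal_pow, Complex.add_im, Complex.add_im,
    Complex.div_ofReal_im, Complex.I_im, Complex.ofReal_im, Complex.ratCast_im, zero_add, zero_add]
  positivity

lemma measurable_thetaProduct_arc (hΛ : 0 < Λ) (q a : ℕ) (b : ℝ) :
    Measurable (thetaProduct (d := d) (a / q + (b + Complex.I / Λ ^ 2))) :=
  (continuous_thetaProduct (by simpa using im_arc_pos hΛ (a / q) b)).measurable

lemma exists_norm_thetaProduct_arc_le (hΛ : 0 < Λ) (q a : ℕ) (b : ℝ) :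
    ∃ K, ∀ x : Fin d → ℝ, ‖thetaProduct (a / q + (b + Complex.I / Λ ^ 2)) x‖ ≤ K :=
  ⟨_, norm_thetaProduct_le (by simpa using im_arc_pos hΛ (a / q) b)⟩

lemma continuous_fourierMultiplier_arc (hf : Summable f) (hΛ : 0 < Λ) (q a : ℕ) (n : Fin d → ℤ) :
    Continuous fun b : ℝ =>
      fourierMultiplier (thetaProduct (a / q + (b + Complex.I / Λ ^ 2))) f n := by
  have h := continuous_fourierMultiplier_thetaProduct hf
    (by simpa using im_arc_pos hΛ (a / q) 0 : 0 < (a / q + Complex.I / (Λ : ℂ) ^ 2).im) n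
  simpa only [add_left_comm] using h

end ArcSymbol

section SmallDenominators

variable {d : ℕ} {f : (Fin d → ℤ) → ℂ} {q a : ℕ} [NeZero q] {δ : ℝ}

lemma tsum_sq_arcIntegral_le (hd : 5 ≤ d) (hf : Summable f) (ha : IsUnit (a : ZMod q)) {Λ : ℕ}
    (hq : q ≤ Λ) (hδ : 0 < δ)
    (hsupp : ∀ x, fourierSeries f x ≠ 0 → q * δ ≤ rationalDist q (torusRep x)) :
    ∑' n, arcIntegral f q a Λ n ^ 2 ≤
      ENNReal.ofReal ((thetaConst d * ∫ u, arcWeight u) ^ 2 / (q : ℝ) ^ d) *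
        (ENNReal.ofReal ((1 / (Λ * δ)) ^ 2) * ∑' n, ‖f n‖ₑ ^ 2) := by
  have hq0 : (0 : ℝ) < q := Nat.cast_pos.2 (NeZero.pos q)
  have hΛ : 0 < Λ := (NeZero.pos q).trans_le hq
  have : (0 : ℝ) < Λ := mod_cast hΛ
  refine (tsum_sq_lintegral_fareyArc_le (by lia) hΛ (thetaConst_nonneg d)
    (fun n => (continuous_fourierMultiplier_arc hf hΛ q a n).measurable)
    (measurable_thetaProduct_arc hΛ q a) (exists_norm_thetaProduct_arc_le hΛ q a)
    (B := fun _ => 1 / (Λ * δ)) fun b hb x hx => ?_).trans_eq ?_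
  · have h := mul_norm_thetaProduct_le (a := a) hd (by simpa using ha)
      (by exact_mod_cast hq : (q : ℝ) ≤ Λ) (mem_fareyArc.1 hb) (torusRep x)
    push_cast at h
    rw [mul_one_div, le_div_iff₀' (by positivity)]
    refine le_trans (mul_le_mul_of_nonneg_right ?_ (norm_nonneg _)) h
    calc (Λ : ℝ) * δ = Λ / q * (q * δ) := by field_simp
      _ ≤ _ := by gcongr; exact hsupp x hx
  · rw [lintegral_const_mul' _ _ (by finiteness), lintegral_enorm_sq_fourierSeries hf,
      ENNReal.ofReal_pow (by positivity)]

theorem tsum_sq_iSup_arcIntegral_le_of_rationalDist (hd : 5 ≤ d) (hf : Summable f)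
    (ha : IsUnit (a : ZMod q)) (hδ : 0 < δ) {c : ℝ} (hc : q ≤ c)
    (hsupp : ∀ x, fourierSeries f x ≠ 0 → q * δ ≤ rationalDist q (torusRep x)) :
    ∑' n, (⨆ j : {j : ℕ // c ≤ 2 ^ j}, arcIntegral f q a (2 ^ (j : ℕ)) n) ^ 2 ≤
      ENNReal.ofReal (16 / 3 * (thetaConst d * ∫ u, arcWeight u) ^ 2 / (q : ℝ) ^ d *
        (1 / (c * δ)) ^ 2) * ∑' n, ‖f n‖ₑ ^ 2 := by
  have hc0 : 0 < c := (Nat.cast_pos.2 (NeZero.pos q)).trans_le hc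
  have hscale (j : {j : ℕ // c ≤ 2 ^ j}) :
      ENNReal.ofReal ((1 / ((2 ^ (j : ℕ) : ℕ) * δ)) ^ 2) =
        ENNReal.ofReal ((1 / (c * δ)) ^ 2) * ENNReal.ofReal ((c / 2 ^ (j : ℕ)) ^ 2) := by
    rw [← ENNReal.ofReal_mul (by positivity), ← mul_pow]
    push_cast
    congr 2
    field_simp
  refine (tsum_sq_iSup_le _).trans <| (ENNReal.tsum_le_tsum fun j => tsum_sq_arcIntegral_le hd hf ha
    (by exact_mod_cast hc.trans j.2) hδ hsupp).trans ?_
  rw [ENNReal.tsum_mul_left, ENNReal.tsum_mul_right]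
  simp_rw [hscale]
  rw [ENNReal.tsum_mul_left, ← mul_assoc]
  refine mul_le_mul_left ((mul_le_mul_right (mul_le_mul_right (tsum_sq_div_two_pow_le hc0) _)
    _).trans_eq ?_) _
  rw [← ENNReal.ofReal_mul (by positivity), ← ENNReal.ofReal_mul (by positivity)]
  congr 1
  ring

end SmallDenominators

/-! ### Maximal functions of the major arc symbols -/

section MajorArcOperator

variable {d : ℕ} {q : ℕ} [NeZero q] {a : ℤ} {f : (Fin d → ℤ) → ℂ}

lemma tsum_enorm_sq_ne_top {ι : Type*} {f : ι → ℂ} (hf : Summable f) :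
    ∑' n, ‖f n‖ₑ ^ 2 ≠ ⊤ := by
  have hsum : ∑' n, ‖f n‖ₑ ≠ ⊤ := tsum_enorm_ne_top_iff_summable_norm.2 hf.norm
  refine ne_top_of_le_ne_top (ENNReal.mul_ne_top hsum hsum) ?_
  rw [← ENNReal.tsum_mul_right]
  gcongr with n
  rw [sq]
  gcongr
  exact ENNReal.le_tsum n

/-- The factor of `majorArcSymbol` that carries the arithmetic of `a / q`. -/
def gaussSymbol {d : ℕ} (q : ℕ) [NeZero q] (a : ℤ) (x : Fin d → ℝ) : ℂ :=
  ∏ i, quadraticGaussSum (a : ZMod q) (round (q * x i) : ℤ)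

lemma measurable_gaussSymbol (q : ℕ) [NeZero q] (a : ℤ) :
    Measurable (gaussSymbol q a : (Fin d → ℝ) → ℂ) := by
  refine Finset.measurable_fun_prod _ fun i _ => ?_
  simp_rw [round_eq]
  exact (measurable_of_countable fun l : ℤ => quadraticGaussSum (a : ZMod q) l).comp
    (Int.measurable_floor.comp (by fun_prop))

lemma norm_gaussSymbol_le (ha : IsUnit (a : ZMod q)) (x : Fin d → ℝ) :
    ‖gaussSymbol q a x‖ ≤ √(2 * q) ^ d := by
  rw [gaussSymbol, norm_prod]
  exact (Finset.prod_le_prod (fun _ _ => norm_nonneg _) fun i _ =>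
    norm_quadraticGaussSum_le ha _).trans_eq (by simp)

lemma prod_dirichletKernel (M : ℕ) (x : UnitAddTorus (Fin d)) :
    ∏ i, dirichletKernel M (x i) =
      ((2 * M + 1 : ℕ) ^ d : ℂ)⁻¹ * ∑ m ∈ latticeBox d M, mFourier m x := by
  simp only [dirichletKernel, Finset.prod_mul_distrib, Finset.prod_univ_sum, latticeBox, mFourier,
    ContinuousMap.coe_mk, Finset.prod_const, Finset.card_univ, Fintype.card_fin, inv_pow]
  push_cast
  rfl

lemma majorArcSymbol_eq (a : ℤ) (M : ℕ) (x : Fin d → ℝ) :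
    majorArcSymbol q a M x = ((2 * M + 1 : ℕ) ^ d : ℂ)⁻¹ *
      ∑ m ∈ latticeBox d M,
        mFourier (q • m) (fun i => (x i : UnitAddCircle)) * gaussSymbol q a x := by
  have hdilate (m : Fin d → ℤ) : mFourier m (fun i => ((q * x i : ℝ) : UnitAddCircle)) =
      mFourier (q • m) (fun i => (x i : UnitAddCircle)) := by
    rw [mFourier_coe, mFourier_coe]
    push_cast [Pi.smul_apply, nsmul_eq_mul]
    simp only [mul_left_comm, mul_assoc]
  rw [majorArcSymbol, Finset.prod_mul_distrib, prod_dirichletKernel, ← Finset.sum_mul]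
  simp_rw [hdilate, gaussSymbol]
  ring

lemma norm_majorArcSymbol_le (ha : IsUnit (a : ZMod q)) (M : ℕ) (x : Fin d → ℝ) :
    ‖majorArcSymbol q a M x‖ ≤ √(2 * q) ^ d := by
  rw [majorArcSymbol, Finset.prod_mul_distrib, norm_mul]
  refine (mul_le_of_le_one_right (norm_nonneg _) ?_).trans (norm_gaussSymbol_le ha x)
  rw [norm_prod]
  exact Finset.prod_le_one (fun _ _ => norm_nonneg _) fun i _ => norm_dirichletKernel_le_one _ _

lemma measurable_majorArcSymbol (q : ℕ) [NeZero q] (a : ℤ) (M : ℕ) :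
    Measurable (majorArcSymbol q a M : (Fin d → ℝ) → ℂ) := by
  have hcoe : Measurable fun (x : Fin d → ℝ) (i : Fin d) => (x i : UnitAddCircle) := by fun_prop
  simp_rw [funext fun x => majorArcSymbol_eq (d := d) (q := q) a M x]
  exact (Finset.measurable_fun_sum _ fun m _ =>
    ((mFourier (q • m)).continuous.measurable.comp hcoe).mul
      (measurable_gaussSymbol q a)).const_mul _

lemma mFourierCoeff_mFourier_mul (m : Fin d → ℤ) (F : UnitAddTorus (Fin d) → ℂ) (n : Fin d → ℤ) :
    mFourierCoeff (fun x => mFourier m x * F x) n = mFourierCoeff F (n - m) := by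
  simp only [mFourierCoeff, smul_eq_mul, ← mul_assoc, ← mFourier_add]
  rw [neg_sub, neg_add_eq_sub]

lemma fourierMultiplier_majorArcSymbol (ha : IsUnit (a : ZMod q)) (M : ℕ) (n : Fin d → ℤ) :
    fourierMultiplier (majorArcSymbol q a M) f n = ((2 * M + 1 : ℕ) ^ d : ℂ)⁻¹ *
      ∑ m ∈ latticeBox d M, fourierMultiplier (gaussSymbol q a) f (n - q • m) := by
  simp only [fourierMultiplier, ← mFourierCoeff_mFourier_mul]
  simp only [mFourierCoeff, smul_eq_mul]
  rw [← integral_finsetSum, ← integral_const_mul]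
  · refine integral_congr_ae (.of_forall fun x => ?_)
    simp only [majorArcSymbol_eq, coe_torusRep, Finset.mul_sum, Finset.sum_mul]
    refine Finset.sum_congr rfl fun m _ => ?_
    ring
  · intro m _
    simpa only [mFourier_add, mul_assoc] using integrable_mFourier_mul_fourierSeries f
      (measurable_gaussSymbol q a) (norm_gaussSymbol_le ha) (-n + q • m)

lemma enorm_fourierMultiplier_majorArcSymbol_le (ha : IsUnit (a : ZMod q)) (M : ℕ)
    (n : Fin d → ℤ) :
    ‖fourierMultiplier (majorArcSymbol q a M) f n‖ₑ ≤
      boxAverage q M (fun n => ‖fourierMultiplier (gaussSymbol q a) f n‖ₑ) n := by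
  rw [fourierMultiplier_majorArcSymbol ha, enorm_mul, boxAverage]
  refine mul_le_mul' (le_of_eq ?_) (enorm_sum_le _ _)
  rw [enorm_inv (pow_ne_zero _ (Nat.cast_ne_zero.2 (by lia))), enorm_pow, ← ofReal_norm,
    Complex.norm_natCast, ENNReal.ofReal_natCast]

lemma tsum_enorm_sq_fourierMultiplier_gaussSymbol_le (hf : Summable f)
    (ha : IsUnit (a : ZMod q)) :
    ∑' n, ‖fourierMultiplier (gaussSymbol q a) f n‖ₑ ^ 2 ≤
      ENNReal.ofReal ((2 * q) ^ d) * ∑' n, ‖f n‖ₑ ^ 2 := by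
  rw [tsum_enorm_sq_fourierMultiplier (measurable_gaussSymbol q a) (norm_gaussSymbol_le ha),
    ← lintegral_enorm_sq_fourierSeries hf, ← lintegral_const_mul' _ _ (by finiteness)]
  refine lintegral_mono fun x => mul_le_mul_left ?_ _
  rw [← ofReal_norm, ← ENNReal.ofReal_pow (norm_nonneg _)]
  refine ENNReal.ofReal_le_ofReal ?_
  calc _ ≤ (√(2 * q) ^ d) ^ 2 := by gcongr; exact norm_gaussSymbol_le ha _
    _ = _ := by rw [pow_right_comm, Real.sq_sqrt (by positivity)]

theorem tsum_sq_iSup_fourierMultiplier_majorArcSymbol_le (hf : Summable f)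
    (ha : IsUnit (a : ZMod q)) :
    ∑' n, (⨆ M, ‖fourierMultiplier (majorArcSymbol q a M) f n‖ₑ) ^ 2 ≤
      ENNReal.ofReal ((2 ^ (d + 1)) ^ 2 * (2 * q) ^ d) * ∑' n, ‖f n‖ₑ ^ 2 := by
  have hgauss := tsum_enorm_sq_fourierMultiplier_gaussSymbol_le hf ha
  calc _ ≤ ∑' n, (⨆ M, boxAverage q M
          (fun n => ‖fourierMultiplier (gaussSymbol q a) f n‖ₑ) n) ^ 2 := by
        gcongr with n M
        exact enorm_fourierMultiplier_majorArcSymbol_le ha M n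
    _ ≤ _ := tsum_sq_iSup_boxAverage_le
        (ne_top_of_le_ne_top (ENNReal.mul_ne_top (by finiteness) (tsum_enorm_sq_ne_top hf)) hgauss)
    _ ≤ _ := mul_le_mul_right hgauss _
    _ = _ := by
        rw [← mul_assoc, ENNReal.ofReal_mul (by positivity)]
        norm_num [ENNReal.ofReal_pow]

end MajorArcOperator

/-! ### Arcs with large denominators -/

section LargeDenominators

lemma add_sq_le_two_mul_add_two_mul (x y : ℝ≥0∞) : (x + y) ^ 2 ≤ 2 * x ^ 2 + 2 * y ^ 2 := by
  have hexp : (2 : ℝ) - 1 = 1 := by norm_num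
  simpa only [hexp, ENNReal.rpow_one, ENNReal.rpow_two, mul_add] using
    ENNReal.rpow_add_le_mul_rpow_add_rpow x y one_le_two

lemma tsum_sq_div_one_add_sq_add_sq_div_two_pow_le {c : ℝ} (hc : 0 < c) (δ : ℝ) :
    ∑' j : {j : ℕ // c ≤ 2 ^ j}, (2 * ENNReal.ofReal ((2 ^ (j : ℕ) * δ /
        (1 + (2 ^ (j : ℕ) * δ) ^ 2)) ^ 2) + 2 * ENNReal.ofReal ((c / 2 ^ (j : ℕ)) ^ 2)) ≤
      ENNReal.ofReal (40 / 3) := by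
  rw [ENNReal.tsum_add, ENNReal.tsum_mul_left, ENNReal.tsum_mul_left]
  calc _ ≤ 2 * ENNReal.ofReal (4 / 3) + 2 * ENNReal.ofReal (16 / 3) := by
        gcongr
        · exact (ENNReal.tsum_comp_le_tsum_of_injective Subtype.val_injective _).trans
            (tsum_sq_div_one_add_sq_le _)
        · exact tsum_sq_div_two_pow_le hc
    _ = _ := by
        rw [show (2 : ℝ≥0∞) = ENNReal.ofReal 2 by simp, ← ENNReal.ofReal_mul (by norm_num),
          ← ENNReal.ofReal_mul (by norm_num), ← ENNReal.ofReal_add (by norm_num) (by norm_num)]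
        norm_num

variable {d : ℕ} {f : (Fin d → ℤ) → ℂ} {q a : ℕ} [NeZero q] {Λ : ℕ}

/-- The error made when `thetaProduct` is replaced by its model on the arc around `a / q`. -/
def arcError {d : ℕ} (q : ℕ) [NeZero q] (a Λ : ℕ) (b : ℝ) (x : Fin d → ℝ) : ℂ :=
  thetaProduct (a / q + (b + Complex.I / Λ ^ 2)) x -
    arcPrefactor d (Λ / q) (b * Λ ^ 2) * majorArcSymbol q a (Λ / q) x

lemma measurable_arcError (hΛ : 0 < Λ) (q a : ℕ) [NeZero q] (b : ℝ) :
    Measurable (arcError (d := d) q a Λ b) :=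
  (measurable_thetaProduct_arc hΛ q a b).sub ((measurable_majorArcSymbol q a _).const_mul _)

lemma norm_const_mul_majorArcSymbol_le (ha : IsUnit (a : ZMod q)) (c : ℂ) (M : ℕ)
    (x : Fin d → ℝ) : ‖c * majorArcSymbol q a M x‖ ≤ ‖c‖ * √(2 * q) ^ d := by
  rw [norm_mul]
  gcongr
  exact norm_majorArcSymbol_le (by simpa using ha) M x

lemma exists_norm_arcError_le (ha : IsUnit (a : ZMod q)) (hΛ : 0 < Λ) (b : ℝ) :
    ∃ K, ∀ x : Fin d → ℝ, ‖arcError q a Λ b x‖ ≤ K := by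
  obtain ⟨K, hK⟩ := exists_norm_thetaProduct_arc_le (d := d) hΛ q a b
  exact ⟨_, fun x => (norm_sub_le _ _).trans
    (add_le_add (hK x) (norm_const_mul_majorArcSymbol_le ha _ _ x))⟩

lemma norm_arcError_le (hd : 5 ≤ d) (ha : IsUnit (a : ZMod q)) (hq : q ≤ Λ) {b : ℝ}
    (hb : b ∈ fareyArc q Λ) (x : Fin d → ℝ) :
    ‖arcError q a Λ b x‖ ≤ thetaConst d * (Λ / √q) ^ d * arcWeight (b * (Λ : ℝ) ^ 2) *
      (Λ * (rationalDist q x / q) / (1 + (Λ * (rationalDist q x / q)) ^ 2) + q / Λ) := by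
  have h := norm_thetaProduct_sub_le (a := a) hd (by simpa using ha)
    (by exact_mod_cast hq : (q : ℝ) ≤ Λ) (mem_fareyArc.1 hb) x
  rw [Nat.floor_div_eq_div] at h
  push_cast at h
  rwa [div_mul_eq_mul_div, mul_div_assoc] at h

lemma fourierMultiplier_arcError (ha : IsUnit (a : ZMod q)) (hΛ : 0 < Λ) (b : ℝ)
    (n : Fin d → ℤ) :
    fourierMultiplier (arcError q a Λ b) f n =
      fourierMultiplier (thetaProduct (a / q + (b + Complex.I / Λ ^ 2))) f n -
        arcPrefactor d (Λ / q) (b * Λ ^ 2) *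
          fourierMultiplier (majorArcSymbol q a (Λ / q)) f n := by
  obtain ⟨K, hK⟩ := exists_norm_thetaProduct_arc_le (d := d) hΛ q a b
  rw [← fourierMultiplier_const_mul]
  exact fourierMultiplier_sub (measurable_thetaProduct_arc hΛ q a b)
    ((measurable_majorArcSymbol q a _).const_mul _) hK
    (norm_const_mul_majorArcSymbol_le ha _ _) f n

lemma measurable_fourierMultiplier_arcError (hf : Summable f) (ha : IsUnit (a : ZMod q))
    (hΛ : 0 < Λ) (n : Fin d → ℤ) :
    Measurable fun b => fourierMultiplier (arcError q a Λ b) f n := by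
  simp_rw [fourierMultiplier_arcError ha hΛ]
  exact (continuous_fourierMultiplier_arc hf hΛ q a n).measurable.sub
    (((measurable_arcPrefactor d _).comp (measurable_mul_const _)).mul_const _)

/-- The part of `arcIntegral` that is due to `arcError`. -/
def arcErrorIntegral (f : (Fin d → ℤ) → ℂ) (q : ℕ) [NeZero q] (a Λ : ℕ) (n : Fin d → ℤ) : ℝ≥0∞ :=
  ENNReal.ofReal (1 / (Λ : ℝ) ^ (d - 2)) * ∫⁻ b in fareyArc q Λ,
    ‖fourierMultiplier (arcError q a Λ b) f n‖ₑ

lemma tsum_sq_arcErrorIntegral_le (hd : 5 ≤ d) (hf : Summable f) (ha : IsUnit (a : ZMod q))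
    (hq : q ≤ Λ) :
    ∑' n, arcErrorIntegral f q a Λ n ^ 2 ≤
      ENNReal.ofReal ((thetaConst d * ∫ u, arcWeight u) ^ 2 / (q : ℝ) ^ d) *
        ∫⁻ x, (2 * ENNReal.ofReal ((Λ * (rationalDist q (torusRep x) / q) /
            (1 + (Λ * (rationalDist q (torusRep x) / q)) ^ 2)) ^ 2) +
          2 * ENNReal.ofReal ((q / Λ) ^ 2)) * ‖fourierSeries f x‖ₑ ^ 2 := by
  have hΛ : 0 < Λ := (NeZero.pos q).trans_le hq
  refine (tsum_sq_lintegral_fareyArc_le (by lia) hΛ (thetaConst_nonneg d)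
    (measurable_fourierMultiplier_arcError hf ha hΛ) (measurable_arcError hΛ q a)
    (exists_norm_arcError_le ha hΛ)
    fun b hb x _ => norm_arcError_le hd ha hq hb (torusRep x)).trans ?_
  gcongr with x
  have := rationalDist_nonneg q (torusRep x)
  rw [ENNReal.ofReal_add (by positivity) (by positivity), ENNReal.ofReal_pow (by positivity),
    ENNReal.ofReal_pow (by positivity)]
  exact add_sq_le_two_mul_add_two_mul _ _

lemma tsum_sq_iSup_arcErrorIntegral_le (hd : 5 ≤ d) (hf : Summable f)
    (ha : IsUnit (a : ZMod q)) :
    ∑' n, (⨆ j : {j : ℕ // (q : ℝ) ≤ 2 ^ j}, arcErrorIntegral f q a (2 ^ (j : ℕ)) n) ^ 2 ≤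
      ENNReal.ofReal ((thetaConst d * ∫ u, arcWeight u) ^ 2 / (q : ℝ) ^ d) *
        (ENNReal.ofReal (40 / 3) * ∑' n, ‖f n‖ₑ ^ 2) := by
  have hδ : Measurable fun x : UnitAddTorus (Fin d) => rationalDist q (torusRep x) :=
    (measurable_rationalDist q).comp measurable_torusRep
  refine (tsum_sq_iSup_le _).trans <| (ENNReal.tsum_le_tsum fun j =>
    tsum_sq_arcErrorIntegral_le hd hf ha (by exact_mod_cast j.2)).trans ?_
  rw [ENNReal.tsum_mul_left, ← lintegral_tsum fun j => by fun_prop,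
    ← lintegral_enorm_sq_fourierSeries hf,
    ← lintegral_const_mul' (ENNReal.ofReal (40 / 3)) _ (by finiteness)]
  refine mul_le_mul_right (lintegral_mono fun x => ?_) _
  rw [ENNReal.tsum_mul_right]
  push_cast
  exact mul_le_mul_left
    (tsum_sq_div_one_add_sq_add_sq_div_two_pow_le (Nat.cast_pos.2 (NeZero.pos q)) _) _

lemma lintegral_arcPrefactor_le (hd : 5 ≤ d) (hΛ : 0 < Λ) (q : ℕ) [NeZero q] (s : Set ℝ) :
    ENNReal.ofReal (1 / (Λ : ℝ) ^ (d - 2)) *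
        ∫⁻ b in s, ‖arcPrefactor d (Λ / q) (b * Λ ^ 2)‖ₑ ≤
      ENNReal.ofReal ((∫ u, arcWeight u) / (q : ℝ) ^ d) := by
  have hq : (0 : ℝ) < q := Nat.cast_pos.2 (NeZero.pos q)
  have : (0 : ℝ) < Λ := mod_cast hΛ
  have : 0 ≤ ∫ u, arcWeight u := integral_nonneg arcWeight_nonneg
  calc _ ≤ ENNReal.ofReal (1 / (Λ : ℝ) ^ (d - 2)) *
        ∫⁻ b in s, ENNReal.ofReal ((Λ / q) ^ d) * ENNReal.ofReal (arcWeight (b * Λ ^ 2)) := by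
        gcongr with b
        rw [← ofReal_norm, ← ENNReal.ofReal_mul (by positivity)]
        exact ENNReal.ofReal_le_ofReal (norm_arcPrefactor_le hd (by positivity) _)
    _ ≤ ENNReal.ofReal (1 / (Λ : ℝ) ^ (d - 2)) * (ENNReal.ofReal ((Λ / q) ^ d) *
        ENNReal.ofReal ((∫ u, arcWeight u) / (Λ : ℝ) ^ 2)) := by
        rw [lintegral_const_mul' _ _ (by finiteness)]
        gcongr
        exact setLIntegral_arcWeight_le (by positivity) s
    _ = _ := by
        rw [← ENNReal.ofReal_mul (by positivity), ← ENNReal.ofReal_mul (by positivity)]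
        congr 1
        rw [div_pow, ← Nat.sub_add_cancel (by lia : 2 ≤ d), Nat.add_sub_cancel, pow_add]
        field_simp

lemma arcIntegral_le_arcErrorIntegral_add (hd : 5 ≤ d) (ha : IsUnit (a : ZMod q)) (hΛ : 0 < Λ)
    (n : Fin d → ℤ) :
    arcIntegral f q a Λ n ≤ arcErrorIntegral f q a Λ n +
      ENNReal.ofReal ((∫ u, arcWeight u) / (q : ℝ) ^ d) *
        ⨆ M, ‖fourierMultiplier (majorArcSymbol q a M) f n‖ₑ := by
  set S := ⨆ M, ‖fourierMultiplier (majorArcSymbol q a M) f n‖ₑ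
  have hmeas : Measurable fun b : ℝ => ‖arcPrefactor d (Λ / q) (b * Λ ^ 2)‖ₑ :=
    ((measurable_arcPrefactor d _).comp (measurable_mul_const _)).enorm
  have hpoint (b : ℝ) :
      ‖fourierMultiplier (thetaProduct (a / q + (b + Complex.I / Λ ^ 2))) f n‖ₑ ≤
        ‖fourierMultiplier (arcError q a Λ b) f n‖ₑ +
          ‖arcPrefactor d (Λ / q) (b * Λ ^ 2)‖ₑ * S := by
    rw [← sub_add_cancel (fourierMultiplier (thetaProduct _) f n)
      (arcPrefactor d (Λ / q) (b * Λ ^ 2) * fourierMultiplier (majorArcSymbol q a (Λ / q)) f n),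
      ← fourierMultiplier_arcError ha hΛ]
    refine (enorm_add_le _ _).trans (add_le_add_right ?_ _)
    rw [enorm_mul]
    exact mul_le_mul_right
      (le_iSup (fun M => ‖fourierMultiplier (majorArcSymbol q a M) f n‖ₑ) _) _
  refine (mul_le_mul_right (lintegral_mono hpoint) _).trans ?_
  rw [lintegral_add_right _ (hmeas.mul_const _), lintegral_mul_const _ hmeas, mul_add, ← mul_assoc]
  exact add_le_add_right (mul_le_mul_left (lintegral_arcPrefactor_le hd hΛ q _) _) _

lemma tsum_sq_iSup_arcIntegral_le (hd : 5 ≤ d) (hf : Summable f) (ha : IsUnit (a : ZMod q)) :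
    ∑' n, (⨆ j : {j : ℕ // (q : ℝ) ≤ 2 ^ j}, arcIntegral f q a (2 ^ (j : ℕ)) n) ^ 2 ≤
      (2 * (ENNReal.ofReal ((thetaConst d * ∫ u, arcWeight u) ^ 2 / (q : ℝ) ^ d) *
          ENNReal.ofReal (40 / 3)) +
        2 * (ENNReal.ofReal ((∫ u, arcWeight u) / (q : ℝ) ^ d) ^ 2 *
          ENNReal.ofReal ((2 ^ (d + 1)) ^ 2 * (2 * q) ^ d))) * ∑' n, ‖f n‖ₑ ^ 2 := by
  set A := ENNReal.ofReal ((∫ u, arcWeight u) / (q : ℝ) ^ d)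
  set S := fun n => ⨆ M, ‖fourierMultiplier (majorArcSymbol q a M) f n‖ₑ
  set E := fun n => ⨆ j : {j : ℕ // (q : ℝ) ≤ 2 ^ j}, arcErrorIntegral f q a (2 ^ (j : ℕ)) n
  have hS : ∑' n, S n ^ 2 ≤ _ :=
    tsum_sq_iSup_fourierMultiplier_majorArcSymbol_le hf (by simpa using ha)
  have hE : ∑' n, E n ^ 2 ≤ _ := tsum_sq_iSup_arcErrorIntegral_le hd hf ha
  rw [← mul_assoc] at hE
  calc _ ≤ ∑' n, (E n + A * S n) ^ 2 := by
        gcongr with n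
        exact iSup_le fun j =>
          (arcIntegral_le_arcErrorIntegral_add hd ha (by positivity) n).trans
            (add_le_add_left (le_iSup (fun j : {j : ℕ // (q : ℝ) ≤ 2 ^ j} =>
              arcErrorIntegral f q a (2 ^ (j : ℕ)) n) j) _)
    _ ≤ 2 * ∑' n, E n ^ 2 + 2 * (A ^ 2 * ∑' n, S n ^ 2) := by
        simp_rw [← ENNReal.tsum_mul_left, ← ENNReal.tsum_add, ← mul_pow]
        gcongr with n
        exact add_sq_le_two_mul_add_two_mul _ _
    _ ≤ _ := add_le_add (mul_le_mul_right hE _)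
        (mul_le_mul_right (mul_le_mul_right hS _) _)
    _ = _ := by ring

theorem exists_tsum_sq_iSup_arcIntegral_le (hd : 5 ≤ d) :
    ∃ K, 0 ≤ K ∧ ∀ {f : (Fin d → ℤ) → ℂ}, Summable f → ∀ {q a : ℕ} [NeZero q],
      IsUnit (a : ZMod q) →
      ∑' n, (⨆ j : {j : ℕ // (q : ℝ) ≤ 2 ^ j}, arcIntegral f q a (2 ^ (j : ℕ)) n) ^ 2 ≤
        ENNReal.ofReal (K / (q : ℝ) ^ d) * ∑' n, ‖f n‖ₑ ^ 2 := by
  have hm : 0 ≤ ∫ u, arcWeight u := integral_nonneg arcWeight_nonneg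
  refine ⟨80 / 3 * (thetaConst d * ∫ u, arcWeight u) ^ 2 +
    2 * (∫ u, arcWeight u) ^ 2 * (2 ^ (d + 1)) ^ 2 * 2 ^ d, by positivity,
    fun {f} hf {q a} _ ha => (tsum_sq_iSup_arcIntegral_le hd hf ha).trans_eq ?_⟩
  have : (0 : ℝ) < q := Nat.cast_pos.2 (NeZero.pos q)
  rw [show (2 : ℝ≥0∞) = ENNReal.ofReal 2 by simp, ← ENNReal.ofReal_pow (by positivity),
    ← ENNReal.ofReal_mul (by positivity), ← ENNReal.ofReal_mul (by positivity),
    ← ENNReal.ofReal_mul (by positivity), ← ENNReal.ofReal_mul (by positivity),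
    ← ENNReal.ofReal_add (by positivity) (by positivity)]
  congr 2
  field_simp
  ring

end LargeDenominators

/-! ### Summation over all arcs -/

section ArcSummation

/-- The factor gained on the arcs with denominator `q`, which see only frequencies away from
`OmegaEtaL` when `q ≤ η⁻²`. -/
def denominatorGain (η : ℝ) (q : ℕ) : ℝ := if (q : ℝ) ≤ η⁻¹ ^ 2 then η ^ 2 else 1

lemma denominatorGain_nonneg (η : ℝ) (q : ℕ) : 0 ≤ denominatorGain η q := by
  unfold denominatorGain
  positivity

lemma one_div_mul_sqrt_le {x : ℝ} (hx : 1 ≤ x) :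
    1 / (x * √x) ≤ 4 * (1 / √x - 1 / √(x + 1)) := by
  have hs : 0 < √x := Real.sqrt_pos.2 (by linarith)
  have hs2 : √x ^ 2 = x := Real.sq_sqrt (by linarith)
  have ht2 : √(x + 1) ^ 2 = x + 1 := Real.sq_sqrt (by linarith)
  have hst : √x ≤ √(x + 1) := Real.sqrt_le_sqrt (by linarith)
  set s := √x
  set t := √(x + 1)
  have ht : 0 < t := hs.trans_le hst
  have hts : t ≤ 3 / 2 * s := abs_le_of_sq_le_sq' (by nlinarith) (by positivity) |>.2
  have hdiff : 1 / s - 1 / t = 1 / (s * t * (t + s)) := by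
    rw [div_sub_div _ _ hs.ne' ht.ne', div_eq_div_iff (by positivity) (by positivity)]
    linear_combination s * t * (ht2 - hs2)
  rw [hdiff, mul_one_div, div_le_div_iff₀ (by positivity) (by positivity), ← hs2]
  have : t * (t + s) ≤ 4 * s ^ 2 := by nlinarith
  nlinarith

-- For `k + 1 ≤ η⁻²` the first difference dominates, since then `η ≤ 1`; otherwise
-- `1 / √(k + 1) ≤ η` and the second one does.
lemma denominatorGain_div_le {η : ℝ} (hη : 0 < η) (k : ℕ) :
    denominatorGain η (k + 1) / ((k + 1) * √(k + 1)) ≤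
      4 * (η * (1 / √(k + 1)) + min (1 / √(k + 1)) η) -
        4 * (η * (1 / √(k + 1 + 1)) + min (1 / √(k + 1 + 1)) η) := by
  have htele := one_div_mul_sqrt_le (x := k + 1) (by linarith [Nat.cast_nonneg (α := ℝ) k])
  have hpos : 0 < 1 / (((k : ℝ) + 1) * √(k + 1)) := by positivity
  have hanti : 1 / √((k : ℝ) + 1 + 1) ≤ 1 / √(k + 1) := by gcongr; linarith
  have hmin : min (1 / √((k : ℝ) + 1 + 1)) η ≤ min (1 / √(k + 1)) η := min_le_min_right _ hanti
  unfold denominatorGain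
  rw [div_eq_mul_one_div]
  split_ifs with hk
  · have hη1 : η ≤ 1 := by
      rw [Nat.cast_succ, inv_pow] at hk
      have : 1 ≤ (η ^ 2)⁻¹ := by linarith [Nat.cast_nonneg (α := ℝ) k]
      rw [one_le_inv₀ (by positivity)] at this
      nlinarith
    have : η ^ 2 * (1 / (((k : ℝ) + 1) * √(k + 1))) ≤
        η * (4 * (1 / √(k + 1) - 1 / √(k + 1 + 1))) :=
      mul_le_mul (by nlinarith) htele hpos.le hη.le
    linarith
  · have hle : 1 / √((k : ℝ) + 1) ≤ η := by
      rw [one_div, inv_le_comm₀ (by positivity) hη]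
      refine Real.le_sqrt_of_sq_le ?_
      rw [Nat.cast_succ] at hk
      exact (not_le.1 hk).le
    rw [min_eq_left hle, min_eq_left (hanti.trans hle)]
    nlinarith [mul_nonneg hη.le (sub_nonneg.2 hanti)]

lemma tsum_denominatorGain_le {η : ℝ} (hη : 0 < η) :
    ∑' q : ℕ+, ENNReal.ofReal (denominatorGain η q / (q * √q)) ≤ ENNReal.ofReal (8 * η) := by
  set g : ℕ → ℝ := fun k => 4 * (η * (1 / √(k + 1)) + min (1 / √(k + 1)) η)
  rw [tsum_pnat_eq_tsum_succ (f := fun q : ℕ => ENNReal.ofReal (denominatorGain η q / (q * √q)))]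
  refine ENNReal.tsum_le_of_sum_range_le fun n => ?_
  rw [← ENNReal.ofReal_sum_of_nonneg fun k _ =>
    div_nonneg (denominatorGain_nonneg _ _) (by positivity)]
  refine ENNReal.ofReal_le_ofReal ?_
  calc _ ≤ ∑ k ∈ Finset.range n, (g k - g (k + 1)) := by
        gcongr with k
        simpa [g] using denominatorGain_div_le hη k
    _ = g 0 - g n := Finset.sum_range_sub' g n
    _ ≤ g 0 := sub_le_self _ (by positivity)
    _ ≤ 8 * η := by
        have : g 0 = 4 * (η + min 1 η) := by simp [g]
        linarith [min_le_right 1 η]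

lemma tsum_fareyNumerators_denominatorGain_le {η : ℝ} (hη : 0 < η) {K : ℝ} (hK : 0 ≤ K) :
    ∑' p : Σ q : ℕ+, fareyNumerators q,
      ENNReal.ofReal (K * (denominatorGain η p.1 / ((p.1 : ℝ) ^ 2 * √p.1))) ≤
        ENNReal.ofReal (16 * K * η) := by
  rw [ENNReal.tsum_sigma (f := fun (q : ℕ+) (_ : fareyNumerators q) =>
    ENNReal.ofReal (K * (denominatorGain η q / ((q : ℝ) ^ 2 * √q))))]
  calc _ ≤ ∑' q : ℕ+, ENNReal.ofReal (2 * K) *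
        ENNReal.ofReal (denominatorGain η q / (q * √q)) := by
        gcongr with q
        have hq : (1 : ℝ) ≤ q := mod_cast q.2
        have hg := denominatorGain_nonneg η q
        have hcard : ((fareyNumerators q).card : ℝ) ≤ 2 * q := by
          have : ((fareyNumerators q).card : ℝ) ≤ q + 1 := mod_cast card_fareyNumerators_le q
          linarith
        rw [tsum_fintype, Finset.sum_const, Finset.card_univ, Fintype.card_coe, nsmul_eq_mul,
          ← ENNReal.ofReal_natCast, ← ENNReal.ofReal_mul (by positivity),
          ← ENNReal.ofReal_mul (by positivity)]
        refine ENNReal.ofReal_le_ofReal ((mul_le_mul_of_nonneg_right hcard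
          (by positivity)).trans_eq ?_)
        field_simp
    _ ≤ ENNReal.ofReal (2 * K) * ENNReal.ofReal (8 * η) := by
        rw [ENNReal.tsum_mul_left]
        exact mul_le_mul_right (tsum_denominatorGain_le hη) _
    _ = _ := by
        rw [← ENNReal.ofReal_mul (by positivity)]
        congr 1
        ring

end ArcSummation

section ArcMaximalFunction

variable {d : ℕ} {f : (Fin d → ℤ) → ℂ}

/-- The maximal contribution of the arc around `a / q` to the spherical averages of `f`, over the
dyadic radii that are at least `c` and `q`. -/
def arcMaximalFunction (f : (Fin d → ℤ) → ℂ) (c : ℝ) (q a : ℕ) (n : Fin d → ℤ) : ℝ≥0∞ :=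
  ⨆ j : {j : ℕ // max (q : ℝ) c ≤ 2 ^ j}, arcIntegral f q a (2 ^ (j : ℕ)) n

lemma arcIntegral_le_arcMaximalFunction {c : ℝ} {q j : ℕ} (hq : q ≤ 2 ^ j) (hc : c ≤ 2 ^ j) (a : ℕ)
    (n : Fin d → ℤ) : arcIntegral f q a (2 ^ j) n ≤ arcMaximalFunction f c q a n :=
  le_iSup (fun j : {j : ℕ // max (q : ℝ) c ≤ 2 ^ j} => arcIntegral f q a (2 ^ (j : ℕ)) n)
    ⟨j, max_le (by exact_mod_cast hq) hc⟩

lemma exists_sq_two_pow_le {N : ℕ} (hN : 0 < N) : ∃ j, (2 ^ j) ^ 2 ≤ N ∧ N ≤ 4 * (2 ^ j) ^ 2 := by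
  have hsqrt : N.sqrt ≠ 0 := (Nat.sqrt_pos.2 hN).ne'
  refine ⟨Nat.log 2 N.sqrt, Nat.le_sqrt'.1 (Nat.pow_log_le_self 2 hsqrt), ?_⟩
  have hlt : N.sqrt < 2 ^ (Nat.log 2 N.sqrt + 1) := Nat.lt_pow_succ_log_self one_lt_two _
  calc N ≤ (2 ^ (Nat.log 2 N.sqrt + 1)) ^ 2 := (Nat.sqrt_lt'.1 hlt).le
    _ = _ := by ring

lemma sum_Icc_sum_fareyNumerators_le (Λ : ℕ) (F : ℕ → ℕ → ℝ≥0∞) :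
    ∑ q ∈ Finset.Icc 1 Λ, ∑ a ∈ fareyNumerators q, F q a ≤
      ∑' p : Σ q : ℕ+, fareyNumerators q, F p.1 p.2 := by
  rw [ENNReal.tsum_sigma (f := fun (q : ℕ+) (a : fareyNumerators q) => F q a)]
  simp_rw [Finset.tsum_subtype _ (F _)]
  rw [← Finset.tsum_subtype]
  exact ENNReal.tsum_comp_le_tsum_of_injective
    (f := fun q : Finset.Icc 1 Λ => (⟨q, (Finset.mem_Icc.1 q.2).1⟩ : ℕ+))
    (fun q q' h => Subtype.ext (congrArg PNat.val h))
    fun q => ∑ a ∈ fareyNumerators q, F q a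

theorem exists_enorm_sphericalAverage_le_arcMaximalFunction (hd : 5 ≤ d) :
    ∃ C : ℝ, 0 < C ∧ ∀ {f : (Fin d → ℤ) → ℂ}, Summable f → ∀ {R : ℝ}, 0 < R → ∀ {N : ℕ},
      R ≤ √N → ∀ n, ‖sphericalAverage N f n‖ₑ ≤ ENNReal.ofReal C *
        ∑' p : Σ q : ℕ+, fareyNumerators q, arcMaximalFunction f (R / 2) p.1 p.2 n := by
  obtain ⟨C, hC, h⟩ := exists_enorm_sphericalAverage_le hd
  refine ⟨C, hC, fun {f} hf {R} hR {N} hN n => ?_⟩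
  have hN0 : 0 < N := Nat.cast_pos.1 (Real.sqrt_pos.1 (hR.trans_le hN))
  obtain ⟨j, hle, hge⟩ := exists_sq_two_pow_le hN0
  have hRj : R / 2 ≤ 2 ^ j := by
    have : √N ≤ 2 * 2 ^ j := Real.sqrt_le_iff.2 ⟨by positivity, by
      have : (N : ℝ) ≤ 4 * (2 ^ j) ^ 2 := mod_cast hge
      linarith⟩
    linarith
  refine (h hf (by positivity) hle hge n).trans (mul_le_mul_right
    (le_trans (Finset.sum_le_sum fun q hq => Finset.sum_le_sum fun a _ => ?_)
      (sum_Icc_sum_fareyNumerators_le (2 ^ j) fun q a => arcMaximalFunction f (R / 2) q a n)) _)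
  exact arcIntegral_le_arcMaximalFunction (Finset.mem_Icc.1 hq).2 hRj a n

end ArcMaximalFunction

/-! ### The maximal estimate -/

section ExceptionalFrequencies

variable {d : ℕ} {η L : ℝ} {f : (Fin d → ℤ) → ℂ} {q : ℕ}

lemma dvd_qeta (hq : 0 < q) (hqη : (q : ℝ) ≤ η⁻¹ ^ 2) : q ∣ qeta η :=
  Finset.dvd_lcm (f := id) (Finset.mem_Icc.2 ⟨hq, Nat.le_floor hqη⟩)

lemma qeta_pos (η : ℝ) : 0 < qeta η := by
  rw [qeta, Nat.pos_iff_ne_zero, Ne, Finset.lcm_eq_zero_iff]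
  simp

lemma neg_mem_OmegaEtaL {α : Fin d → ℝ} (hα : α ∈ OmegaEtaL d η L) : -α ∈ OmegaEtaL d η L := by
  obtain ⟨l, hl⟩ := hα
  refine ⟨-l, fun i => ?_⟩
  rw [← abs_neg]
  convert hl i using 2
  simp only [Pi.neg_apply, Int.cast_neg]
  ring

lemma mem_OmegaEtaL_of_rationalDist_le (hq : 0 < q) (hqη : (q : ℝ) ≤ η⁻¹ ^ 2) {x : Fin d → ℝ}
    (hx : rationalDist q x ≤ q * L⁻¹) : x ∈ OmegaEtaL d η L := by
  obtain ⟨r, hr⟩ := dvd_qeta hq hqη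
  have hq0 : (0 : ℝ) < q := mod_cast hq
  have hr0 : (r : ℝ) ≠ 0 := by
    rintro h
    exact (qeta_pos η).ne' (by rw [hr, Nat.cast_eq_zero.1 h, mul_zero])
  refine ⟨fun i => round (q * x i) * r, fun i => ?_⟩
  have hi : |q * x i - round (q * x i)| ≤ q * L⁻¹ := by
    rw [← UnitAddCircle.norm_eq]
    exact (norm_le_rationalDist q x i).trans hx
  have hscale : q * (x i - (round (q * x i) * r : ℤ) / (qeta η : ℝ)) =
      q * x i - round (q * x i) := by
    rw [hr]
    push_cast
    field_simp
  rw [← hscale, abs_mul, abs_of_pos hq0] at hi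
  exact le_of_mul_le_mul_left hi hq0

lemma le_rationalDist_of_fourierSeries_ne_zero
    (hf : ∀ α ∈ OmegaEtaL d η L, fourierSeries f (fun i => (α i : UnitAddCircle)) = 0)
    (hq : 0 < q) (hqη : (q : ℝ) ≤ η⁻¹ ^ 2) {x : UnitAddTorus (Fin d)} (hx : fourierSeries f x ≠ 0) :
    q * L⁻¹ ≤ rationalDist q (torusRep x) := by
  by_contra! h
  have := hf _ (mem_OmegaEtaL_of_rationalDist_le hq hqη h.le)
  simp only [coe_torusRep] at this
  exact hx this

-- On small denominators the dyadic radii start at `η⁻² L / 2`, which is `η⁻² / 2` times larger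
-- than the reciprocal of the distance `L⁻¹` from the frequencies of `f` to the centre of the arc.
lemma exists_tsum_sq_arcMaximalFunction_le (hd : 5 ≤ d) :
    ∃ K, 0 ≤ K ∧ ∀ {η L : ℝ}, 0 < η → 0 < L → ∀ {f : (Fin d → ℤ) → ℂ}, Summable f →
      (∀ α ∈ OmegaEtaL d η L, fourierSeries f (fun i => (α i : UnitAddCircle)) = 0) →
      ∀ {q a : ℕ} [NeZero q], IsUnit (a : ZMod q) →
      ∑' n, arcMaximalFunction f (η⁻¹ ^ 2 * L / 2) q a n ^ 2 ≤
        ENNReal.ofReal (K * denominatorGain η q ^ 2 / (q : ℝ) ^ d) * ∑' n, ‖f n‖ₑ ^ 2 := by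
  obtain ⟨K, hK, h⟩ := exists_tsum_sq_iSup_arcIntegral_le hd
  set A := 16 / 3 * (thetaConst d * ∫ u, arcWeight u) ^ 2
  have hA : 0 ≤ A := by positivity
  refine ⟨K + 4 * A, by positivity, fun {η L} hη hL {f} hf hzero {q a} _ ha => ?_⟩
  have hq : (0 : ℝ) < q := Nat.cast_pos.2 (NeZero.pos q)
  by_cases hqη : (q : ℝ) ≤ η⁻¹ ^ 2
  · refine (tsum_sq_iSup_arcIntegral_le_of_rationalDist hd hf ha (inv_pos.2 hL) (le_max_left _ _)
      fun x => le_rationalDist_of_fourierSeries_ne_zero hzero (NeZero.pos q) hqη).trans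
      (mul_le_mul_left (ENNReal.ofReal_le_ofReal ?_) _)
    have hratio : 1 / (max (q : ℝ) (η⁻¹ ^ 2 * L / 2) * L⁻¹) ≤ 2 * η ^ 2 :=
      calc _ ≤ 1 / (η⁻¹ ^ 2 * L / 2 * L⁻¹) := by
            gcongr
            exact le_max_right _ _
        _ = _ := by field_simp
    calc _ ≤ A / (q : ℝ) ^ d * (2 * η ^ 2) ^ 2 := by gcongr
      _ = 4 * A * (η ^ 2) ^ 2 / (q : ℝ) ^ d := by ring
      _ ≤ _ := by
          rw [denominatorGain, if_pos hqη]
          gcongr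
          linarith
  · refine le_trans ?_ ((h hf ha).trans (mul_le_mul_left (ENNReal.ofReal_le_ofReal ?_) _))
    · gcongr with n
      exact iSup_le fun j => le_iSup (fun j : {j : ℕ // (q : ℝ) ≤ 2 ^ j} =>
        arcIntegral f q a (2 ^ (j : ℕ)) n) ⟨j, (le_max_left _ _).trans j.2⟩
    · rw [denominatorGain, if_neg hqη, one_pow, mul_one]
      gcongr
      linarith

lemma div_pow_le_sq_div {K g q : ℝ} (hK : 0 ≤ K) (hq : 1 ≤ q) (hd : 5 ≤ d) :
    K * g ^ 2 / q ^ d ≤ (√K * (g / (q ^ 2 * √q))) ^ 2 := by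
  have hq0 : 0 < q := by linarith
  calc _ ≤ K * g ^ 2 / q ^ 5 := by gcongr
    _ = _ := by
      rw [mul_pow, div_pow, mul_pow, Real.sq_sqrt hK, Real.sq_sqrt hq0.le, mul_div_assoc]
      ring

end ExceptionalFrequencies

section MaximalEstimate

variable {d : ℕ}

lemma summable_of_hasSum_mul_exp {f : (Fin d → ℤ) → ℂ} {α : Fin d → ℝ} {z : ℂ}
    (hf : HasSum (fun n : Fin d → ℤ =>
      f n * Complex.exp (-(2 * (π : ℂ) * Complex.I) * (∑ i, (n i : ℝ) * α i))) z) :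
    Summable f := by
  refine Summable.of_norm (hf.summable.norm.congr fun n => ?_)
  rw [norm_mul, Complex.norm_exp]
  simp

lemma fourierSeries_eq_of_hasSum {f : (Fin d → ℤ) → ℂ} {α : Fin d → ℝ} {z : ℂ}
    (hf : HasSum (fun n : Fin d → ℤ =>
      f n * Complex.exp (-(2 * (π : ℂ) * Complex.I) * (∑ i, (n i : ℝ) * (-α) i))) z) :
    fourierSeries f (fun i => (α i : UnitAddCircle)) = z := by
  refine (hasSum_fourierSeries_apply (summable_of_hasSum_mul_exp hf) _).unique
    (hf.congr_fun fun n => ?_)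
  rw [mFourier_coe]
  congr 2
  push_cast
  simp

lemma exists_tsum_sq_tsum_arcMaximalFunction_le (hd : 5 ≤ d) :
    ∃ K, 0 ≤ K ∧ ∀ {η L : ℝ}, 0 < η → 0 < L → ∀ {f : (Fin d → ℤ) → ℂ}, Summable f →
      (∀ α ∈ OmegaEtaL d η L, fourierSeries f (fun i => (α i : UnitAddCircle)) = 0) →
      ∑' n, (∑' p : Σ q : ℕ+, fareyNumerators q,
          arcMaximalFunction f (η⁻¹ ^ 2 * L / 2) p.1 p.2 n) ^ 2 ≤
        ENNReal.ofReal (K * η) ^ 2 * ∑' n, ‖f n‖ₑ ^ 2 := by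
  obtain ⟨K, hK, h⟩ := exists_tsum_sq_arcMaximalFunction_le hd
  refine ⟨16 * √K, by positivity, fun {η L} hη hL {f} hf hzero => ?_⟩
  refine (tsum_sq_tsum_le fun p => ?_).trans (mul_le_mul_left (pow_le_pow_left'
    (tsum_fareyNumerators_denominatorGain_le hη (Real.sqrt_nonneg K)) 2) _)
  have := denominatorGain_nonneg η p.1
  refine (h hη hL hf hzero (isUnit_of_mem_fareyNumerators p.2.2)).trans (mul_le_mul_left ?_ _)
  rw [← ENNReal.ofReal_pow (by positivity)]
  exact ENNReal.ofReal_le_ofReal (div_pow_le_sq_div hK (mod_cast p.1.2) hd)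

theorem mollified_maximal_estimate_general (d : ℕ) (hd : 5 ≤ d) :
    ∃ C : ℝ, 0 < C ∧ ∀ η L : ℝ, 0 < η → 0 < L → ∀ f : (Fin d → ℤ) → ℂ,
      (∀ α ∈ OmegaEtaL d η L, HasSum (fun n : Fin d → ℤ =>
        f n * Complex.exp (-(2 * (π : ℂ) * Complex.I) * (∑ i, (n i : ℝ) * α i))) 0) →
      (∑' n, (⨆ (N : ℕ) (_ : η⁻¹ ^ 2 * L ≤ √N), ‖sphericalAverage N f n‖ₑ) ^ 2) ^ ((1 : ℝ) / 2) ≤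
        ENNReal.ofReal (C * η) * (∑' n, ‖f n‖ₑ ^ 2) ^ ((1 : ℝ) / 2) := by
  obtain ⟨C, hC, hsup⟩ := exists_enorm_sphericalAverage_le_arcMaximalFunction hd
  obtain ⟨K, hK, harcs⟩ := exists_tsum_sq_tsum_arcMaximalFunction_le hd
  refine ⟨C * (K + 1), by positivity, fun η L hη hL f hfΩ => ?_⟩
  have hf : Summable f :=
    summable_of_hasSum_mul_exp (hfΩ 0 ⟨0, fun i => by simpa using hL.le⟩)
  have hzero : ∀ α ∈ OmegaEtaL d η L, fourierSeries f (fun i => (α i : UnitAddCircle)) = 0 :=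
    fun α hα => fourierSeries_eq_of_hasSum (hfΩ (-α) (neg_mem_OmegaEtaL hα))
  have hsq : ∑' n, (⨆ (N : ℕ) (_ : η⁻¹ ^ 2 * L ≤ √N), ‖sphericalAverage N f n‖ₑ) ^ 2 ≤
      ENNReal.ofReal (C * (K + 1) * η) ^ 2 * ∑' n, ‖f n‖ₑ ^ 2 :=
    calc _ ≤ ∑' n, (ENNReal.ofReal C * ∑' p : Σ q : ℕ+, fareyNumerators q,
            arcMaximalFunction f (η⁻¹ ^ 2 * L / 2) p.1 p.2 n) ^ 2 := by
          gcongr with n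
          exact iSup₂_le fun N hN => hsup hf (by positivity) hN n
      _ ≤ ENNReal.ofReal C ^ 2 * (ENNReal.ofReal (K * η) ^ 2 * ∑' n, ‖f n‖ₑ ^ 2) := by
          simp_rw [mul_pow (ENNReal.ofReal C)]
          rw [ENNReal.tsum_mul_left]
          exact mul_le_mul_right (harcs hη hL hf hzero) _
      _ ≤ _ := by
          rw [← mul_assoc, ← mul_pow, ← ENNReal.ofReal_mul hC.le, ← mul_assoc C]
          gcongr
          linarith
  refine (ENNReal.rpow_le_rpow hsq (by norm_num)).trans_eq ?_
  rw [ENNReal.mul_rpow_of_nonneg _ _ (by norm_num), ← ENNReal.rpow_natCast, ← ENNReal.rpow_mul]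
  norm_num

lemma sph_eq_latticeSphere {lam : ℝ} {N : ℕ} (hN : (N : ℝ) = lam ^ 2) :
    sph d lam = latticeSphere d N := by
  ext m
  rw [Finset.mem_coe, mem_latticeSphere, sph, Set.mem_ofPred_eq, nsq, ← hN]
  norm_cast

lemma ofReal_Avg_eq_sphericalAverage {lam : ℝ} {N : ℕ} (hN : (N : ℝ) = lam ^ 2)
    (f : (Fin d → ℤ) → ℝ) (n : Fin d → ℤ) :
    (Avg lam f n : ℂ) = sphericalAverage N (fun n => (f n : ℂ)) n := by
  rw [Avg, Nlam, sph_eq_latticeSphere hN, Finset.tsum_subtype' _ fun m => f (n - m),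
    sphericalAverage]
  simp

lemma iSup_Avg_le {R : ℝ} (f : (Fin d → ℤ) → ℝ) (n : Fin d → ℤ) (hR : 0 ≤ R) :
    ⨆ (lam : ℝ) (_ : R ≤ lam ∧ ∃ N : ℕ, (N : ℝ) = lam ^ 2), (‖Avg lam f n‖₊ : ℝ≥0∞) ≤
      ⨆ (N : ℕ) (_ : R ≤ √N), ‖sphericalAverage N (fun n => (f n : ℂ)) n‖ₑ := by
  refine iSup₂_le fun lam hlam => ?_
  obtain ⟨hle, N, hN⟩ := hlam
  refine le_iSup₂_of_le N ?_ ?_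
  · rwa [hN, Real.sqrt_sq (hR.trans hle)]
  · rw [← ofReal_Avg_eq_sphericalAverage hN, ← ofReal_norm, Complex.norm_real, ofReal_norm]
    rfl

lemma l2norm_eq_tsum_enorm_ofReal (f : (Fin d → ℤ) → ℝ) :
    l2norm f = (∑' n, ‖(f n : ℂ)‖ₑ ^ 2) ^ ((1 : ℝ) / 2) := by
  simp only [l2norm, ← ofReal_norm, Complex.norm_real]
  simp only [ofReal_norm, enorm_eq_nnnorm]

end MaximalEstimate

/-- **Theorem 2 (mollified variant)**: for `d ≥ 5`, `η > 0`, `L ≥ q_η⁴`, there is a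
constant `C_d` such that for every `f ∈ ℓ²(ℤ^d)` whose Fourier transform vanishes on
`Ω_{η,L}` one has `‖sup_{λ ≥ η⁻² L} |A_λ f|‖₂ ≤ C_d η ‖f‖₂`. -/
theorem mollified_maximal_estimate (d : ℕ) (hd : 5 ≤ d) :
    ∃ C : ℝ, 0 < C ∧ ∀ (η L : ℝ), 0 < η → ((qeta η : ℝ)) ^ 4 ≤ L →
      ∀ f : (Fin d → ℤ) → ℝ,
        (∀ α ∈ OmegaEtaL d η L,
          HasSum (fun n : Fin d → ℤ =>
            (f n : ℂ) * Complex.exp (-(2 * (π : ℂ) * Complex.I) * (∑ i, (n i : ℝ) * α i))) 0) →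
        (∑' n : Fin d → ℤ,
            (⨆ (lam : ℝ) (_ : η⁻¹ ^ 2 * L ≤ lam ∧ ∃ N : ℕ, (N : ℝ) = lam ^ 2),
              (‖Avg lam f n‖₊ : ℝ≥0∞)) ^ 2) ^ ((1 : ℝ) / 2)
          ≤ ENNReal.ofReal (C * η) * l2norm f := by
  obtain ⟨C, hC, h⟩ := mollified_maximal_estimate_general d hd
  refine ⟨C, hC, fun η L hη hqL f hf => ?_⟩
  have hL : 0 < L := (pow_pos (Nat.cast_pos.2 (qeta_pos η)) 4).trans_le hqL
  rw [l2norm_eq_tsum_enorm_ofReal]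
  refine le_trans ?_ (h η L hη hL (fun n => f n) hf)
  gcongr with n
  exact iSup_Avg_le f n (by positivity)
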